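/- arXiv:2411.12568 — 4 statements merged into one kernel-verified Lean document; each statement's English description precedes it below -/
import Mathlib

section
/- Let b : ℕ → (0,∞) satisfy b(n+1) ≤ b(n) and b(n+1) ≥ (1/2) b(n) for all n, and b(n) → 0 as n → ∞. Let φ : ℝ → [0,1] be smooth with φ = 1 on (−∞,1/3], φ = 0 on [2/3,∞), and φ′ ≤ 0 everywhere. Define ρ : [0,∞) → ℝ by ρ(n+η) := 2(φ(η) b(n) + (1−φ(η)) b(n+1)) for n ∈ ℕ and η ∈ [0,1). Then ρ is smooth on [0,∞), ρ > 0, ρ′ ≤ 0, ρ(t) → 0 as t → ∞, ρ(n+η) ≥ b(n) for all n ∈ ℕ and η ∈ [0,1), and for every k ≥ 1 one has |ρ^{(k)}(t)| ≤ 2 (sup_{η∈[0,1]} |φ^{(k)}(η)|) · ρ(t) for all t ≥ 0; in particular ρ is a weight function. -/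
open Set Filter

/-- A weight function: a smooth positive function on `[0,∞)` with nonpositive derivative,
tending to `0` at infinity, all of whose derivatives are bounded by constant multiples of the
function itself. -/
def IsWeightFunction (ρ : ℝ → ℝ) : Prop :=
  ContDiffOn ℝ (⊤ : ℕ∞) ρ (Ici 0) ∧
  (∀ t ∈ Ici (0:ℝ), 0 < ρ t) ∧
  (∀ t ∈ Ici (0:ℝ), derivWithin ρ (Ici 0) t ≤ 0) ∧
  Tendsto ρ atTop (nhds 0) ∧
  ∀ k : ℕ, ∃ C : ℝ, ∀ t ∈ Ici (0:ℝ), |iteratedDerivWithin k ρ (Ici 0) t| ≤ C * ρ t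

/-!
On `[n, n+1)` the function `ρ` is an affine function of the translate `φ (· - n)`. Near an integer
`n ≥ 1` both neighbouring pieces equal the constant `2 b n`, because `φ` is `1` near `0` and `0`
near `1`; so a single smooth formula describes `ρ` around every point. Differentiating it gives
`ρ⁽ᵏ⁾ (n + η) = 2 (b n - b (n+1)) φ⁽ᵏ⁾ η` for `k ≥ 1`, and the condition `b n ≤ 2 b (n+1)` makes
the jump `2 (b n - b (n+1))` at most `2 b (n+1) ≤ ρ (n + η)`.
-/

open Topology

theorem norm_iteratedDeriv_le_iSup_Icc {E : Type*} [NormedAddCommGroup E] [NormedSpace ℝ E]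
    {f : ℝ → E} {k : ℕ} (hf : ContDiff ℝ k f) {c d x : ℝ} (hx : x ∈ Icc c d) :
    ‖iteratedDeriv k f x‖ ≤ ⨆ y : Icc c d, ‖iteratedDeriv k f y‖ := by
  have hcont : Continuous fun y : Icc c d ↦ ‖iteratedDeriv k f y‖ :=
    ((hf.continuous_iteratedDeriv k le_rfl).comp continuous_subtype_val).norm
  exact le_ciSup (isCompact_range hcont).bddAbove (⟨x, hx⟩ : Icc c d)

section NatFloor

variable {R : Type*} [Ring R] [LinearOrder R] [IsStrictOrderedRing R] [FloorSemiring R]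

theorem natFloor_natCast_add {n : ℕ} {η : R} (hη : η ∈ Ico (0 : R) 1) : ⌊(n : R) + η⌋₊ = n :=
  Nat.floor_eq_on_Ico n _ ⟨le_add_of_nonneg_right hη.1, by gcongr; exact hη.2⟩

theorem sub_natFloor_mem_Ico {t : R} (ht : 0 ≤ t) : t - ⌊t⌋₊ ∈ Ico (0 : R) 1 :=
  ⟨sub_nonneg.2 (Nat.floor_le ht), sub_lt_iff_lt_add'.2 (Nat.lt_floor_add_one t)⟩

theorem eventually_natFloor_eq [TopologicalSpace R] [OrderTopology R] {t : R}
    (ht : ∀ n : ℕ, n ≠ 0 → t ≠ n) : ∀ᶠ s in 𝓝 t, ⌊s⌋₊ = ⌊t⌋₊ := by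
  obtain h | h := eq_or_ne ⌊t⌋₊ 0
  · filter_upwards [eventually_lt_nhds (Nat.floor_eq_zero.1 h)] with s hs
    rw [h, Nat.floor_eq_zero.2 hs]
  · have ht_nonneg : 0 ≤ t := (Nat.pos_of_floor_pos (Nat.pos_of_ne_zero h)).le
    have hlt : (⌊t⌋₊ : R) < t := (Nat.floor_le ht_nonneg).lt_of_ne (ht _ h).symm
    filter_upwards [Ioo_mem_nhds hlt (Nat.lt_floor_add_one t)] with s hs
    exact Nat.floor_eq_on_Ico _ s ⟨hs.1.le, hs.2⟩

end NatFloor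

section WeightFunction

variable {f g : ℝ → ℝ}

theorem IsWeightFunction.congr (hf : IsWeightFunction f) (hgf : EqOn g f (Ici 0)) :
    IsWeightFunction g := by
  obtain ⟨hsmooth, hpos, hderiv, hlim, hbound⟩ := hf
  refine ⟨hsmooth.congr hgf, fun t ht ↦ (hgf ht).symm ▸ hpos t ht, fun t ht ↦ ?_, ?_, fun k ↦ ?_⟩
  · rw [derivWithin_congr hgf (hgf ht)]
    exact hderiv t ht
  · exact hlim.congr' ((eventually_ge_atTop 0).mono fun t ht ↦ (hgf ht).symm)
  · obtain ⟨C, hC⟩ := hbound k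
    refine ⟨C, fun t ht ↦ ?_⟩
    rw [iteratedDerivWithin_congr hgf ht, hgf ht]
    exact hC t ht

theorem isWeightFunction_of_contDiff (hf : ContDiff ℝ (⊤ : ℕ∞) f) (hpos : ∀ t, 0 ≤ t → 0 < f t)
    (hderiv : ∀ t, 0 ≤ t → deriv f t ≤ 0) (hlim : Tendsto f atTop (𝓝 0))
    (hbound : ∀ k : ℕ, k ≠ 0 → ∃ C : ℝ, ∀ t, 0 ≤ t → |iteratedDeriv k f t| ≤ C * f t) :
    IsWeightFunction f := by
  refine ⟨hf.contDiffOn, hpos, fun t ht ↦ ?_, hlim, fun k ↦ ?_⟩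
  · rw [((hf.differentiable (by simp)) t).derivWithin (uniqueDiffOn_Ici 0 t ht)]
    exact hderiv t ht
  · obtain rfl | hk := eq_or_ne k 0
    · exact ⟨1, fun t ht ↦ by rw [iteratedDerivWithin_zero, abs_of_pos (hpos t ht), one_mul]⟩
    · obtain ⟨C, hC⟩ := hbound k hk
      refine ⟨C, fun t ht ↦ ?_⟩
      rw [iteratedDerivWithin_eq_iteratedDeriv (uniqueDiffOn_Ici 0)
        (contDiff_infty.1 hf k).contDiffAt ht]
      exact hC t ht

end WeightFunction

section Interpolation

variable {E : Type*} [NormedAddCommGroup E] [NormedSpace ℝ E]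

/-- The interpolation of a sequence `a` by a cutoff `φ`, with value
`φ η • a n + (1 - φ η) • a (n + 1)` at `n + η` for `η ∈ [0, 1)`. Since `⌊t⌋₊ = 0` for `t < 0`, the
formula of the first interval is continued to the negative half-line, so that the smoothness of the
interpolation can be stated on all of `ℝ`. -/
noncomputable def cutoffInterp (φ : ℝ → ℝ) (a : ℕ → E) (t : ℝ) : E :=
  AffineMap.lineMap (a (⌊t⌋₊ + 1)) (a ⌊t⌋₊) (φ (t - ⌊t⌋₊))

variable {φ : ℝ → ℝ} {a : ℕ → E}

theorem cutoffInterp_eq_smul_add (t : ℝ) :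
    cutoffInterp φ a t = φ (t - ⌊t⌋₊) • (a ⌊t⌋₊ - a (⌊t⌋₊ + 1)) + a (⌊t⌋₊ + 1) :=
  AffineMap.lineMap_apply_module' ..

theorem cutoffInterp_natCast_add {n : ℕ} {η : ℝ} (hη : η ∈ Ico (0 : ℝ) 1) :
    cutoffInterp φ a (n + η) = φ η • a n + (1 - φ η) • a (n + 1) := by
  rw [cutoffInterp, natFloor_natCast_add hη, add_sub_cancel_left, AffineMap.lineMap_apply_module,
    add_comm]

theorem eqOn_cutoffInterp {f : ℝ → E}
    (hf : ∀ n : ℕ, ∀ η ∈ Ico (0 : ℝ) 1, f (n + η) = φ η • a n + (1 - φ η) • a (n + 1)) :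
    EqOn f (cutoffInterp φ a) (Ici 0) := by
  intro t ht
  have hη := sub_natFloor_mem_Ico (mem_Ici.1 ht)
  rw [← add_sub_cancel (⌊t⌋₊ : ℝ) t, hf _ _ hη, cutoffInterp_natCast_add hη]

theorem tendsto_cutoffInterp {l : E} (hφ : Bornology.IsBounded (range φ))
    (ha : Tendsto a atTop (𝓝 l)) : Tendsto (cutoffInterp φ a) atTop (𝓝 l) := by
  have hfloor : Tendsto (fun t : ℝ ↦ a ⌊t⌋₊) atTop (𝓝 l) :=
    ha.comp tendsto_nat_floor_atTop
  have hnext : Tendsto (fun t : ℝ ↦ a (⌊t⌋₊ + 1)) atTop (𝓝 l) :=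
    ((tendsto_add_atTop_iff_nat 1).2 ha).comp tendsto_nat_floor_atTop
  have hbdd : IsBoundedUnder (· ≤ ·) atTop (norm ∘ fun t : ℝ ↦ φ (t - ⌊t⌋₊)) := by
    obtain ⟨C, hC⟩ := hφ.exists_norm_le
    exact isBoundedUnder_of ⟨C, fun t ↦ hC _ (mem_range_self _)⟩
  have hjump : Tendsto (fun t : ℝ ↦ a ⌊t⌋₊ - a (⌊t⌋₊ + 1)) atTop (𝓝 0) := by
    simpa only [sub_self] using hfloor.sub hnext
  simpa only [← cutoffInterp_eq_smul_add, zero_add] using (hbdd.smul_tendsto_zero hjump).add hnext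

theorem cutoffInterp_eventuallyEq_natCast_succ (hφ₀ : φ =ᶠ[𝓝 0] 1) (hφ₁ : φ =ᶠ[𝓝 1] 0) (n : ℕ) :
    cutoffInterp φ a =ᶠ[𝓝 ((n + 1 : ℕ) : ℝ)] fun _ ↦ a (n + 1) := by
  have hright : ∀ᶠ s : ℝ in 𝓝 ((n + 1 : ℕ) : ℝ), φ (s - (n + 1 : ℕ)) = 1 :=
    ((continuous_sub_right _).tendsto' _ 0 (sub_self _)).eventually hφ₀
  have hleft : ∀ᶠ s : ℝ in 𝓝 ((n + 1 : ℕ) : ℝ), φ (s - n) = 0 :=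
    ((continuous_sub_right _).tendsto' _ 1 (by simp)).eventually hφ₁
  have hIoo : Ioo (n : ℝ) (n + 2) ∈ 𝓝 ((n + 1 : ℕ) : ℝ) :=
    Ioo_mem_nhds (by push_cast; linarith) (by push_cast; linarith)
  filter_upwards [hright, hleft, hIoo] with s hφright hφleft hs
  obtain hlt | hge := lt_or_ge s (n + 1)
  · have hfloor : ⌊s⌋₊ = n := Nat.floor_eq_on_Ico n s ⟨hs.1.le, hlt⟩
    rw [cutoffInterp_eq_smul_add, hfloor, hφleft, zero_smul, zero_add]
  · have hfloor : ⌊s⌋₊ = n + 1 :=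
      Nat.floor_eq_on_Ico (n + 1) s ⟨by push_cast; exact hge, by push_cast; linarith [hs.2]⟩
    rw [cutoffInterp_eq_smul_add, hfloor, hφright, one_smul, sub_add_cancel]

theorem cutoffInterp_eventuallyEq (hφ₀ : φ =ᶠ[𝓝 0] 1) (hφ₁ : φ =ᶠ[𝓝 1] 0) (t : ℝ) :
    cutoffInterp φ a =ᶠ[𝓝 t]
      fun s ↦ φ (s - ⌊t⌋₊) • (a ⌊t⌋₊ - a (⌊t⌋₊ + 1)) + a (⌊t⌋₊ + 1) := by
  by_cases ht : ∃ n : ℕ, t = (n + 1 : ℕ)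
  · obtain ⟨n, rfl⟩ := ht
    have hright : ∀ᶠ s : ℝ in 𝓝 ((n + 1 : ℕ) : ℝ), φ (s - (n + 1 : ℕ)) = 1 :=
      ((continuous_sub_right _).tendsto' _ 0 (sub_self _)).eventually hφ₀
    filter_upwards [hright, cutoffInterp_eventuallyEq_natCast_succ (a := a) hφ₀ hφ₁ n]
      with s hφs hs
    rw [hs, Nat.floor_natCast, hφs, one_smul, sub_add_cancel]
  · have hfloor : ∀ᶠ s in 𝓝 t, ⌊s⌋₊ = ⌊t⌋₊ :=
      eventually_natFloor_eq fun n hn h ↦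
        ht ⟨n - 1, by rw [h, Nat.sub_add_cancel (Nat.one_le_iff_ne_zero.2 hn)]⟩
    filter_upwards [hfloor] with s hs
    rw [cutoffInterp_eq_smul_add, hs]

theorem contDiff_cutoffInterp {k : WithTop ℕ∞} (hφ : ContDiff ℝ k φ) (hφ₀ : φ =ᶠ[𝓝 0] 1)
    (hφ₁ : φ =ᶠ[𝓝 1] 0) : ContDiff ℝ k (cutoffInterp φ a) :=
  contDiff_iff_contDiffAt.2 fun t ↦ by
    refine ContDiffAt.congr_of_eventuallyEq ?_ (cutoffInterp_eventuallyEq hφ₀ hφ₁ t)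
    fun_prop

theorem iteratedDeriv_cutoffInterp {k : ℕ} (hk : k ≠ 0) (hφ : ContDiff ℝ k φ)
    (hφ₀ : φ =ᶠ[𝓝 0] 1) (hφ₁ : φ =ᶠ[𝓝 1] 0) (t : ℝ) :
    iteratedDeriv k (cutoffInterp φ a) t =
      iteratedDeriv k φ (t - ⌊t⌋₊) • (a ⌊t⌋₊ - a (⌊t⌋₊ + 1)) := by
  rw [(cutoffInterp_eventuallyEq hφ₀ hφ₁ t).iteratedDeriv_eq]
  simp only [add_comm _ (a (⌊t⌋₊ + 1))]
  rw [iteratedDeriv_const_add (Nat.pos_of_ne_zero hk),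
    iteratedDeriv_smul_const (f := fun s ↦ φ (s - ⌊t⌋₊)) (by fun_prop),
    iteratedDeriv_comp_sub_const]

theorem norm_iteratedDeriv_cutoffInterp_le {k : ℕ} (hk : k ≠ 0) (hφ : ContDiff ℝ k φ)
    (hφ₀ : φ =ᶠ[𝓝 0] 1) (hφ₁ : φ =ᶠ[𝓝 1] 0) {t : ℝ} (ht : 0 ≤ t) :
    ‖iteratedDeriv k (cutoffInterp φ a) t‖ ≤
      (⨆ η : Icc (0 : ℝ) 1, |iteratedDeriv k φ η|) * ‖a ⌊t⌋₊ - a (⌊t⌋₊ + 1)‖ := by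
  rw [iteratedDeriv_cutoffInterp hk hφ hφ₀ hφ₁, norm_smul, Real.norm_eq_abs]
  gcongr
  exact norm_iteratedDeriv_le_iSup_Icc hφ (Ico_subset_Icc_self (sub_natFloor_mem_Ico ht))

end Interpolation

section Antitone

variable {φ : ℝ → ℝ} {a : ℕ → ℝ}

theorem cutoffInterp_mem_Icc (ha : Antitone a) (hφ : ∀ x, φ x ∈ Icc (0 : ℝ) 1) (t : ℝ) :
    cutoffInterp φ a t ∈ Icc (a (⌊t⌋₊ + 1)) (a ⌊t⌋₊) := by
  rw [← segment_eq_Icc (ha (Nat.le_succ _)), segment_eq_image_lineMap]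
  exact mem_image_of_mem _ (hφ _)

theorem deriv_cutoffInterp_nonpos (ha : Antitone a) (hφ : ContDiff ℝ 1 φ) (hφ₀ : φ =ᶠ[𝓝 0] 1)
    (hφ₁ : φ =ᶠ[𝓝 1] 0) (hφ' : ∀ x, deriv φ x ≤ 0) (t : ℝ) : deriv (cutoffInterp φ a) t ≤ 0 := by
  rw [← iteratedDeriv_one, iteratedDeriv_cutoffInterp one_ne_zero hφ hφ₀ hφ₁, iteratedDeriv_one]
  exact mul_nonpos_of_nonpos_of_nonneg (hφ' _) (sub_nonneg.2 (ha (Nat.le_succ _)))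

theorem abs_iteratedDeriv_cutoffInterp_le (ha : Antitone a) (ha₂ : ∀ n, a n ≤ 2 * a (n + 1))
    {k : ℕ} (hk : k ≠ 0) (hφ : ContDiff ℝ k φ) (hφ₀ : φ =ᶠ[𝓝 0] 1) (hφ₁ : φ =ᶠ[𝓝 1] 0)
    (hφI : ∀ x, φ x ∈ Icc (0 : ℝ) 1) {t : ℝ} (ht : 0 ≤ t) :
    |iteratedDeriv k (cutoffInterp φ a) t| ≤
      (⨆ η : Icc (0 : ℝ) 1, |iteratedDeriv k φ η|) * cutoffInterp φ a t := by
  have hjump : ‖a ⌊t⌋₊ - a (⌊t⌋₊ + 1)‖ ≤ cutoffInterp φ a t := by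
    rw [Real.norm_of_nonneg (sub_nonneg.2 (ha (Nat.le_succ _)))]
    linarith [ha₂ ⌊t⌋₊, (cutoffInterp_mem_Icc ha hφI t).1]
  exact (norm_iteratedDeriv_cutoffInterp_le hk hφ hφ₀ hφ₁ ht).trans
    (mul_le_mul_of_nonneg_left hjump (Real.iSup_nonneg fun _ ↦ abs_nonneg _))

theorem abs_iteratedDerivWithin_le_of_eqOn_cutoffInterp {f : ℝ → ℝ}
    (hf : EqOn f (cutoffInterp φ a) (Ici 0)) (ha : Antitone a) (ha₂ : ∀ n, a n ≤ 2 * a (n + 1))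
    {k : ℕ} (hk : k ≠ 0) (hφ : ContDiff ℝ k φ) (hφ₀ : φ =ᶠ[𝓝 0] 1) (hφ₁ : φ =ᶠ[𝓝 1] 0)
    (hφI : ∀ x, φ x ∈ Icc (0 : ℝ) 1) {t : ℝ} (ht : 0 ≤ t) :
    |iteratedDerivWithin k f (Ici 0) t| ≤
      (⨆ η : Icc (0 : ℝ) 1, |iteratedDeriv k φ η|) * f t := by
  rw [iteratedDerivWithin_congr hf ht, hf ht, iteratedDerivWithin_eq_iteratedDeriv
    (uniqueDiffOn_Ici 0) (contDiff_cutoffInterp hφ hφ₀ hφ₁).contDiffAt ht]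
  exact abs_iteratedDeriv_cutoffInterp_le ha ha₂ hk hφ hφ₀ hφ₁ hφI ht

theorem isWeightFunction_cutoffInterp (ha : Antitone a) (hpos : ∀ n, 0 < a n)
    (ha₂ : ∀ n, a n ≤ 2 * a (n + 1)) (hlim : Tendsto a atTop (𝓝 0))
    (hφ : ContDiff ℝ (⊤ : ℕ∞) φ) (hφ₀ : φ =ᶠ[𝓝 0] 1) (hφ₁ : φ =ᶠ[𝓝 1] 0)
    (hφI : ∀ x, φ x ∈ Icc (0 : ℝ) 1) (hφ' : ∀ x, deriv φ x ≤ 0) :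
    IsWeightFunction (cutoffInterp φ a) := by
  have hφ_bdd : Bornology.IsBounded (range φ) :=
    (Metric.isBounded_Icc 0 1).subset (range_subset_iff.2 hφI)
  exact isWeightFunction_of_contDiff (contDiff_cutoffInterp hφ hφ₀ hφ₁)
    (fun t _ ↦ (hpos _).trans_le (cutoffInterp_mem_Icc ha hφI t).1)
    (fun t _ ↦ deriv_cutoffInterp_nonpos ha (contDiff_infty.1 hφ 1) hφ₀ hφ₁ hφ' t)
    (tendsto_cutoffInterp hφ_bdd hlim)
    fun k hk ↦ ⟨_, fun t ↦ abs_iteratedDeriv_cutoffInterp_le ha ha₂ hk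
      (contDiff_infty.1 hφ k) hφ₀ hφ₁ hφI⟩

end Antitone

/-- Interpolation of a positive sequence `b` with `b(n)/2 ≤ b(n+1) ≤ b(n)`, `b(n) → 0`, by a
smooth cutoff `φ` yields a weight function `ρ(n+η) = 2(φ(η) b(n) + (1-φ(η)) b(n+1))` which
dominates `b`. -/
theorem interpolated_weight_function (b : ℕ → ℝ) (hbpos : ∀ n, 0 < b n)
    (hbmono : ∀ n, b (n + 1) ≤ b n) (hbhalf : ∀ n, b n / 2 ≤ b (n + 1))
    (hblim : Tendsto b atTop (nhds 0))
    (φ : ℝ → ℝ) (hφsmooth : ContDiff ℝ (⊤ : ℕ∞) φ) (hφrange : ∀ x, φ x ∈ Icc (0:ℝ) 1)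
    (hφone : ∀ x : ℝ, x ≤ 1/3 → φ x = 1) (hφzero : ∀ x : ℝ, 2/3 ≤ x → φ x = 0)
    (hφderiv : ∀ x : ℝ, deriv φ x ≤ 0)
    (ρ : ℝ → ℝ)
    (hρdef : ∀ (n : ℕ), ∀ η ∈ Ico (0:ℝ) 1,
      ρ (n + η) = 2 * (φ η * b n + (1 - φ η) * b (n + 1))) :
    ContDiffOn ℝ (⊤ : ℕ∞) ρ (Ici 0) ∧
    (∀ t ∈ Ici (0:ℝ), 0 < ρ t) ∧
    (∀ t ∈ Ici (0:ℝ), derivWithin ρ (Ici 0) t ≤ 0) ∧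
    Tendsto ρ atTop (nhds 0) ∧
    (∀ (n : ℕ), ∀ η ∈ Ico (0:ℝ) 1, b n ≤ ρ (n + η)) ∧
    (∀ k : ℕ, 1 ≤ k → ∀ t ∈ Ici (0:ℝ),
      |iteratedDerivWithin k ρ (Ici 0) t|
        ≤ 2 * (⨆ η : Icc (0:ℝ) 1, |iteratedDeriv k φ η|) * ρ t) ∧
    IsWeightFunction ρ := by
  have ha : Antitone fun n ↦ 2 * b n := (antitone_nat_of_succ_le hbmono).const_mul zero_le_two
  have ha₂ (n : ℕ) : 2 * b n ≤ 2 * (2 * b (n + 1)) := by linarith [hbhalf n]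
  have hφ₀ : φ =ᶠ[𝓝 0] 1 := (eventually_le_nhds (by norm_num)).mono hφone
  have hφ₁ : φ =ᶠ[𝓝 1] 0 := (eventually_ge_nhds (by norm_num)).mono hφzero
  have hρ : EqOn ρ (cutoffInterp φ fun n ↦ 2 * b n) (Ici 0) :=
    eqOn_cutoffInterp fun n η hη ↦ by rw [hρdef n η hη, smul_eq_mul, smul_eq_mul]; ring
  have hweight : IsWeightFunction ρ :=
    (isWeightFunction_cutoffInterp ha (fun n ↦ by linarith [hbpos n]) ha₂
      (by simpa using hblim.const_mul 2) hφsmooth hφ₀ hφ₁ hφrange hφderiv).congr hρ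
  have ⟨hsmooth, hpos, hderiv, hlim, _⟩ := hweight
  refine ⟨hsmooth, hpos, hderiv, hlim, fun n η hη ↦ ?_, fun k hk t ht ↦ ?_, hweight⟩
  · have hge := (cutoffInterp_mem_Icc ha hφrange (n + η)).1
    rw [← hρ (add_nonneg n.cast_nonneg hη.1), natFloor_natCast_add hη] at hge
    linarith [hbhalf n]
  · have hle := abs_iteratedDerivWithin_le_of_eqOn_cutoffInterp hρ ha ha₂
      (Nat.one_le_iff_ne_zero.1 hk) (contDiff_infty.1 hφsmooth k) hφ₀ hφ₁ hφrange ht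
    linarith [abs_nonneg (iteratedDerivWithin k ρ (Ici 0) t)]
end

section
/- Let a ∈ ℝ and let ρ be a weight function. Let ε₁, ε₂ : [1,∞) × ℝ × (−1,1) → ℝ be smooth functions that are 2π-periodic in the second variable and satisfy, for every multi-index β, a bound |∂^β ε_i(t,φ,z)| ≤ C_β ρ(t). Define f(t,φ,z) := (t−1, φ + a − z + ε₁(t,φ,z), z/2 + ε₂(t,φ,z)). Then there exist t₀ ≥ 1 and a smooth function h : [t₀,∞) × ℝ → (−1,1), 2π-periodic in the second variable, such that for every multi-index β there is a constant C′_β with |∂^β h(t,φ)| ≤ C′_β ρ(t), and such that the graph of h is f-invariant: for all t ≥ t₀ + 1 and φ ∈ ℝ, writing φ′ := φ + a − h(t,φ) + ε₁(t,φ,h(t,φ)), one has h(t−1, φ′) = h(t,φ)/2 + ε₂(t,φ,h(t,φ)). -/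
open Set Filter

/-- The domain `[1,∞) × ℝ × (-1,1)` of the perturbed map. -/
def pertDomain : Set (ℝ × ℝ × ℝ) := Ici 1 ×ˢ (univ : Set ℝ) ×ˢ Ioo (-1) 1

/-- A perturbation term: smooth on `[1,∞) × ℝ × (-1,1)`, `2π`-periodic in the second variable,
with all derivatives bounded by constant multiples of `ρ(t)`. -/
def IsDecayingPert (ρ : ℝ → ℝ) (ε : ℝ × ℝ × ℝ → ℝ) : Prop :=
  ContDiffOn ℝ (⊤ : ℕ∞) ε pertDomain ∧
  (∀ t φ z : ℝ, ε (t, φ + 2 * Real.pi, z) = ε (t, φ, z)) ∧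
  ∀ n : ℕ, ∃ C : ℝ, ∀ p ∈ pertDomain, ‖iteratedFDerivWithin ℝ n ε pertDomain p‖ ≤ C * ρ p.1

/-! Invariance prescribes `h` at an image point in terms of its preimage, and the base map
`φ ↦ φ + a - h + ε₁` would first have to be inverted. If the unknown carries the quantity `h - ε₁`
at the preimage as a second component, the inverse base map becomes explicit,
`y ↦ y + shift + drift (w y)`, and `w` is a fixed point of a graph transform whose base dynamics
advances time by one. After `ε` has been truncated to large times and extended by zero, the weight
`ρ` may be continued to negative times as an exponential growing more slowly than the fibers
contract.

In the Faà di Bruno formula for the `k`-th derivative of an iterate, the term of order `k` along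
the orbit carries the factor `κ * ‖D(base)‖ ^ k`, which is not a contraction for large `k`. But the
first derivatives are `O(r)` with `r → 0` at both ends of time, so the factor is harmless outside a
bounded band of times, which an orbit crosses once; there it is absorbed into the weight. Hence
every derivative of the iterates is `O(r)` uniformly, and interpolation upgrades their geometric
convergence in `C⁰` to convergence of all derivatives. -/

section FaaDiBruno

lemma eq_id_of_strictMono_fin {n : ℕ} {e : Fin n → Fin n} (he : StrictMono e) : e = id :=
  (StrictMono.range_inj he strictMono_id).1 <| by
    rw [(Finite.injective_iff_surjective.1 he.injective).range_eq, range_id]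

lemma orderedFinpartition_sum_partSize {n : ℕ} (c : OrderedFinpartition n) :
    ∑ i, c.partSize i = n := by
  simpa using Fintype.card_congr c.equivSigma

lemma orderedFinpartition_eq_atomic {n : ℕ} {c : OrderedFinpartition n} (hc : c.length = n) :
    c = OrderedFinpartition.atomic n := by
  have hsize : ∀ i, 1 = c.partSize i := by
    have hsum : ∑ _i : Fin c.length, 1 = ∑ i, c.partSize i := by
      simp [orderedFinpartition_sum_partSize, hc]
    simpa using (Finset.sum_eq_sum_iff_of_le fun i _ ↦ c.partSize_pos i).1 hsum
  obtain ⟨length, size, size_pos, emb, _, last_strictMono, _, _⟩ := c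
  obtain rfl : length = n := hc
  obtain rfl : (fun _ ↦ 1) = size := funext hsize
  obtain rfl : emb = fun m _ ↦ m := by
    funext m j
    rw [Subsingleton.elim j 0]
    exact congrFun (eq_id_of_strictMono_fin last_strictMono) m
  rfl

lemma orderedFinpartition_partSize_eq_of_length_eq_one {n : ℕ} {c : OrderedFinpartition n}
    (hc : c.length = 1) (i : Fin c.length) : c.partSize i = n := by
  have : Subsingleton (Fin c.length) := by rw [hc]; infer_instance
  exact (Fintype.sum_subsingleton _ i).symm.trans (orderedFinpartition_sum_partSize c)

lemma orderedFinpartition_eq_of_length_eq_one {n : ℕ} {c d : OrderedFinpartition n}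
    (hc : c.length = 1) (hd : d.length = 1) : c = d := by
  have hcsize := orderedFinpartition_partSize_eq_of_length_eq_one hc
  have hdsize := orderedFinpartition_partSize_eq_of_length_eq_one hd
  obtain ⟨clength, csize, _, cemb, cemb_strictMono, _, _, _⟩ := c
  obtain ⟨dlength, dsize, _, demb, demb_strictMono, _, _, _⟩ := d
  dsimp only at hc hd hcsize hdsize
  subst hc hd
  obtain rfl : csize = fun _ ↦ n := funext hcsize
  obtain rfl : dsize = fun _ ↦ n := funext hdsize
  obtain rfl : cemb = demb := funext fun i ↦
    (eq_id_of_strictMono_fin (cemb_strictMono i)).trans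
      (eq_id_of_strictMono_fin (demb_strictMono i)).symm
  rfl

lemma orderedFinpartition_partSize_lt {n : ℕ} {c : OrderedFinpartition n} (hc : 1 < c.length)
    (i : Fin c.length) : c.partSize i < n := by
  have : Nontrivial (Fin c.length) := Fin.nontrivial_iff_two_le.2 hc
  obtain ⟨j, hji⟩ := exists_ne i
  have hle := Finset.add_le_sum (f := c.partSize) (fun _ _ ↦ Nat.zero_le _)
    (Finset.mem_univ j) (Finset.mem_univ i) hji
  have := c.partSize_pos j
  rw [orderedFinpartition_sum_partSize] at hle
  omega

lemma sum_orderedFinpartition_le {n : ℕ} {b : OrderedFinpartition n → ℝ} {α β γ : ℝ}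
    (hα : 0 ≤ α) (hβ : 0 ≤ β) (hγ : 0 ≤ γ) (hatomic : b (OrderedFinpartition.atomic n) ≤ α)
    (hone : ∀ c, c.length = 1 → b c ≤ β)
    (hmiddle : ∀ c, 1 < c.length → c.length < n → b c ≤ γ) :
    ∑ c, b c ≤ α + β + Fintype.card (OrderedFinpartition n) * γ := by
  classical
  have hb : ∀ c, b c ≤ (if c.length = n then α else 0) + (if c.length = 1 then β else 0) + γ := by
    intro c
    rcases eq_or_lt_of_le c.length_le with hcn | hcn
    · rw [if_pos hcn, orderedFinpartition_eq_atomic hcn]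
      split_ifs <;> linarith
    · rcases eq_or_lt_of_le (Nat.succ_le_of_lt (c.length_pos (by omega))) with hc1 | hc1
      · rw [if_neg hcn.ne, if_pos hc1.symm]
        linarith [hone c hc1.symm]
      · simpa [hcn.ne, hc1.ne'] using hmiddle c hc1 hcn
  have hsum : ∀ (p : OrderedFinpartition n → Prop) [DecidablePred p] (x : ℝ), 0 ≤ x →
      (∀ c d, p c → p d → c = d) → ∑ c, (if p c then x else 0) ≤ x := by
    intro p _ x hx hp
    have hcard : (Finset.univ.filter p).card ≤ 1 := Finset.card_le_one.2 fun c hc d hd ↦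
      hp c d (Finset.mem_filter.1 hc).2 (Finset.mem_filter.1 hd).2
    rw [← Finset.sum_filter, Finset.sum_const, nsmul_eq_mul]
    exact mul_le_of_le_one_left hx (by exact_mod_cast hcard)
  calc ∑ c, b c
      ≤ ∑ c : OrderedFinpartition n,
          ((if c.length = n then α else 0) + (if c.length = 1 then β else 0) + γ) :=
        Finset.sum_le_sum fun c _ ↦ hb c
    _ ≤ α + β + Fintype.card (OrderedFinpartition n) * γ := by
        rw [Finset.sum_add_distrib, Finset.sum_add_distrib, Finset.sum_const, Finset.card_univ,
          nsmul_eq_mul]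
        gcongr
        · exact hsum _ α hα fun c d hc hd ↦
            (orderedFinpartition_eq_atomic hc).trans (orderedFinpartition_eq_atomic hd).symm
        · exact hsum _ β hβ fun c d hc hd ↦ orderedFinpartition_eq_of_length_eq_one hc hd

variable {𝕜 E F G : Type*} [NontriviallyNormedField 𝕜] [NormedAddCommGroup E] [NormedSpace 𝕜 E]
  [NormedAddCommGroup F] [NormedSpace 𝕜 F] [NormedAddCommGroup G] [NormedSpace 𝕜 G]

-- The terms of order `k` carry no constant, so that a bound on them can be closed by contraction.
lemma norm_iteratedFDeriv_comp_le_of_lower_order {f : F → G} {g : E → F} {x : E} {k : ℕ}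
    (hf : ContDiffAt 𝕜 k f (g x)) (hg : ContDiffAt 𝕜 k g x) {M Φ : ℝ}
    (hM : 1 ≤ M) (hΦ : 0 ≤ Φ) (hfΦ : ∀ j, 2 ≤ j → j < k → ‖iteratedFDeriv 𝕜 j f (g x)‖ ≤ Φ)
    (hgM : ∀ j, 1 ≤ j → j < k → ‖iteratedFDeriv 𝕜 j g x‖ ≤ M) :
    ‖iteratedFDeriv 𝕜 k (f ∘ g) x‖ ≤
      ‖iteratedFDeriv 𝕜 k f (g x)‖ * ‖fderiv 𝕜 g x‖ ^ k
        + ‖fderiv 𝕜 f (g x)‖ * ‖iteratedFDeriv 𝕜 k g x‖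
        + Fintype.card (OrderedFinpartition k) * (Φ * M ^ k) := by
  rw [iteratedFDeriv_comp hf hg le_rfl, FormalMultilinearSeries.taylorComp]
  refine (norm_sum_le _ _).trans <| sum_orderedFinpartition_le (by positivity) (by positivity)
    (by positivity) ?_ (fun c hc ↦ ?_) (fun c hc1 hck ↦ ?_)
  all_goals refine (OrderedFinpartition.norm_compAlongOrderedFinpartition_le _ _ _).trans ?_
  · change ‖iteratedFDeriv 𝕜 k f (g x)‖ * ∏ _i : Fin k, ‖iteratedFDeriv 𝕜 1 g x‖ ≤ _
    rw [Finset.prod_const, Finset.card_univ, Fintype.card_fin, norm_iteratedFDeriv_one]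
  · have hprod : ∏ i, ‖ftaylorSeries 𝕜 g x (c.partSize i)‖ = ‖iteratedFDeriv 𝕜 k g x‖ := by
      have hfactor (i) : ‖ftaylorSeries 𝕜 g x (c.partSize i)‖ = ‖iteratedFDeriv 𝕜 k g x‖ := by
        rw [orderedFinpartition_partSize_eq_of_length_eq_one hc i, ftaylorSeries]
      simp only [hfactor, Finset.prod_const, Finset.card_univ, Fintype.card_fin, hc, pow_one]
    rw [hprod, hc, ftaylorSeries, norm_iteratedFDeriv_one]
  · gcongr
    · exact hfΦ _ hc1 hck
    · calc ∏ i, ‖ftaylorSeries 𝕜 g x (c.partSize i)‖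
          ≤ ∏ _i : Fin c.length, M := Finset.prod_le_prod (fun _ _ ↦ norm_nonneg _) fun i _ ↦
            hgM _ (c.partSize_pos i) (orderedFinpartition_partSize_lt hc1 i)
        _ ≤ M ^ k := by simpa using pow_le_pow_right₀ hM hck.le

end FaaDiBruno

section SmoothLimit

variable {E F : Type*} [NormedAddCommGroup E] [NormedSpace ℝ E]
  [NormedAddCommGroup F] [NormedSpace ℝ F]

lemma norm_fderiv_le_of_lipschitzWith_fderiv {w : E → F} (hw : Differentiable ℝ w) {M : NNReal}
    (hlip : LipschitzWith M (fderiv ℝ w)) {δ s : ℝ} (hδ : ∀ x, ‖w x‖ ≤ δ) (hs : 0 < s) (x : E) :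
    ‖fderiv ℝ w x‖ ≤ 2 * δ / s + M * s := by
  have hδ0 : 0 ≤ δ := (norm_nonneg _).trans (hδ x)
  refine ContinuousLinearMap.opNorm_le_of_unit_norm (by positivity) fun e he ↦ ?_
  have hnorm : ‖s • e‖ = s := by rw [norm_smul, he, mul_one, Real.norm_of_nonneg hs.le]
  have htaylor : ‖w (x + s • e) - w x - fderiv ℝ w x (s • e)‖ ≤ M * s * s := by
    have hslope : ∀ z ∈ Metric.closedBall x s, ‖fderiv ℝ w z - fderiv ℝ w x‖ ≤ M * s :=
      fun z hz ↦ by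
        rw [← dist_eq_norm]
        exact hlip.dist_le_mul_of_le hz
    simpa [hnorm] using Convex.norm_image_sub_le_of_norm_fderiv_le' (fun z _ ↦ hw z) hslope
      (convex_closedBall x s) (Metric.mem_closedBall_self hs.le) (y := x + s • e) (by simp [hnorm])
  have hscaled : s * ‖fderiv ℝ w x e‖ ≤ 2 * δ + M * s * s := by
    calc s * ‖fderiv ℝ w x e‖ = ‖fderiv ℝ w x (s • e)‖ := by
          rw [map_smul, norm_smul, Real.norm_of_nonneg hs.le]
      _ = ‖w (x + s • e) - w x - (w (x + s • e) - w x - fderiv ℝ w x (s • e))‖ := by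
          rw [sub_sub_cancel]
      _ ≤ ‖w (x + s • e)‖ + ‖w x‖ + ‖w (x + s • e) - w x - fderiv ℝ w x (s • e)‖ :=
          (norm_sub_le _ _).trans (by gcongr; exact norm_sub_le _ _)
      _ ≤ 2 * δ + M * s * s := by linarith [hδ x, hδ (x + s • e)]
  calc ‖fderiv ℝ w x e‖ ≤ (2 * δ + M * s * s) / s := (le_div_iff₀' hs).2 hscaled
    _ = 2 * δ / s + M * s := by field_simp

lemma norm_iteratedFDeriv_succ_le_of_norm_le {w : E → F} {k : ℕ} (hw : ContDiff ℝ (k + 2 : ℕ) w)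
    {δ M s : ℝ} (hδ : ∀ x, ‖iteratedFDeriv ℝ k w x‖ ≤ δ)
    (hM : ∀ x, ‖iteratedFDeriv ℝ (k + 2) w x‖ ≤ M) (hs : 0 < s) (x : E) :
    ‖iteratedFDeriv ℝ (k + 1) w x‖ ≤ 2 * δ / s + M * s := by
  lift M to NNReal using (norm_nonneg _).trans (hM x)
  have hdiff (j : ℕ) (hj : j < k + 2) : Differentiable ℝ (iteratedFDeriv ℝ j w) :=
    hw.differentiable_iteratedFDeriv (by exact_mod_cast hj)
  have hlip : LipschitzWith M (fderiv ℝ (iteratedFDeriv ℝ k w)) := by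
    rw [fderiv_iteratedFDeriv]
    refine ((LinearIsometryEquiv.isometry _).lipschitzWith_iff M).2 <|
      lipschitzWith_of_nnnorm_fderiv_le (𝕜 := ℝ) (hdiff (k + 1) (by omega)) fun y ↦ ?_
    rw [← NNReal.coe_le_coe, coe_nnnorm, norm_fderiv_iteratedFDeriv]
    exact hM y
  rw [← norm_fderiv_iteratedFDeriv]
  exact norm_fderiv_le_of_lipschitzWith_fderiv (hdiff k (by omega)) hlip hδ hs x

lemma exists_norm_iteratedFDeriv_le_geometric {w : ℕ → E → F} (hw : ∀ m, ContDiff ℝ (⊤ : ℕ∞) (w m))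
    {C q : ℝ} (hq0 : 0 < q) (hq1 : q < 1) (hgeom : ∀ m x, ‖w m x‖ ≤ C * q ^ m)
    (hbdd : ∀ k, ∃ M, ∀ m x, ‖iteratedFDeriv ℝ k (w m) x‖ ≤ M) (k : ℕ) :
    ∃ C' q', 0 < q' ∧ q' < 1 ∧ ∀ m x, ‖iteratedFDeriv ℝ k (w m) x‖ ≤ C' * q' ^ m := by
  induction k with
  | zero => exact ⟨C, q, hq0, hq1, by simpa using hgeom⟩
  | succ k ih =>
    obtain ⟨C', q', hq0', hq1', hk⟩ := ih
    obtain ⟨M, hM⟩ := hbdd (k + 2)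
    refine ⟨2 * C' + M, √q', Real.sqrt_pos.2 hq0', by rwa [Real.sqrt_lt' one_pos, one_pow],
      fun m x ↦ ?_⟩
    have hs : 0 < √q' ^ m := pow_pos (Real.sqrt_pos.2 hq0') m
    calc ‖iteratedFDeriv ℝ (k + 1) (w m) x‖
        ≤ 2 * (C' * q' ^ m) / √q' ^ m + M * √q' ^ m :=
          norm_iteratedFDeriv_succ_le_of_norm_le (contDiff_infty.1 (hw m) _) (hk m) (hM m) hs x
      _ = (2 * C' + M) * √q' ^ m := by
          have : q' ^ m = √q' ^ m * √q' ^ m := by rw [← mul_pow, Real.mul_self_sqrt hq0'.le]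
          rw [this]
          field_simp

lemma exists_contDiff_tendsto_iteratedFDeriv [CompleteSpace F] {v : ℕ → E → F}
    (hv : ∀ m, ContDiff ℝ (⊤ : ℕ∞) (v m)) {C q : ℝ} (hq0 : 0 < q) (hq1 : q < 1)
    (hgeom : ∀ m x, ‖v (m + 1) x - v m x‖ ≤ C * q ^ m)
    (hbdd : ∀ k, ∃ M, ∀ m x, ‖iteratedFDeriv ℝ k (v m) x‖ ≤ M) :
    ∃ u : E → F, ContDiff ℝ (⊤ : ℕ∞) u ∧ ∀ k x,
      Tendsto (fun m ↦ iteratedFDeriv ℝ k (v m) x) atTop (nhds (iteratedFDeriv ℝ k u x)) := by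
  have hnat (k : ℕ) {f : E → F} (hf : ContDiff ℝ (⊤ : ℕ∞) f) (x : E) : ContDiffAt ℝ k f x :=
    (contDiff_infty.1 hf k).contDiffAt
  let w (m : ℕ) (x : E) : F := v (m + 1) x - v m x
  have hw (m : ℕ) : ContDiff ℝ (⊤ : ℕ∞) (w m) := (hv (m + 1)).sub (hv m)
  have hDw (k m : ℕ) (x : E) : iteratedFDeriv ℝ k (w m) x =
      iteratedFDeriv ℝ k (v (m + 1)) x - iteratedFDeriv ℝ k (v m) x :=
    fun_iteratedFDeriv_sub_apply (hnat k (hv (m + 1)) x) (hnat k (hv m) x)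
  have hwbdd (k : ℕ) : ∃ M, ∀ m x, ‖iteratedFDeriv ℝ k (w m) x‖ ≤ M := by
    obtain ⟨M, hM⟩ := hbdd k
    refine ⟨M + M, fun m x ↦ ?_⟩
    rw [hDw]
    exact norm_sub_le_of_le (hM _ _) (hM _ _)
  choose C' q' hq0' hq1' hC' using exists_norm_iteratedFDeriv_le_geometric hw hq0 hq1 hgeom hwbdd
  have hsum (k : ℕ) : Summable fun m ↦ C' k * q' k ^ m :=
    (summable_geometric_of_lt_one (hq0' k).le (hq1' k)).mul_left _
  have htsum : ContDiff ℝ (⊤ : ℕ∞) fun x ↦ ∑' m, w m x :=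
    contDiff_tsum (N := ⊤) hw (fun k _ ↦ hsum k) fun k m x _ ↦ hC' k m x
  refine ⟨fun x ↦ v 0 x + ∑' m, w m x, (hv 0).add htsum, fun k x ↦ ?_⟩
  rw [fun_iteratedFDeriv_add_apply (hnat k (hv 0) x) (hnat k htsum x),
    iteratedFDeriv_tsum_apply (N := ⊤) hw (fun k _ ↦ hsum k) (fun k m x _ ↦ hC' k m x) le_top]
  have htele (m : ℕ) : iteratedFDeriv ℝ k (v 0) x + ∑ i ∈ Finset.range m, iteratedFDeriv ℝ k (w i) x
      = iteratedFDeriv ℝ k (v m) x := by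
    simp only [hDw, Finset.sum_range_sub (fun i ↦ iteratedFDeriv ℝ k (v i) x), add_sub_cancel]
  exact ((Summable.of_norm_bounded (hsum k) fun m ↦ hC' k m x).hasSum.tendsto_sum_nat.const_add
    _).congr htele

end SmoothLimit

section Weight

lemma exists_weight_mul_shift_le {q : ℝ → ℝ} {θ : ℝ} (hθ : 0 < θ) (hbdd : BddAbove (range q))
    (hq : ∀ᶠ t in cocompact ℝ, q t ≤ θ) :
    ∃ (ω : ℝ → ℝ) (M : ℝ), (∀ t, 1 ≤ ω t ∧ ω t ≤ M) ∧ ∀ t, q t * ω (t + 1) ≤ θ * ω t := by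
  obtain ⟨Q, hQ⟩ := hbdd
  obtain ⟨L, hL0, hL⟩ : ∃ L, 0 ≤ L ∧ ∀ t, q t ≤ θ * Real.exp L := by
    refine ⟨Real.log (max Q θ / θ), Real.log_nonneg ((one_le_div hθ).2 (le_max_right _ _)),
      fun t ↦ ?_⟩
    rw [Real.exp_log (by positivity), mul_div_cancel₀ _ hθ.ne']
    exact (hQ ⟨t, rfl⟩).trans (le_max_left _ _)
  obtain ⟨R, hR⟩ : ∃ R, ∀ t, R ≤ |t| → q t ≤ θ := by
    rw [← Metric.cobounded_eq_cocompact, hasBasis_cobounded_norm.eventually_iff] at hq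
    simpa using hq
  -- `ω` decays by the factor `exp (-L)` per unit step where `q` may exceed `θ`.
  let clamp (t : ℝ) : ℝ := max (-R) (min t (R + 1))
  have hclamp_mono (t : ℝ) : clamp t ≤ clamp (t + 1) := by
    simp only [clamp]
    gcongr
    linarith
  refine ⟨fun t ↦ Real.exp (L * (|R| + 1 - clamp t)), Real.exp (L * (2 * |R| + 1)),
    fun t ↦ ⟨Real.one_le_exp (mul_nonneg hL0 ?_), ?_⟩, fun t ↦ ?_⟩
  · have : clamp t ≤ |R| + 1 :=
      max_le (by linarith [neg_le_abs R]) <|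
        (min_le_right _ _).trans (by gcongr; exact le_abs_self R)
    linarith
  · dsimp only
    gcongr
    linarith [le_max_left (-R) (min t (R + 1)), le_abs_self R]
  · rcases le_or_gt R |t| with ht | ht
    · calc q t * Real.exp (L * (|R| + 1 - clamp (t + 1)))
          ≤ θ * Real.exp (L * (|R| + 1 - clamp (t + 1))) := by gcongr; exact hR t ht
        _ ≤ θ * Real.exp (L * (|R| + 1 - clamp t)) := by gcongr; exact hclamp_mono t
    · obtain ⟨hneg, hpos⟩ := abs_lt.1 ht
      have hclamp : clamp (t + 1) = clamp t + 1 := by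
        simp only [clamp]
        rw [min_eq_left (by linarith), min_eq_left (by linarith), max_eq_right (by linarith),
          max_eq_right (by linarith)]
      calc q t * Real.exp (L * (|R| + 1 - clamp (t + 1)))
          ≤ θ * Real.exp L * Real.exp (L * (|R| + 1 - clamp (t + 1))) := by gcongr; exact hL t
        _ = θ * Real.exp (L * (|R| + 1 - clamp t)) := by
            rw [mul_assoc, ← Real.exp_add, hclamp]
            ring_nf

/-- A nonnegative bounded function on `ℝ` which tends to `0` at both ends and grows by at most the
factor `lam` per unit step. These are the weights against which all derivatives are measured. -/
structure IsTwoSidedWeight (lam : ℝ) (r : ℝ → ℝ) : Prop where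
  one_le : 1 ≤ lam
  nonneg : ∀ t, 0 ≤ r t
  bddAbove : BddAbove (range r)
  add_one_le : ∀ t, r (t + 1) ≤ lam * r t
  tendsto_cocompact : Tendsto r (cocompact ℝ) (nhds 0)

lemma le_div_mul_of_recursion {X : Type*} {a : ℕ → X → ℝ} {G : ℕ → X → X} {q W : X → ℝ}
    {θ s C : ℝ} (hq : ∀ y, 0 ≤ q y) (hW : ∀ y, 0 ≤ W y) (hs : 0 ≤ s) (hC : 0 ≤ C)
    (hgap : θ + s < 1) (hqW : ∀ m y, q y * W (G m y) ≤ θ * W y) (ha0 : ∀ y, a 0 y ≤ 0)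
    (hstep : ∀ m y, a (m + 1) y ≤ q y * a m (G m y) + s * a m y + C * W y) (m : ℕ) (y : X) :
    a m y ≤ C / (1 - θ - s) * W y := by
  set K := C / (1 - θ - s)
  have hK0 : 0 ≤ K := div_nonneg hC (by linarith)
  have hKC : (θ + s) * K + C = K := by
    simp only [K]
    field_simp [show 1 - θ - s ≠ 0 by linarith]
    ring
  induction m generalizing y with
  | zero => exact (ha0 y).trans (mul_nonneg hK0 (hW y))
  | succ m ih =>
    calc a (m + 1) y ≤ q y * a m (G m y) + s * a m y + C * W y := hstep m y
      _ ≤ q y * (K * W (G m y)) + s * (K * W y) + C * W y := by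
          gcongr
          exacts [hq y, ih _, ih y]
      _ = K * (q y * W (G m y)) + (s * K + C) * W y := by ring
      _ ≤ K * (θ * W y) + (s * K + C) * W y :=
          add_le_add (mul_le_mul_of_nonneg_left (hqW m y) hK0) le_rfl
      _ = ((θ + s) * K + C) * W y := by ring
      _ = K * W y := by rw [hKC]

lemma exists_le_weight_of_recursion {X : Type*} {τ : X → ℝ} {lam : ℝ} {r : ℝ → ℝ}
    (hr : IsTwoSidedWeight lam r) {a : ℕ → X → ℝ} {G : ℕ → X → X} (hG : ∀ m y, τ (G m y) = τ y + 1)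
    {q : ℝ → ℝ} {q₀ s C : ℝ} (hq0 : ∀ t, 0 ≤ q t) (hqbdd : BddAbove (range q))
    (hq : Tendsto q (cocompact ℝ) (nhds q₀)) (hs : 0 ≤ s) (hgap : lam * q₀ + s < 1) (hC : 0 ≤ C)
    (ha0 : ∀ y, a 0 y ≤ 0)
    (hstep : ∀ m y, a (m + 1) y ≤ q (τ y) * a m (G m y) + s * a m y + C * r (τ y)) :
    ∃ K, ∀ m y, a m y ≤ K * r (τ y) := by
  have hlam0 : 0 ≤ lam := zero_le_one.trans hr.one_le
  have hq₀ : 0 ≤ q₀ := ge_of_tendsto' hq hq0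
  obtain ⟨θ, hlamθ, hθs⟩ : ∃ θ, lam * q₀ < θ ∧ θ < 1 - s := exists_between (by linarith)
  have hlamq : BddAbove (range fun t ↦ lam * q t) := by
    obtain ⟨Q, hQ⟩ := hqbdd
    exact ⟨lam * Q, by rintro _ ⟨t, rfl⟩; exact mul_le_mul_of_nonneg_left (hQ ⟨t, rfl⟩) hlam0⟩
  obtain ⟨ω, M, hω, hqω⟩ := exists_weight_mul_shift_le ((mul_nonneg hlam0 hq₀).trans_lt hlamθ)
    hlamq ((hq.const_mul lam).eventually_le_const hlamθ)
  have hω0 (t : ℝ) : 0 ≤ ω t := zero_le_one.trans (hω t).1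
  have hqW (m : ℕ) (y : X) : q (τ y) * (ω (τ (G m y)) * r (τ (G m y))) ≤
      θ * (ω (τ y) * r (τ y)) := by
    rw [hG]
    calc q (τ y) * (ω (τ y + 1) * r (τ y + 1)) ≤ q (τ y) * (ω (τ y + 1) * (lam * r (τ y))) := by
          gcongr
          exacts [hq0 _, hω0 _, hr.add_one_le _]
      _ = lam * q (τ y) * ω (τ y + 1) * r (τ y) := by ring
      _ ≤ θ * ω (τ y) * r (τ y) := mul_le_mul_of_nonneg_right (hqω _) (hr.nonneg _)
      _ = θ * (ω (τ y) * r (τ y)) := mul_assoc _ _ _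
  have hrω (t : ℝ) : C * r t ≤ C * (ω t * r t) :=
    mul_le_mul_of_nonneg_left (le_mul_of_one_le_left (hr.nonneg t) (hω t).1) hC
  have hK0 : 0 ≤ C / (1 - θ - s) := div_nonneg hC (by linarith)
  refine ⟨C / (1 - θ - s) * M, fun m y ↦ ?_⟩
  calc a m y ≤ C / (1 - θ - s) * (ω (τ y) * r (τ y)) :=
        le_div_mul_of_recursion (fun _ ↦ hq0 _) (fun _ ↦ mul_nonneg (hω0 _) (hr.nonneg _)) hs hC
          (by linarith) hqW ha0 (fun m y ↦ (hstep m y).trans (add_le_add le_rfl (hrω _))) m y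
    _ ≤ C / (1 - θ - s) * (M * r (τ y)) := by
        gcongr
        exacts [hr.nonneg _, (hω _).2]
    _ = C / (1 - θ - s) * M * r (τ y) := (mul_assoc _ _ _).symm

lemma exists_uniform_bound {ι : Type*} {f : ℕ → ι → ℝ} {s : ι → ℝ} (hs : ∀ i, 0 ≤ s i)
    (J : Finset ℕ) (h : ∀ j ∈ J, ∃ C, ∀ i, f j i ≤ C * s i) :
    ∃ C, 0 ≤ C ∧ ∀ j ∈ J, ∀ i, f j i ≤ C * s i := by
  have hlarge : ∀ᶠ C in atTop, ∀ j ∈ J, ∀ i, f j i ≤ C * s i := by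
    refine (eventually_all_finset J).2 fun j hj ↦ ?_
    obtain ⟨C, hC⟩ := h j hj
    filter_upwards [eventually_ge_atTop C] with D hCD i
    exact (hC i).trans (mul_le_mul_of_nonneg_right hCD (hs i))
  exact ((eventually_ge_atTop 0).and hlarge).exists

end Weight

section GraphTransform

variable {X V : Type*} [NormedAddCommGroup X] [NormedSpace ℝ X] [NormedAddCommGroup V]
  [NormedSpace ℝ V]

/-- The data of a graph transform for maps `v : X → V`: the base dynamics is
`y ↦ y + shift + drift (v y)`, explicit in `v`, and over it fibers are mapped by the affine
contraction `linear` perturbed by `pert`. -/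
structure GraphTransform (X V : Type*) [NormedAddCommGroup X] [NormedSpace ℝ X]
    [NormedAddCommGroup V] [NormedSpace ℝ V] where
  shift : X
  drift : V →L[ℝ] X
  linear : V →L[ℝ] V
  pert : X × V → V

namespace GraphTransform

variable (T : GraphTransform X V)

/-- The base map determined by `v`. The invariance equation expresses `v y` through the value of
`v` at `T.base v y`. -/
def base (v : X → V) (y : X) : X := y + T.shift + T.drift (v y)

/-- The image of the graph of `v` under the fiber map, still parametrized by the old base point. -/
def fiber (v : X → V) (x : X) : V := T.linear (v x) + T.pert (x, v x)

/-- One step of the graph transform; its fixed points are the invariant graphs. -/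
def step (v : X → V) : X → V := T.fiber v ∘ T.base v

/-- The iterates of the zero section under the graph transform. -/
def iter (m : ℕ) : X → V := T.step^[m] 0

lemma iter_zero : T.iter 0 = 0 := rfl

lemma iter_succ (m : ℕ) : T.iter (m + 1) = T.step (T.iter m) :=
  Function.iterate_succ_apply' _ _ _

/-- The fiber contraction `κ` beats the growth `lam` of the weights along the base dynamics, with
room for the feedback of the unknown section on the base map. -/
structure IsContracting (κ lam : ℝ) : Prop where
  contDiff_pert : ContDiff ℝ (⊤ : ℕ∞) T.pert
  norm_le : ∀ p, ‖T.linear‖ + ‖fderiv ℝ T.pert p‖ ≤ κ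
  gap : lam * (κ * (1 + ‖T.drift‖)) + κ * ‖T.drift‖ < 1

/-- `τ` is a time coordinate advancing by `1` along the base dynamics, and all derivatives of the
perturbation are `O(r(τ))`. -/
structure IsAdapted (τ : X → ℝ) (r : ℝ → ℝ) : Prop where
  map_base : ∀ y w, τ (y + T.shift + T.drift w) = τ y + 1
  norm_pert_le : ∀ k, ∃ C, ∀ p, ‖iteratedFDeriv ℝ k T.pert p‖ ≤ C * r (τ p.1)

variable {T} {κ lam K : ℝ} {τ : X → ℝ} {r : ℝ → ℝ} {u v : X → V} {k : ℕ}

lemma IsContracting.rate_nonneg (hT : T.IsContracting κ lam) : 0 ≤ κ :=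
  (by positivity : 0 ≤ ‖T.linear‖ + ‖fderiv ℝ T.pert 0‖).trans (hT.norm_le 0)

lemma IsContracting.rate_mul_lt_one (hT : T.IsContracting κ lam) (hlam : 1 ≤ lam) :
    κ * (1 + ‖T.drift‖) < 1 := by
  have hκ := hT.rate_nonneg
  have hle : κ * (1 + ‖T.drift‖) ≤ lam * (κ * (1 + ‖T.drift‖)) :=
    le_mul_of_one_le_left (by positivity) hlam
  have : 0 ≤ κ * ‖T.drift‖ := by positivity
  linarith [hT.gap]

lemma contDiff_base (hv : ContDiff ℝ (⊤ : ℕ∞) v) : ContDiff ℝ (⊤ : ℕ∞) (T.base v) :=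
  (contDiff_id.add contDiff_const).add (T.drift.contDiff.comp hv)

lemma IsContracting.contDiff_fiber (hT : T.IsContracting κ lam) (hv : ContDiff ℝ (⊤ : ℕ∞) v) :
    ContDiff ℝ (⊤ : ℕ∞) (T.fiber v) :=
  (T.linear.contDiff.comp hv).add (hT.contDiff_pert.comp (contDiff_id.prodMk hv))

lemma IsContracting.contDiff_step (hT : T.IsContracting κ lam) (hv : ContDiff ℝ (⊤ : ℕ∞) v) :
    ContDiff ℝ (⊤ : ℕ∞) (T.step v) :=
  (hT.contDiff_fiber hv).comp (contDiff_base hv)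

lemma IsContracting.contDiff_iter (hT : T.IsContracting κ lam) (m : ℕ) :
    ContDiff ℝ (⊤ : ℕ∞) (T.iter m) := by
  induction m with
  | zero => exact contDiff_const
  | succ m ih => exact T.iter_succ m ▸ hT.contDiff_step ih

lemma norm_fderiv_base_le (hv : Differentiable ℝ v) (y : X) :
    ‖fderiv ℝ (T.base v) y‖ ≤ 1 + ‖T.drift‖ * ‖fderiv ℝ v y‖ := by
  have hderiv : HasFDerivAt (T.base v) (ContinuousLinearMap.id ℝ X + T.drift ∘L fderiv ℝ v y) y :=
    ((hasFDerivAt_id y).add_const T.shift).add (T.drift.hasFDerivAt.comp y (hv y).hasFDerivAt)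
  rw [hderiv.fderiv]
  exact norm_add_le_of_le ContinuousLinearMap.norm_id_le (ContinuousLinearMap.opNorm_comp_le _ _)

lemma iteratedFDeriv_id_of_two_le (hk : 2 ≤ k) (x : X) :
    iteratedFDeriv ℝ k (fun y : X ↦ y) x = 0 := by
  obtain ⟨k, rfl⟩ := Nat.exists_eq_add_of_le' hk
  have hderiv : fderiv ℝ (fun y : X ↦ y) = fun _ ↦ ContinuousLinearMap.id ℝ X :=
    funext fun _ ↦ fderiv_fun_id
  rw [← norm_eq_zero, ← norm_iteratedFDeriv_fderiv, hderiv, iteratedFDeriv_succ_const]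
  exact norm_zero

lemma norm_iteratedFDeriv_base_le (hv : ContDiff ℝ (⊤ : ℕ∞) v) (hk : 2 ≤ k) (y : X) :
    ‖iteratedFDeriv ℝ k (T.base v) y‖ ≤ ‖T.drift‖ * ‖iteratedFDeriv ℝ k v y‖ := by
  have hk' (f : X → X) (hf : ContDiff ℝ (⊤ : ℕ∞) f) : ContDiffAt ℝ k f y :=
    (contDiff_infty.1 hf k).contDiffAt
  have hsplit : iteratedFDeriv ℝ k (T.base v) y = iteratedFDeriv ℝ k (T.drift ∘ v) y := by
    change iteratedFDeriv ℝ k (fun y ↦ (y + T.shift) + (T.drift ∘ v) y) y = _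
    rw [fun_iteratedFDeriv_add_apply (hk' _ (contDiff_fun_id.add contDiff_const))
      (hk' _ (T.drift.contDiff.comp hv)), fun_iteratedFDeriv_add_apply (hk' _ contDiff_fun_id)
      (hk' _ contDiff_const), iteratedFDeriv_id_of_two_le hk,
      iteratedFDeriv_const_of_ne (by omega)]
    simp
  rw [hsplit]
  exact T.drift.norm_iteratedFDeriv_comp_left (contDiff_infty.1 hv k).contDiffAt le_rfl

lemma norm_fderiv_graph_le_one (hv : Differentiable ℝ v) {x : X} (hslope : ‖fderiv ℝ v x‖ ≤ 1) :
    ‖fderiv ℝ (fun y ↦ (y, v y)) x‖ ≤ 1 := by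
  have hderiv : HasFDerivAt (fun y ↦ (y, v y))
      ((ContinuousLinearMap.id ℝ X).prod (fderiv ℝ v x)) x :=
    (hasFDerivAt_id x).prodMk (hv x).hasFDerivAt
  rw [hderiv.fderiv, ContinuousLinearMap.opNorm_prod]
  exact max_le ContinuousLinearMap.norm_id_le hslope

lemma norm_iteratedFDeriv_graph (hv : ContDiff ℝ (⊤ : ℕ∞) v) (hk : 2 ≤ k) (x : X) :
    ‖iteratedFDeriv ℝ k (fun y ↦ (y, v y)) x‖ = ‖iteratedFDeriv ℝ k v x‖ := by
  rw [iteratedFDeriv_prodMk (f := fun y : X ↦ y) contDiffAt_id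
    (contDiff_infty.1 hv k).contDiffAt le_rfl, ContinuousMultilinearMap.opNorm_prod,
    iteratedFDeriv_id_of_two_le hk, norm_zero, max_eq_right (norm_nonneg _)]

lemma IsContracting.norm_fderiv_fiber_le (hT : T.IsContracting κ lam) (hv : Differentiable ℝ v)
    {x : X} (hslope : ‖fderiv ℝ v x‖ ≤ 1) :
    ‖fderiv ℝ (T.fiber v) x‖ ≤ ‖T.linear‖ * ‖fderiv ℝ v x‖ + ‖fderiv ℝ T.pert (x, v x)‖ := by
  have hgraph : DifferentiableAt ℝ (fun y ↦ (y, v y)) x := differentiableAt_id.prodMk (hv x)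
  have hpert : DifferentiableAt ℝ T.pert (x, v x) :=
    hT.contDiff_pert.differentiable (by simp) _
  have hderiv : HasFDerivAt (T.fiber v) (T.linear ∘L fderiv ℝ v x +
      fderiv ℝ T.pert (x, v x) ∘L fderiv ℝ (fun y ↦ (y, v y)) x) x :=
    (T.linear.hasFDerivAt.comp x (hv x).hasFDerivAt).add
      (hpert.hasFDerivAt.comp x hgraph.hasFDerivAt)
  rw [hderiv.fderiv]
  refine norm_add_le_of_le (ContinuousLinearMap.opNorm_comp_le _ _) <|
    (ContinuousLinearMap.opNorm_comp_le _ _).trans ?_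
  exact mul_le_of_le_one_right (norm_nonneg _) (norm_fderiv_graph_le_one hv hslope)

lemma IsContracting.norm_fderiv_fiber_le_rate (hT : T.IsContracting κ lam)
    (hv : Differentiable ℝ v) {x : X} (hslope : ‖fderiv ℝ v x‖ ≤ 1) :
    ‖fderiv ℝ (T.fiber v) x‖ ≤ κ := by
  refine (hT.norm_fderiv_fiber_le hv hslope).trans <| (hT.norm_le (x, v x)).trans' ?_
  gcongr
  exact mul_le_of_le_one_right (norm_nonneg _) hslope

lemma IsContracting.norm_iteratedFDeriv_fiber_le (hT : T.IsContracting κ lam)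
    (hv : ContDiff ℝ (⊤ : ℕ∞) v) {x : X} (hslope : ‖fderiv ℝ v x‖ ≤ 1) (hk : 2 ≤ k) {M Φ : ℝ}
    (hM : 1 ≤ M) (hvM : ∀ j, 2 ≤ j → j < k → ‖iteratedFDeriv ℝ j v x‖ ≤ M)
    (hΦ : ∀ j, 2 ≤ j → j ≤ k → ‖iteratedFDeriv ℝ j T.pert (x, v x)‖ ≤ Φ) :
    ‖iteratedFDeriv ℝ k (T.fiber v) x‖ ≤
      κ * ‖iteratedFDeriv ℝ k v x‖ + (1 + Fintype.card (OrderedFinpartition k) * M ^ k) * Φ := by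
  have hdiff : Differentiable ℝ v := hv.differentiable (by simp)
  have hΦ0 : 0 ≤ Φ := (norm_nonneg _).trans (hΦ k hk le_rfl)
  have hgraph : ContDiff ℝ (⊤ : ℕ∞) (fun y ↦ (y, v y)) := contDiff_id.prodMk hv
  have hgraph1 := norm_fderiv_graph_le_one hdiff hslope
  have hgraphM (j : ℕ) (hj : 1 ≤ j) (hjk : j < k) :
      ‖iteratedFDeriv ℝ j (fun y ↦ (y, v y)) x‖ ≤ M := by
    obtain rfl | hj := hj.eq_or_lt
    · rw [norm_iteratedFDeriv_one]
      exact hgraph1.trans hM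
    · exact (norm_iteratedFDeriv_graph hv hj x).trans_le (hvM j hj hjk)
  have hlinear : ‖iteratedFDeriv ℝ k (T.linear ∘ v) x‖ ≤ ‖T.linear‖ * ‖iteratedFDeriv ℝ k v x‖ :=
    T.linear.norm_iteratedFDeriv_comp_left (contDiff_infty.1 hv k).contDiffAt le_rfl
  have hpert : ‖iteratedFDeriv ℝ k (T.pert ∘ fun y ↦ (y, v y)) x‖ ≤
      Φ + ‖fderiv ℝ T.pert (x, v x)‖ * ‖iteratedFDeriv ℝ k v x‖
        + Fintype.card (OrderedFinpartition k) * (Φ * M ^ k) := by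
    refine (norm_iteratedFDeriv_comp_le_of_lower_order
      (contDiff_infty.1 hT.contDiff_pert k).contDiffAt (contDiff_infty.1 hgraph k).contDiffAt
      hM hΦ0 (fun j hj hjk ↦ hΦ j hj hjk.le) hgraphM).trans ?_
    rw [norm_iteratedFDeriv_graph hv hk]
    gcongr
    calc _ ≤ Φ * 1 := mul_le_mul (hΦ k hk le_rfl) (pow_le_one₀ (norm_nonneg _) hgraph1)
          (by positivity) hΦ0
      _ = Φ := mul_one Φ
  have hsplit : iteratedFDeriv ℝ k (T.fiber v) x =
      iteratedFDeriv ℝ k (T.linear ∘ v) x + iteratedFDeriv ℝ k (T.pert ∘ fun y ↦ (y, v y)) x :=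
    fun_iteratedFDeriv_add_apply (contDiff_infty.1 (T.linear.contDiff.comp hv) k).contDiffAt
      (contDiff_infty.1 (hT.contDiff_pert.comp hgraph) k).contDiffAt
  rw [hsplit]
  refine (norm_add_le_of_le hlinear hpert).trans ?_
  linarith [mul_le_mul_of_nonneg_right (hT.norm_le (x, v x)) (norm_nonneg (iteratedFDeriv ℝ k v x))]

/-- The induction hypothesis for the derivatives of order `k`: `v` is smooth with slope at most `1`,
and its derivatives of order between `2` and `k - 1` are bounded by `K * r(τ)`. -/
structure IsControlled (τ : X → ℝ) (r : ℝ → ℝ) (K : ℝ) (k : ℕ) (v : X → V) : Prop where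
  contDiff : ContDiff ℝ (⊤ : ℕ∞) v
  slope_le : ∀ x, ‖fderiv ℝ v x‖ ≤ 1
  norm_le : ∀ j, 2 ≤ j → j < k → ∀ x, ‖iteratedFDeriv ℝ j v x‖ ≤ K * r (τ x)

lemma IsControlled.differentiable (hv : IsControlled τ r K k v) : Differentiable ℝ v :=
  hv.contDiff.differentiable (by simp)

lemma IsControlled.mono {j : ℕ} (hv : IsControlled τ r K k v) (hjk : j ≤ k) :
    IsControlled τ r K j v :=
  ⟨hv.contDiff, hv.slope_le, fun i hi hij ↦ hv.norm_le i hi (hij.trans_le hjk)⟩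

lemma IsContracting.exists_norm_iteratedFDeriv_fiber_le (hT : T.IsContracting κ lam)
    (hτ : T.IsAdapted τ r) (hr : IsTwoSidedWeight lam r) (hk : 2 ≤ k) (K : ℝ) :
    ∃ C, ∀ v, IsControlled τ r K k v → ∀ x,
      ‖iteratedFDeriv ℝ k (T.fiber v) x‖ ≤ κ * ‖iteratedFDeriv ℝ k v x‖ + C * r (τ x) := by
  obtain ⟨C, -, hC⟩ := exists_uniform_bound (fun p : X × V ↦ hr.nonneg (τ p.1))
    (Finset.range (k + 1)) fun j _ ↦ hτ.norm_pert_le j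
  obtain ⟨R, hR⟩ := hr.bddAbove
  refine ⟨(1 + Fintype.card (OrderedFinpartition k) * (1 + |K| * R) ^ k) * C, fun v hv x ↦ ?_⟩
  have hR0 : 0 ≤ R := (hr.nonneg 0).trans (hR ⟨0, rfl⟩)
  have hvM (j : ℕ) (hj : 2 ≤ j) (hjk : j < k) : ‖iteratedFDeriv ℝ j v x‖ ≤ 1 + |K| * R :=
    calc ‖iteratedFDeriv ℝ j v x‖ ≤ K * r (τ x) := hv.norm_le j hj hjk x
      _ ≤ |K| * R := mul_le_mul (le_abs_self K) (hR ⟨_, rfl⟩) (hr.nonneg _) (abs_nonneg K)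
      _ ≤ 1 + |K| * R := le_add_of_nonneg_left zero_le_one
  rw [mul_assoc]
  exact hT.norm_iteratedFDeriv_fiber_le hv.contDiff (hv.slope_le x) hk
    (le_add_of_nonneg_right (by positivity)) hvM
    fun j _ hjk ↦ hC j (Finset.mem_range.2 (by omega)) (x, v x)

lemma IsControlled.norm_iteratedFDeriv_base_le (hv : IsControlled τ r K k v) {R : ℝ} (hK : 0 ≤ K)
    (hr : ∀ t, r t ≤ R) (hR : 0 ≤ R) {j : ℕ} (hj : 1 ≤ j) (hjk : j < k) (y : X) :
    ‖iteratedFDeriv ℝ j (T.base v) y‖ ≤ 1 + ‖T.drift‖ * (1 + K * R) := by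
  have hKR : 0 ≤ K * R := mul_nonneg hK hR
  obtain rfl | hj := hj.eq_or_lt
  · rw [norm_iteratedFDeriv_one]
    refine (norm_fderiv_base_le hv.differentiable y).trans ?_
    gcongr
    linarith [hv.slope_le y]
  · calc ‖iteratedFDeriv ℝ j (T.base v) y‖ ≤ ‖T.drift‖ * ‖iteratedFDeriv ℝ j v y‖ :=
          GraphTransform.norm_iteratedFDeriv_base_le hv.contDiff hj y
      _ ≤ ‖T.drift‖ * (1 + K * R) := by
          gcongr
          have := mul_le_mul_of_nonneg_left (hr (τ y)) hK
          linarith [hv.norm_le j hj hjk y]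
      _ ≤ 1 + ‖T.drift‖ * (1 + K * R) := le_add_of_nonneg_left zero_le_one

lemma IsAdapted.apply_base (hτ : T.IsAdapted τ r) (v : X → V) (y : X) :
    τ (T.base v y) = τ y + 1 :=
  hτ.map_base y (v y)

lemma IsContracting.exists_norm_iteratedFDeriv_fiber_base_le (hT : T.IsContracting κ lam)
    (hτ : T.IsAdapted τ r) (hr : IsTwoSidedWeight lam r) (K : ℝ) (k : ℕ) :
    ∃ C, 0 ≤ C ∧ ∀ v, IsControlled τ r K k v → ∀ j, 2 ≤ j → j < k → ∀ y,
      ‖iteratedFDeriv ℝ j (T.fiber v) (T.base v y)‖ ≤ C * r (τ y) := by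
  have hκ := hT.rate_nonneg
  have hbound (j : ℕ) (hj : j ∈ Finset.Ico 2 k) :
      ∃ C, ∀ p : {v : X → V // IsControlled τ r K k v} × X,
        ‖iteratedFDeriv ℝ j (T.fiber p.1) p.2‖ ≤ C * r (τ p.2) := by
    obtain ⟨hj, hjk⟩ := Finset.mem_Ico.1 hj
    obtain ⟨C, hC⟩ := hT.exists_norm_iteratedFDeriv_fiber_le hτ hr hj K
    refine ⟨κ * K + C, fun ⟨⟨v, hv⟩, x⟩ ↦ (hC v (hv.mono hjk.le) x).trans ?_⟩
    rw [add_mul, mul_assoc]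
    gcongr
    exact hv.norm_le j hj hjk x
  obtain ⟨C, hC0, hC⟩ := exists_uniform_bound (fun _ ↦ hr.nonneg _) (Finset.Ico 2 k) hbound
  have hlam : 0 ≤ lam := zero_le_one.trans hr.one_le
  refine ⟨C * lam, by positivity, fun v hv j hj hjk y ↦ ?_⟩
  refine (hC j (Finset.mem_Ico.2 ⟨hj, hjk⟩) (⟨v, hv⟩, T.base v y)).trans ?_
  rw [hτ.apply_base, mul_assoc]
  gcongr
  exact hr.add_one_le _

lemma IsContracting.exists_norm_iteratedFDeriv_step_le (hT : T.IsContracting κ lam)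
    (hτ : T.IsAdapted τ r) (hr : IsTwoSidedWeight lam r) (hk : 2 ≤ k) (hK : 0 ≤ K) :
    ∃ C, 0 ≤ C ∧ ∀ v, IsControlled τ r K k v → ∀ y,
      ‖iteratedFDeriv ℝ k (T.step v) y‖ ≤
        κ * (1 + ‖T.drift‖ * ‖fderiv ℝ v y‖) ^ k * ‖iteratedFDeriv ℝ k v (T.base v y)‖
          + κ * ‖T.drift‖ * ‖iteratedFDeriv ℝ k v y‖ + C * r (τ y) := by
  obtain ⟨C₁, hC₁⟩ := hT.exists_norm_iteratedFDeriv_fiber_le hτ hr hk K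
  obtain ⟨C₂, hC₂0, hC₂⟩ := hT.exists_norm_iteratedFDeriv_fiber_base_le hτ hr K k
  obtain ⟨R, hR⟩ := hr.bddAbove
  have hR0 : 0 ≤ R := (hr.nonneg 0).trans (hR ⟨0, rfl⟩)
  let N : ℝ := Fintype.card (OrderedFinpartition k)
  set M := 1 + ‖T.drift‖ * (1 + K * R)
  have hM : 1 ≤ M := le_add_of_nonneg_right (by positivity)
  have hκ := hT.rate_nonneg
  have hlam : 0 ≤ lam := zero_le_one.trans hr.one_le
  refine ⟨|C₁| * lam * (1 + ‖T.drift‖) ^ k + N * (C₂ * M ^ k), by positivity, fun v hv y ↦ ?_⟩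
  set d := ‖fderiv ℝ v y‖
  have hd : d ≤ 1 := hv.slope_le y
  have hry : 0 ≤ r (τ y) := hr.nonneg _
  have hfiber : ‖iteratedFDeriv ℝ k (T.fiber v) (T.base v y)‖ ≤
      κ * ‖iteratedFDeriv ℝ k v (T.base v y)‖ + |C₁| * (lam * r (τ y)) := by
    refine (hC₁ v hv _).trans ?_
    rw [hτ.apply_base]
    gcongr
    exacts [hr.nonneg _, le_abs_self _, hr.add_one_le _]
  have hcomp := norm_iteratedFDeriv_comp_le_of_lower_order (k := k) (M := M) (Φ := C₂ * r (τ y))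
    (contDiff_infty.1 (hT.contDiff_fiber hv.contDiff) k).contDiffAt
    (contDiff_infty.1 (contDiff_base hv.contDiff) k).contDiffAt hM (by positivity)
    (fun j hj hjk ↦ hC₂ v hv j hj hjk y)
    (fun j hj hjk ↦ hv.norm_iteratedFDeriv_base_le hK (fun t ↦ hR ⟨t, rfl⟩) hR0 hj hjk y)
  calc _ ≤ _ := hcomp
    _ ≤ (κ * ‖iteratedFDeriv ℝ k v (T.base v y)‖ + |C₁| * (lam * r (τ y)))
            * (1 + ‖T.drift‖ * d) ^ k
          + κ * (‖T.drift‖ * ‖iteratedFDeriv ℝ k v y‖) + N * (C₂ * r (τ y) * M ^ k) := by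
        gcongr
        exacts [norm_fderiv_base_le hv.differentiable y,
          hT.norm_fderiv_fiber_le_rate hv.differentiable (hv.slope_le _),
          GraphTransform.norm_iteratedFDeriv_base_le hv.contDiff hk y]
    _ = κ * (1 + ‖T.drift‖ * d) ^ k * ‖iteratedFDeriv ℝ k v (T.base v y)‖
          + κ * ‖T.drift‖ * ‖iteratedFDeriv ℝ k v y‖
          + (|C₁| * lam * (1 + ‖T.drift‖ * d) ^ k + N * (C₂ * M ^ k)) * r (τ y) := by ring
    _ ≤ _ := by
        gcongr
        exact mul_le_of_le_one_right (norm_nonneg _) hd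

lemma IsContracting.norm_fderiv_step_le (hT : T.IsContracting κ lam) (hv : ContDiff ℝ (⊤ : ℕ∞) v)
    (hslope : ∀ x, ‖fderiv ℝ v x‖ ≤ 1) (y : X) :
    ‖fderiv ℝ (T.step v) y‖ ≤ (‖T.linear‖ * ‖fderiv ℝ v (T.base v y)‖
      + ‖fderiv ℝ T.pert (T.base v y, v (T.base v y))‖) * (1 + ‖T.drift‖) := by
  have hdiff : Differentiable ℝ v := hv.differentiable (by simp)
  have hbase : ‖fderiv ℝ (T.base v) y‖ ≤ 1 + ‖T.drift‖ :=
    (norm_fderiv_base_le hdiff y).trans <| by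
      gcongr
      exact mul_le_of_le_one_right (norm_nonneg _) (hslope y)
  rw [step, fderiv_comp y ((hT.contDiff_fiber hv).differentiable (by simp) _)
    ((contDiff_base hv).differentiable (by simp) _)]
  refine (ContinuousLinearMap.opNorm_comp_le _ _).trans ?_
  gcongr
  exact hT.norm_fderiv_fiber_le hdiff (hslope _)

lemma IsContracting.norm_fderiv_iter_le_one (hT : T.IsContracting κ lam) (hlam : 1 ≤ lam) (m : ℕ)
    (x : X) : ‖fderiv ℝ (T.iter m) x‖ ≤ 1 := by
  induction m generalizing x with
  | zero => simp [iter_zero]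
  | succ m ih =>
    rw [iter_succ]
    calc ‖fderiv ℝ (T.step (T.iter m)) x‖ ≤ _ := hT.norm_fderiv_step_le (hT.contDiff_iter m) ih x
      _ ≤ κ * (1 + ‖T.drift‖) := by
          gcongr
          refine (hT.norm_le (T.base (T.iter m) x, T.iter m (T.base (T.iter m) x))).trans' ?_
          gcongr
          exact mul_le_of_le_one_right (norm_nonneg _) (ih _)
      _ ≤ 1 := (hT.rate_mul_lt_one hlam).le

lemma IsAdapted.norm_pert_base_le (hτ : T.IsAdapted τ r) (hr : IsTwoSidedWeight lam r) (k : ℕ) :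
    ∃ C, 0 ≤ C ∧ ∀ v y,
      ‖iteratedFDeriv ℝ k T.pert (T.base v y, v (T.base v y))‖ ≤ C * r (τ y) := by
  obtain ⟨C, hC⟩ := hτ.norm_pert_le k
  have hlam : 0 ≤ lam := zero_le_one.trans hr.one_le
  refine ⟨|C| * lam, by positivity, fun v y ↦ (hC _).trans ?_⟩
  rw [hτ.apply_base, mul_assoc]
  exact mul_le_mul (le_abs_self C) (hr.add_one_le _) (hr.nonneg _) (abs_nonneg C)

lemma IsContracting.exists_le_weight_of_iter (hT : T.IsContracting κ lam) (hτ : T.IsAdapted τ r)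
    (hr : IsTwoSidedWeight lam r) {a : ℕ → X → ℝ} {C : ℝ} (hC : 0 ≤ C) (ha0 : ∀ y, a 0 y ≤ 0)
    (hstep : ∀ m y, a (m + 1) y ≤ κ * (1 + ‖T.drift‖) * a m (T.base (T.iter m) y) + C * r (τ y)) :
    ∃ K, ∀ m y, a m y ≤ K * r (τ y) := by
  have hκ := hT.rate_nonneg
  have hκB : 0 ≤ κ * ‖T.drift‖ := by positivity
  refine exists_le_weight_of_recursion hr (fun m ↦ hτ.apply_base (T.iter m)) (s := 0)
    (q := fun _ ↦ κ * (1 + ‖T.drift‖)) (fun _ ↦ by positivity) ⟨_, by rintro _ ⟨_, rfl⟩; rfl⟩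
    tendsto_const_nhds le_rfl (by linarith [hT.gap]) hC ha0 fun m y ↦ ?_
  simpa using hstep m y

lemma IsContracting.exists_norm_iter_le (hT : T.IsContracting κ lam) (hτ : T.IsAdapted τ r)
    (hr : IsTwoSidedWeight lam r) : ∃ K, ∀ m y, ‖T.iter m y‖ ≤ K * r (τ y) := by
  obtain ⟨C, hC0, hC⟩ := hτ.norm_pert_base_le hr 0
  refine hT.exists_le_weight_of_iter hτ hr hC0 (by simp [iter_zero]) fun m y ↦ ?_
  have hlinear : ‖T.linear‖ ≤ κ * (1 + ‖T.drift‖) :=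
    calc ‖T.linear‖ ≤ κ := (le_add_of_nonneg_right (norm_nonneg _)).trans (hT.norm_le 0)
      _ ≤ κ * (1 + ‖T.drift‖) := le_mul_of_one_le_right hT.rate_nonneg (by simp)
  rw [iter_succ]
  refine norm_add_le_of_le ((T.linear.le_opNorm _).trans (by gcongr)) ?_
  simpa using hC (T.iter m) y

lemma IsContracting.exists_norm_fderiv_iter_le (hT : T.IsContracting κ lam)
    (hτ : T.IsAdapted τ r) (hr : IsTwoSidedWeight lam r) :
    ∃ K, ∀ m y, ‖fderiv ℝ (T.iter m) y‖ ≤ K * r (τ y) := by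
  obtain ⟨C, hC0, hC⟩ := hτ.norm_pert_base_le hr 1
  refine hT.exists_le_weight_of_iter hτ hr (C := C * (1 + ‖T.drift‖)) (by positivity)
    (by simp [iter_zero]) fun m y ↦ ?_
  have hlinear : ‖T.linear‖ ≤ κ := (le_add_of_nonneg_right (norm_nonneg _)).trans (hT.norm_le 0)
  have hpert := hC (T.iter m) y
  rw [norm_iteratedFDeriv_one] at hpert
  rw [iter_succ]
  calc _ ≤ _ :=
        hT.norm_fderiv_step_le (hT.contDiff_iter m) (hT.norm_fderiv_iter_le_one hr.one_le m) y
    _ ≤ (κ * ‖fderiv ℝ (T.iter m) (T.base (T.iter m) y)‖ + C * r (τ y)) * (1 + ‖T.drift‖) := by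
        gcongr
    _ = _ := by ring

lemma IsContracting.exists_norm_iteratedFDeriv_iter_le_of_isControlled
    (hT : T.IsContracting κ lam) (hτ : T.IsAdapted τ r) (hr : IsTwoSidedWeight lam r) (hk : 2 ≤ k)
    (hK : 0 ≤ K) (hcontrol : ∀ m, IsControlled τ r K k (T.iter m)) :
    ∃ C, ∀ m x, ‖iteratedFDeriv ℝ k (T.iter m) x‖ ≤ C * r (τ x) := by
  obtain ⟨C, hC0, hC⟩ := hT.exists_norm_iteratedFDeriv_step_le hτ hr hk hK
  obtain ⟨D, hD⟩ := hT.exists_norm_fderiv_iter_le hτ hr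
  obtain ⟨R, hR⟩ := hr.bddAbove
  have hκ := hT.rate_nonneg
  have hrate0 (t : ℝ) : 0 ≤ 1 + ‖T.drift‖ * (|D| * r t) := by
    have := hr.nonneg t
    positivity
  have hrate : Tendsto (fun t ↦ κ * (1 + ‖T.drift‖ * (|D| * r t)) ^ k) (cocompact ℝ) (nhds κ) := by
    simpa using ((((hr.tendsto_cocompact.const_mul |D|).const_mul ‖T.drift‖).const_add 1).pow
      k).const_mul κ
  have hgap : lam * κ + κ * ‖T.drift‖ < 1 := by
    have : 0 ≤ lam * (κ * ‖T.drift‖) :=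
      mul_nonneg (zero_le_one.trans hr.one_le) (mul_nonneg hκ (norm_nonneg _))
    linarith [hT.gap]
  refine exists_le_weight_of_recursion hr (fun m ↦ hτ.apply_base (T.iter m))
    (fun t ↦ mul_nonneg hκ (pow_nonneg (hrate0 t) k))
    ⟨κ * (1 + ‖T.drift‖ * (|D| * R)) ^ k, ?_⟩ hrate (by positivity) hgap hC0 (fun y ↦ ?_)
    fun m y ↦ ?_
  · rintro _ ⟨t, rfl⟩
    have := hrate0 t
    dsimp only
    gcongr
    exact hR ⟨t, rfl⟩
  · simp [iter_zero]
  · rw [iter_succ]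
    refine (hC _ (hcontrol m) y).trans ?_
    gcongr
    exact (hD m y).trans (mul_le_mul_of_nonneg_right (le_abs_self D) (hr.nonneg _))

lemma IsContracting.exists_norm_iteratedFDeriv_iter_le (hT : T.IsContracting κ lam)
    (hτ : T.IsAdapted τ r) (hr : IsTwoSidedWeight lam r) (k : ℕ) :
    ∃ C, ∀ m x, ‖iteratedFDeriv ℝ k (T.iter m) x‖ ≤ C * r (τ x) := by
  induction k using Nat.strong_induction_on with
  | _ k ih =>
    obtain rfl | rfl | hk : k = 0 ∨ k = 1 ∨ 2 ≤ k := by omega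
    · simpa using hT.exists_norm_iter_le hτ hr
    · simpa using hT.exists_norm_fderiv_iter_le hτ hr
    · have hlower (j : ℕ) (hj : j ∈ Finset.range k) :
          ∃ C, ∀ p : ℕ × X, ‖iteratedFDeriv ℝ j (T.iter p.1) p.2‖ ≤ C * r (τ p.2) := by
        obtain ⟨C, hC⟩ := ih j (Finset.mem_range.1 hj)
        exact ⟨C, fun p ↦ hC p.1 p.2⟩
      obtain ⟨K, hK0, hK⟩ := exists_uniform_bound (fun _ ↦ hr.nonneg _) (Finset.range k) hlower
      exact hT.exists_norm_iteratedFDeriv_iter_le_of_isControlled hτ hr hk hK0 fun m ↦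
        ⟨hT.contDiff_iter m, hT.norm_fderiv_iter_le_one hr.one_le m,
          fun j _ hjk x ↦ hK j (Finset.mem_range.2 hjk) (m, x)⟩

lemma IsContracting.norm_step_sub_step_le (hT : T.IsContracting κ lam)
    (hv : ContDiff ℝ (⊤ : ℕ∞) v) (hslope : ∀ x, ‖fderiv ℝ v x‖ ≤ 1) (u : X → V) (y : X) :
    ‖T.step u y - T.step v y‖ ≤
      κ * ‖u (T.base u y) - v (T.base u y)‖ + κ * ‖T.drift‖ * ‖u y - v y‖ := by
  set x := T.base u y
  have hpert : ‖T.pert (x, u x) - T.pert (x, v x)‖ ≤ (κ - ‖T.linear‖) * ‖u x - v x‖ := by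
    have := convex_univ.norm_image_sub_le_of_norm_fderiv_le (𝕜 := ℝ)
      (fun p _ ↦ hT.contDiff_pert.differentiable (by simp) p)
      (fun p _ ↦ le_sub_iff_add_le'.2 (hT.norm_le p)) (mem_univ (x, v x)) (mem_univ (x, u x))
    simpa [Prod.norm_def] using this
  have hfiber : ‖T.fiber u x - T.fiber v x‖ ≤ κ * ‖u x - v x‖ :=
    calc ‖T.fiber u x - T.fiber v x‖
        = ‖T.linear (u x - v x) + (T.pert (x, u x) - T.pert (x, v x))‖ := by
          rw [map_sub, fiber, fiber]
          congr 1
          abel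
      _ ≤ ‖T.linear‖ * ‖u x - v x‖ + (κ - ‖T.linear‖) * ‖u x - v x‖ :=
          norm_add_le_of_le (T.linear.le_opNorm _) hpert
      _ = κ * ‖u x - v x‖ := by ring
  have hbase : ‖T.fiber v x - T.fiber v (T.base v y)‖ ≤ κ * ‖T.drift‖ * ‖u y - v y‖ :=
    calc ‖T.fiber v x - T.fiber v (T.base v y)‖ ≤ κ * ‖x - T.base v y‖ :=
          convex_univ.norm_image_sub_le_of_norm_fderiv_le (𝕜 := ℝ)
            (fun z _ ↦ (hT.contDiff_fiber hv).differentiable (by simp) z)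
            (fun z _ ↦ hT.norm_fderiv_fiber_le_rate (hv.differentiable (by simp)) (hslope z))
            (mem_univ _) (mem_univ _)
      _ = κ * ‖T.drift (u y - v y)‖ := by simp [x, base]
      _ ≤ κ * ‖T.drift‖ * ‖u y - v y‖ := by
          rw [mul_assoc]
          exact mul_le_mul_of_nonneg_left (T.drift.le_opNorm _) hT.rate_nonneg
  simpa [step, x] using norm_add_le_of_le hfiber hbase

lemma IsContracting.exists_norm_iter_succ_sub_iter_le (hT : T.IsContracting κ lam)
    (hτ : T.IsAdapted τ r) (hr : IsTwoSidedWeight lam r) :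
    ∃ C q : ℝ, 0 < q ∧ q < 1 ∧ ∀ m y, ‖T.iter (m + 1) y - T.iter m y‖ ≤ C * q ^ m := by
  obtain ⟨K, hK⟩ := hT.exists_norm_iter_le hτ hr
  obtain ⟨R, hR⟩ := hr.bddAbove
  have hκ := hT.rate_nonneg
  obtain ⟨q, hq, hq1⟩ := exists_between (hT.rate_mul_lt_one hr.one_le)
  refine ⟨|K| * R, q, (by positivity : 0 ≤ κ * (1 + ‖T.drift‖)).trans_lt hq, hq1, fun m ↦ ?_⟩
  induction m with
  | zero =>
    intro y
    simpa [iter_zero] using (hK 1 y).trans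
      (mul_le_mul (le_abs_self K) (hR ⟨_, rfl⟩) (hr.nonneg _) (abs_nonneg K))
  | succ m ih =>
    intro y
    calc ‖T.iter (m + 1 + 1) y - T.iter (m + 1) y‖
        = ‖T.step (T.iter (m + 1)) y - T.step (T.iter m) y‖ := by rw [iter_succ, iter_succ T m]
      _ ≤ κ * (|K| * R * q ^ m) + κ * ‖T.drift‖ * (|K| * R * q ^ m) := by
          refine (hT.norm_step_sub_step_le (hT.contDiff_iter m)
            (hT.norm_fderiv_iter_le_one hr.one_le m) _ y).trans ?_
          gcongr <;> exact ih _
      _ = κ * (1 + ‖T.drift‖) * (|K| * R * q ^ m) := by ring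
      _ ≤ q * (|K| * R * q ^ m) :=
          mul_le_mul_of_nonneg_right hq.le ((norm_nonneg _).trans (ih y))
      _ = |K| * R * q ^ (m + 1) := by ring

lemma IsContracting.tendsto_step_iter (hT : T.IsContracting κ lam) (hlam : 1 ≤ lam)
    (hu : ∀ x, Tendsto (fun m ↦ T.iter m x) atTop (nhds (u x))) (y : X) :
    Tendsto (fun m ↦ T.step (T.iter m) y) atTop (nhds (T.step u y)) := by
  have hdiff (x : X) : Tendsto (fun m ↦ ‖u x - T.iter m x‖) atTop (nhds 0) := by
    simpa using ((hu x).const_sub (u x)).norm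
  have hbound := ((hdiff (T.base u y)).const_mul κ).add ((hdiff y).const_mul (κ * ‖T.drift‖))
  simp only [mul_zero, add_zero] at hbound
  refine tendsto_iff_norm_sub_tendsto_zero.2 (squeeze_zero (fun _ ↦ norm_nonneg _) (fun m ↦ ?_)
    hbound)
  rw [norm_sub_rev]
  exact hT.norm_step_sub_step_le (hT.contDiff_iter m) (hT.norm_fderiv_iter_le_one hlam m) u y

lemma iter_add_period {π : X} (hper : ∀ x w, T.pert (x + π, w) = T.pert (x, w)) (m : ℕ) (y : X) :
    T.iter m (y + π) = T.iter m y := by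
  induction m generalizing y with
  | zero => rfl
  | succ m ih =>
    have hbase : T.base (T.iter m) (y + π) = T.base (T.iter m) y + π := by
      rw [base, base, ih]
      abel
    simp only [iter_succ, step, Function.comp_apply, hbase, fiber, ih, hper]

theorem IsContracting.exists_fixedPoint [CompleteSpace V] (hT : T.IsContracting κ lam)
    (hτ : T.IsAdapted τ r) (hr : IsTwoSidedWeight lam r) :
    ∃ u : X → V, ContDiff ℝ (⊤ : ℕ∞) u ∧
      (∀ k, ∃ C, ∀ x, ‖iteratedFDeriv ℝ k u x‖ ≤ C * r (τ x)) ∧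
      T.step u = u ∧
      ∀ π, (∀ x w, T.pert (x + π, w) = T.pert (x, w)) → ∀ x, u (x + π) = u x := by
  obtain ⟨C, q, hq0, hq1, hgeom⟩ := hT.exists_norm_iter_succ_sub_iter_le hτ hr
  have hweight := hT.exists_norm_iteratedFDeriv_iter_le hτ hr
  have hbdd (k : ℕ) : ∃ M, ∀ m x, ‖iteratedFDeriv ℝ k (T.iter m) x‖ ≤ M := by
    obtain ⟨K, hK⟩ := hweight k
    obtain ⟨R, hR⟩ := hr.bddAbove
    exact ⟨|K| * R, fun m x ↦ (hK m x).trans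
      (mul_le_mul (le_abs_self K) (hR ⟨_, rfl⟩) (hr.nonneg _) (abs_nonneg K))⟩
  obtain ⟨u, hu, hlim⟩ := exists_contDiff_tendsto_iteratedFDeriv hT.contDiff_iter hq0 hq1 hgeom hbdd
  have hlim0 (x : X) : Tendsto (fun m ↦ T.iter m x) atTop (nhds (u x)) :=
    ((continuousMultilinearCurryFin0 ℝ X V).continuous.tendsto _).comp (hlim 0 x)
  refine ⟨u, hu, fun k ↦ ?_, funext fun y ↦ ?_, fun π hπ x ↦ ?_⟩
  · obtain ⟨K, hK⟩ := hweight k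
    exact ⟨K, fun x ↦ le_of_tendsto' (hlim k x).norm fun m ↦ hK m x⟩
  · refine tendsto_nhds_unique (hT.tendsto_step_iter hr.one_le hlim0 y) ?_
    simpa only [Function.comp_def, iter_succ] using (hlim0 y).comp (tendsto_add_atTop_nat 1)
  · refine tendsto_nhds_unique (hlim0 (x + π)) ?_
    simpa only [iter_add_period hπ] using hlim0 x

end GraphTransform

end GraphTransform

section BoundedDerivatives

variable {E F G : Type*} [NormedAddCommGroup E] [NormedSpace ℝ E] [NormedAddCommGroup F]
  [NormedSpace ℝ F] [NormedAddCommGroup G] [NormedSpace ℝ G]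

lemma exists_norm_iteratedFDeriv_le_of_hasCompactSupport_fderiv {f : E → F}
    (hf : ContDiff ℝ (⊤ : ℕ∞) f) (hsupp : HasCompactSupport (fderiv ℝ f))
    (hbdd : ∃ C, ∀ x, ‖f x‖ ≤ C) (n : ℕ) : ∃ C, ∀ x, ‖iteratedFDeriv ℝ n f x‖ ≤ C := by
  cases n with
  | zero => simpa using hbdd
  | succ n =>
    have hf' : ContDiff ℝ n (fderiv ℝ f) := (contDiff_infty.1 hf (n + 1)).fderiv_right le_rfl
    simpa only [norm_iteratedFDeriv_fderiv] using
      (hf'.continuous_iteratedFDeriv le_rfl).bounded_above_of_compact_support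
        (hsupp.iteratedFDeriv n)

lemma norm_iteratedFDeriv_comp_clm_le {f : F → G} {n : ℕ} (hf : ContDiff ℝ n f) {L : E →L[ℝ] F}
    (hL : ‖L‖ ≤ 1) (x : E) : ‖iteratedFDeriv ℝ n (f ∘ L) x‖ ≤ ‖iteratedFDeriv ℝ n f (L x)‖ := by
  rw [L.iteratedFDeriv_comp_right hf x le_rfl]
  refine (ContinuousMultilinearMap.norm_compContinuousLinearMap_le _ _).trans ?_
  rw [Finset.prod_const]
  exact mul_le_of_le_one_right (norm_nonneg _) (pow_le_one₀ (norm_nonneg _) hL)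

variable {χ : E → ℝ} {ε : E → F} {U : Set E}

lemma iteratedFDerivWithin_of_mem_nhds {f : E → F} {n : ℕ} {x : E} (hU : U ∈ nhds x) :
    iteratedFDerivWithin ℝ n f U x = iteratedFDeriv ℝ n f x := by
  rw [iteratedFDerivWithin_congr_set (eventuallyEq_univ.2 hU), iteratedFDerivWithin_univ]

lemma contDiff_smul_of_tsupport (hχ : ContDiff ℝ (⊤ : ℕ∞) χ) (hε : ContDiffOn ℝ (⊤ : ℕ∞) ε U)
    (hsupp : ∀ x ∈ tsupport χ, U ∈ nhds x) : ContDiff ℝ (⊤ : ℕ∞) (fun x ↦ χ x • ε x) :=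
  contDiff_iff_contDiffAt.2 fun x ↦ by
    by_cases hx : x ∈ tsupport χ
    · exact hχ.contDiffAt.smul (hε.contDiffAt (hsupp x hx))
    · exact contDiffAt_const.congr_of_eventuallyEq <| notMem_tsupport_iff_eventuallyEq.1 fun h ↦
        hx (tsupport_smul_subset_left χ ε h)

lemma norm_iteratedFDeriv_smul_le_of_tsupport (hχ : ContDiff ℝ (⊤ : ℕ∞) χ)
    (hε : ContDiffOn ℝ (⊤ : ℕ∞) ε U) (hU : UniqueDiffOn ℝ U)
    (hsupp : ∀ x ∈ tsupport χ, U ∈ nhds x) {B D : ℕ → ℝ} {w : E → ℝ} (hw : ∀ x, 0 ≤ w x)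
    (hB : ∀ i x, ‖iteratedFDeriv ℝ i χ x‖ ≤ B i) (hD0 : ∀ i, 0 ≤ D i)
    (hD : ∀ i, ∀ x ∈ tsupport χ, ‖iteratedFDerivWithin ℝ i ε U x‖ ≤ D i * w x) (n : ℕ) (x : E) :
    ‖iteratedFDeriv ℝ n (fun x ↦ χ x • ε x) x‖ ≤
      (∑ i ∈ Finset.range (n + 1), n.choose i * B i * D (n - i)) * w x := by
  have hB0 (i : ℕ) : 0 ≤ B i := (norm_nonneg _).trans (hB i x)
  by_cases hx : x ∈ tsupport χ
  · have hxU := hsupp x hx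
    rw [← iteratedFDerivWithin_of_mem_nhds hxU, Finset.sum_mul]
    refine (norm_iteratedFDerivWithin_smul_le hχ.contDiffOn hε hU (mem_of_mem_nhds hxU)
      (by exact_mod_cast le_top)).trans (Finset.sum_le_sum fun i _ ↦ ?_)
    rw [mul_assoc (_ * B i), iteratedFDerivWithin_of_mem_nhds (f := χ) hxU]
    gcongr
    exacts [mul_nonneg (Nat.cast_nonneg _) (hB0 i), hB i x, hD _ x hx]
  · have hzero : iteratedFDeriv ℝ n (fun x ↦ χ x • ε x) x = 0 :=
      Function.notMem_support.1 fun h ↦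
        hx (tsupport_smul_subset_left χ ε (support_iteratedFDeriv_subset n h))
    rw [hzero, norm_zero]
    exact mul_nonneg (Finset.sum_nonneg fun i _ ↦ by have := hB0 i; have := hD0 (n - i); positivity)
      (hw x)

end BoundedDerivatives

section ExtendedWeight

/-- The part of `ρ` on `[T, ∞)`, continued to the left by an exponentially growing function with
growth factor `lam` per unit of time. -/
noncomputable def extendedWeight (lam : ℝ) (ρ : ℝ → ℝ) (T t : ℝ) : ℝ :=
  ρ (max t T) * lam ^ min (t - T) 0

variable {lam : ℝ} {ρ : ℝ → ℝ} {T t : ℝ}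

lemma extendedWeight_of_le (ht : T ≤ t) : extendedWeight lam ρ T t = ρ t := by
  simp [extendedWeight, ht]

lemma extendedWeight_nonneg (hlam : 0 ≤ lam) (hρ : ∀ t ∈ Ici T, 0 ≤ ρ t) (t : ℝ) :
    0 ≤ extendedWeight lam ρ T t :=
  mul_nonneg (hρ _ (le_max_right t T)) (Real.rpow_nonneg hlam _)

lemma extendedWeight_le (hlam : 1 ≤ lam) (hρ : AntitoneOn ρ (Ici T)) (hρ0 : ∀ t ∈ Ici T, 0 ≤ ρ t)
    (t : ℝ) : extendedWeight lam ρ T t ≤ ρ T :=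
  calc ρ (max t T) * lam ^ min (t - T) 0 ≤ ρ T * 1 :=
        mul_le_mul (hρ self_mem_Ici (le_max_right t T) (le_max_right t T))
          (Real.rpow_le_one_of_one_le_of_nonpos hlam (min_le_right _ _)) (by positivity)
          (hρ0 T self_mem_Ici)
    _ = ρ T := mul_one _

lemma nonneg_of_antitoneOn_of_tendsto_zero (hρ : AntitoneOn ρ (Ici T))
    (hlim : Tendsto ρ atTop (nhds 0)) : ∀ t ∈ Ici T, 0 ≤ ρ t := fun t ht ↦
  le_of_tendsto hlim <| (eventually_ge_atTop t).mono fun _ hs ↦ hρ ht (le_trans ht hs) hs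

lemma extendedWeight_add_one_le (hlam : 1 ≤ lam) (hρ : AntitoneOn ρ (Ici T))
    (hρ0 : ∀ t ∈ Ici T, 0 ≤ ρ t) (t : ℝ) :
    extendedWeight lam ρ T (t + 1) ≤ lam * extendedWeight lam ρ T t := by
  have hpow : lam ^ min (t + 1 - T) 0 ≤ lam * lam ^ min (t - T) 0 := by
    rw [mul_comm, ← Real.rpow_add_one (by positivity)]
    gcongr
    rcases le_total (t - T) 0 with h | h
    · simp only [min_eq_left h, min_le_iff]
      left; linarith
    · simp [min_eq_right h]
  calc ρ (max (t + 1) T) * lam ^ min (t + 1 - T) 0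
      ≤ ρ (max t T) * (lam * lam ^ min (t - T) 0) := by
        have hmax : max t T ≤ max (t + 1) T := by gcongr; simp
        exact mul_le_mul (hρ (le_max_right t T) (le_max_right _ T) hmax) hpow (by positivity)
          (hρ0 _ (le_max_right t T))
    _ = lam * (ρ (max t T) * lam ^ min (t - T) 0) := by ring

lemma isTwoSidedWeight_extendedWeight (hlam : 1 < lam) (hρ : AntitoneOn ρ (Ici T))
    (hlim : Tendsto ρ atTop (nhds 0)) : IsTwoSidedWeight lam (extendedWeight lam ρ T) := by
  have hρ0 := nonneg_of_antitoneOn_of_tendsto_zero hρ hlim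
  have hlam0 : 0 < lam := zero_lt_one.trans hlam
  refine ⟨hlam.le, extendedWeight_nonneg hlam0.le hρ0, ⟨ρ T, ?_⟩,
    extendedWeight_add_one_le hlam.le hρ hρ0, ?_⟩
  · rintro _ ⟨t, rfl⟩
    exact extendedWeight_le hlam.le hρ hρ0 t
  rw [cocompact_eq_atBot_atTop, tendsto_sup]
  constructor
  · have hexp : Tendsto (fun t ↦ ρ T * lam ^ (t - T)) atBot (nhds 0) := by
      simpa [sub_eq_add_neg] using ((tendsto_rpow_atBot_of_base_gt_one lam hlam).comp
        (tendsto_atBot_add_const_right atBot (-T) tendsto_id)).const_mul (ρ T)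
    refine hexp.congr' ?_
    filter_upwards [eventually_le_atBot T] with t ht
    rw [extendedWeight, max_eq_right ht, min_eq_left (by linarith)]
  · refine hlim.congr' ?_
    filter_upwards [eventually_ge_atTop T] with t ht
    exact (extendedWeight_of_le ht).symm

end ExtendedWeight

section Truncation

lemma hasCompactSupport_fderiv_smoothTransition :
    HasCompactSupport (fderiv ℝ Real.smoothTransition) := by
  refine HasCompactSupport.intro (isCompact_Icc (a := (0 : ℝ)) (b := 1)) fun x hx ↦ ?_
  have hconst : ∃ c : ℝ, Real.smoothTransition =ᶠ[nhds x] fun _ ↦ c := by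
    rcases lt_or_ge x 0 with h0 | h0
    · exact ⟨0, (eventually_lt_nhds h0).mono fun _ hy ↦ Real.smoothTransition.zero_of_nonpos hy.le⟩
    · have h1 : 1 < x := not_le.1 fun h1 ↦ hx ⟨h0, h1⟩
      exact ⟨1, (eventually_gt_nhds h1).mono fun _ hy ↦ Real.smoothTransition.one_of_one_le hy.le⟩
  obtain ⟨c, hc⟩ := hconst
  rw [hc.fderiv_eq, fderiv_const_apply]

/-- A bump function on the fiber `(-1, 1)`, equal to `1` on `[-1/2, 1/2]`. -/
noncomputable def fiberBump : ContDiffBump (0 : ℝ) where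
  rIn := 1 / 2
  rOut := 3 / 4
  rIn_pos := by norm_num
  rIn_lt_rOut := by norm_num

/-- A smooth cutoff function, supported in `pertDomain` for `T > 1`, which localizes to `t ≥ T`.
The transition happens on `T ≤ t ≤ T + 1`, so that the derivatives are bounded uniformly in `T`. -/
noncomputable def cutoff (T : ℝ) (p : ℝ × ℝ × ℝ) : ℝ :=
  Real.smoothTransition (p.1 - T) * fiberBump p.2.2

variable {T : ℝ} {p : ℝ × ℝ × ℝ}

lemma contDiff_cutoff (T : ℝ) : ContDiff ℝ (⊤ : ℕ∞) (cutoff T) :=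
  (Real.smoothTransition.contDiff.comp (contDiff_fst.sub contDiff_const)).mul
    (fiberBump.contDiff.comp (contDiff_snd.comp contDiff_snd))

lemma cutoff_eq_one (ht : T + 1 ≤ p.1) (hz : |p.2.2| ≤ 1 / 2) : cutoff T p = 1 := by
  rw [cutoff, Real.smoothTransition.one_of_one_le (by linarith),
    fiberBump.one_of_mem_closedBall (by simpa [fiberBump] using hz), one_mul]

lemma tsupport_cutoff_subset (T : ℝ) : tsupport (cutoff T) ⊆ {p | T ≤ p.1 ∧ |p.2.2| ≤ 3 / 4} := by
  refine closure_minimal (fun p hp ↦ ?_) ?_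
  · rw [Function.mem_support, cutoff, mul_ne_zero_iff] at hp
    constructor
    · by_contra! ht
      exact hp.1 (Real.smoothTransition.zero_of_nonpos (by linarith))
    · by_contra! hz
      exact hp.2 (fiberBump.zero_of_le_dist (by simpa [fiberBump] using hz.le))
  · exact (isClosed_le continuous_const continuous_fst).inter
      (isClosed_le (continuous_abs.comp (continuous_snd.comp continuous_snd)) continuous_const)

lemma pertDomain_mem_nhds (hT : 1 < T) (hp : p ∈ tsupport (cutoff T)) : pertDomain ∈ nhds p := by
  obtain ⟨ht, hz⟩ := tsupport_cutoff_subset T hp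
  have hz' := abs_le.1 hz
  exact prod_mem_nhds (Ici_mem_nhds (hT.trans_le ht))
    (prod_mem_nhds univ_mem (Ioo_mem_nhds (by linarith) (by linarith)))

lemma exists_norm_iteratedFDeriv_cutoff_le (n : ℕ) :
    ∃ C, ∀ T p, ‖iteratedFDeriv ℝ n (cutoff T) p‖ ≤ C := by
  have hσ : ContDiff ℝ (⊤ : ℕ∞) Real.smoothTransition := Real.smoothTransition.contDiff
  have hβ : ContDiff ℝ (⊤ : ℕ∞) fiberBump := fiberBump.contDiff
  choose B hB using exists_norm_iteratedFDeriv_le_of_hasCompactSupport_fderiv hσ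
    hasCompactSupport_fderiv_smoothTransition
    ⟨1, fun x ↦ abs_le.2 ⟨by linarith [Real.smoothTransition.nonneg x],
      Real.smoothTransition.le_one x⟩⟩
  choose D hD using exists_norm_iteratedFDeriv_le_of_hasCompactSupport_fderiv hβ
    (fiberBump.hasCompactSupport.fderiv ℝ)
    ⟨1, fun x ↦ abs_le.2 ⟨by linarith [fiberBump.nonneg (x := x)], fiberBump.le_one⟩⟩
  let time := ContinuousLinearMap.fst ℝ ℝ (ℝ × ℝ)
  let fiber := (ContinuousLinearMap.snd ℝ ℝ ℝ).comp (ContinuousLinearMap.snd ℝ ℝ (ℝ × ℝ))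
  have htime : ‖time‖ ≤ 1 := ContinuousLinearMap.norm_fst_le ..
  have hfiber : ‖fiber‖ ≤ 1 := ContinuousLinearMap.opNorm_le_bound _ zero_le_one fun p ↦ by
    simpa [fiber] using (norm_snd_le p.2).trans (norm_snd_le p)
  refine ⟨∑ i ∈ Finset.range (n + 1), n.choose i * B i * D (n - i), fun T p ↦ ?_⟩
  have htranslate : cutoff T = fun q ↦ ((Real.smoothTransition ∘ time) * (fiberBump ∘ fiber))
      (q - (T, 0, 0)) := by
    ext q
    simp [cutoff, time, fiber]
  rw [htranslate, iteratedFDeriv_comp_sub]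
  refine (norm_iteratedFDeriv_mul_le (hσ.comp time.contDiff) (hβ.comp fiber.contDiff) _
    (by exact_mod_cast le_top)).trans (Finset.sum_le_sum fun i _ ↦ ?_)
  have hσi := (norm_iteratedFDeriv_comp_clm_le (contDiff_infty.1 hσ i) htime _).trans
    (hB i (time (p - (T, 0, 0))))
  have hβi := (norm_iteratedFDeriv_comp_clm_le (contDiff_infty.1 hβ (n - i)) hfiber _).trans
    (hD (n - i) (fiber (p - (T, 0, 0))))
  have hBi := (norm_nonneg _).trans hσi
  gcongr

variable {F : Type*} [NormedAddCommGroup F] [NormedSpace ℝ F] {ε : ℝ × ℝ × ℝ → F} {ρ : ℝ → ℝ}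
  {lam : ℝ}

/-- The perturbation `ε` localized to `t ≥ T` and extended by zero to the whole space. -/
noncomputable def truncate (T : ℝ) (ε : ℝ × ℝ × ℝ → F) (p : ℝ × ℝ × ℝ) : F := cutoff T p • ε p

lemma truncate_eq (ht : T + 1 ≤ p.1) (hz : |p.2.2| ≤ 1 / 2) : truncate T ε p = ε p := by
  rw [truncate, cutoff_eq_one ht hz, one_smul]

lemma contDiff_truncate (hT : 1 < T) (hε : ContDiffOn ℝ (⊤ : ℕ∞) ε pertDomain) :
    ContDiff ℝ (⊤ : ℕ∞) (truncate T ε) :=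
  contDiff_smul_of_tsupport (contDiff_cutoff T) hε fun _ ↦ pertDomain_mem_nhds hT

lemma uniqueDiffOn_pertDomain : UniqueDiffOn ℝ pertDomain :=
  (uniqueDiffOn_Ici 1).prod (uniqueDiffOn_univ.prod (uniqueDiffOn_Ioo _ _))

lemma exists_norm_iteratedFDeriv_truncate_le (hε : ContDiffOn ℝ (⊤ : ℕ∞) ε pertDomain)
    (hbound : ∀ n, ∃ C, ∀ p ∈ pertDomain, ‖iteratedFDerivWithin ℝ n ε pertDomain p‖ ≤ C * ρ p.1)
    (hlam : 0 ≤ lam) (hρ0 : ∀ t ∈ Ici 1, 0 ≤ ρ t) (n : ℕ) :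
    ∃ C, 0 ≤ C ∧ ∀ T, 1 < T → ∀ p,
      ‖iteratedFDeriv ℝ n (truncate T ε) p‖ ≤ C * extendedWeight lam ρ T p.1 := by
  choose B hB using exists_norm_iteratedFDeriv_cutoff_le
  choose D hD using hbound
  have hB0 (i : ℕ) : 0 ≤ B i := (norm_nonneg _).trans (hB i 0 0)
  refine ⟨∑ i ∈ Finset.range (n + 1), n.choose i * B i * |D (n - i)|,
    Finset.sum_nonneg fun i _ ↦ by have := hB0 i; positivity, fun T hT p ↦ ?_⟩
  refine norm_iteratedFDeriv_smul_le_of_tsupport (contDiff_cutoff T) hε uniqueDiffOn_pertDomain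
    (fun _ ↦ pertDomain_mem_nhds hT) (w := fun q ↦ extendedWeight lam ρ T q.1)
    (fun q ↦ extendedWeight_nonneg hlam (fun t ht ↦ hρ0 t (hT.le.trans ht)) q.1)
    (fun i ↦ hB i T) (D := fun i ↦ |D i|) (fun i ↦ abs_nonneg _) (fun i q hq ↦ ?_) n p
  have hTq : T ≤ q.1 := (tsupport_cutoff_subset T hq).1
  have hρq : 0 ≤ ρ q.1 := hρ0 _ (hT.le.trans hTq)
  rw [extendedWeight_of_le hTq]
  refine (hD i q (mem_of_mem_nhds (pertDomain_mem_nhds hT hq))).trans ?_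
  gcongr
  exact le_abs_self _

lemma eventually_norm_fderiv_truncate_le (hε : ContDiffOn ℝ (⊤ : ℕ∞) ε pertDomain)
    (hbound : ∀ n, ∃ C, ∀ p ∈ pertDomain, ‖iteratedFDerivWithin ℝ n ε pertDomain p‖ ≤ C * ρ p.1)
    (hρ : AntitoneOn ρ (Ici 1)) (hlim : Tendsto ρ atTop (nhds 0)) {δ : ℝ} (hδ : 0 < δ) :
    ∀ᶠ T in atTop, ∀ p, ‖fderiv ℝ (truncate T ε) p‖ ≤ δ := by
  have hρ0 := nonneg_of_antitoneOn_of_tendsto_zero hρ hlim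
  obtain ⟨C, hC0, hC⟩ :=
    exists_norm_iteratedFDeriv_truncate_le hε hbound zero_le_one hρ0 1
  have hsmall : ∀ᶠ T in atTop, C * ρ T < δ := by
    have := hlim.const_mul C
    rw [mul_zero] at this
    exact this.eventually_lt_const hδ
  filter_upwards [hsmall, eventually_gt_atTop 1] with T hT hT1 p
  have hsub : Ici T ⊆ Ici 1 := Ici_subset_Ici.2 hT1.le
  calc ‖fderiv ℝ (truncate T ε) p‖ ≤ C * extendedWeight 1 ρ T p.1 := by
        simpa only [norm_iteratedFDeriv_one] using hC T hT1 p
    _ ≤ C * ρ T := by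
        gcongr
        exact extendedWeight_le le_rfl (hρ.mono hsub) (fun t ht ↦ hρ0 t (hsub ht)) _
    _ ≤ δ := hT.le

end Truncation

section ModelMap

/-- The coordinates `((t, φ), w) ↦ (t, φ, z)` with `z = w.1 / 16`. -/
noncomputable def modelPoint : (ℝ × ℝ) × (ℝ × ℝ) →L[ℝ] ℝ × ℝ × ℝ :=
  ((ContinuousLinearMap.fst ℝ ℝ ℝ).comp (ContinuousLinearMap.fst ℝ (ℝ × ℝ) (ℝ × ℝ))).prod
    (((ContinuousLinearMap.snd ℝ ℝ ℝ).comp (ContinuousLinearMap.fst ℝ (ℝ × ℝ) (ℝ × ℝ))).prod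
      ((1 / 16 : ℝ) •
        (ContinuousLinearMap.fst ℝ ℝ ℝ).comp (ContinuousLinearMap.snd ℝ (ℝ × ℝ) (ℝ × ℝ))))

/-- The contribution of `e = (ε₁, ε₂)` to the fiber map in `modelTransform`. -/
noncomputable def modelForcing : ℝ × ℝ →L[ℝ] ℝ × ℝ :=
  ((16 : ℝ) • ContinuousLinearMap.snd ℝ ℝ ℝ).prod ((-8 : ℝ) • ContinuousLinearMap.fst ℝ ℝ ℝ)

/-- The graph transform of `(t, φ, z) ↦ (t - 1, φ + a - z + e.1, z / 2 + e.2)`. The base map at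
`y` inverts the model map and so depends on `z - e.1` at the preimage of `y`. To make it explicit,
the unknown `w` carries this quantity along: `w.1 = 16 * z` at `y`, and `w.2 = 8 * (z - e.1)` at the
preimage of `y`. The factors `16` and `8` make the drift small. -/
noncomputable def modelTransform (a : ℝ) (e : ℝ × ℝ × ℝ → ℝ × ℝ) :
    GraphTransform (ℝ × ℝ) (ℝ × ℝ) where
  shift := (1, -a)
  drift := (1 / 8 : ℝ) • (ContinuousLinearMap.inr ℝ ℝ ℝ).comp (ContinuousLinearMap.snd ℝ ℝ ℝ)
  linear := (1 / 2 : ℝ) • (ContinuousLinearMap.fst ℝ ℝ ℝ).prod (ContinuousLinearMap.fst ℝ ℝ ℝ)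
  pert := modelForcing ∘ e ∘ modelPoint

lemma modelPoint_apply (p : (ℝ × ℝ) × (ℝ × ℝ)) :
    modelPoint p = (p.1.1, p.1.2, p.2.1 / 16) := by
  simp [modelPoint, div_eq_inv_mul]

lemma norm_modelPoint_le : ‖modelPoint‖ ≤ 1 := by
  refine ContinuousLinearMap.opNorm_le_bound _ zero_le_one fun p ↦ ?_
  have hw : ‖p.2.1 / 16‖ ≤ ‖p.2.1‖ := by
    rw [norm_div]
    exact div_le_self (norm_nonneg _) (by norm_num)
  rw [modelPoint_apply, one_mul, norm_prod_le_iff, norm_prod_le_iff]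
  exact ⟨(norm_fst_le p.1).trans (norm_fst_le p), (norm_snd_le p.1).trans (norm_fst_le p),
    hw.trans ((norm_fst_le p.2).trans (norm_snd_le p))⟩

lemma norm_modelForcing_le : ‖modelForcing‖ ≤ 16 := by
  refine ContinuousLinearMap.opNorm_le_bound _ (by norm_num) fun e ↦ ?_
  have h1 := norm_fst_le e
  have h2 := norm_snd_le e
  refine norm_prod_le_iff.2 ⟨?_, ?_⟩
  · simpa [modelForcing] using h2
  · have : |e.1| * 8 ≤ ‖e‖ * 16 := by rw [Real.norm_eq_abs] at h1; linarith [abs_nonneg e.1]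
    simpa [modelForcing, mul_comm] using this

variable {a : ℝ} {e : ℝ × ℝ × ℝ → ℝ × ℝ} {u : ℝ × ℝ → ℝ × ℝ}

lemma norm_drift_modelTransform_le : ‖(modelTransform a e).drift‖ ≤ 1 / 8 := by
  refine ContinuousLinearMap.opNorm_le_bound _ (by norm_num) fun w ↦ ?_
  simpa [modelTransform, norm_smul] using norm_snd_le w

lemma norm_linear_modelTransform_le : ‖(modelTransform a e).linear‖ ≤ 1 / 2 := by
  refine ContinuousLinearMap.opNorm_le_bound _ (by norm_num) fun w ↦ ?_
  simpa [modelTransform, norm_smul] using norm_fst_le w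

lemma base_modelTransform (t ψ : ℝ) :
    (modelTransform a e).base u (t, ψ) = (t + 1, ψ - a + (u (t, ψ)).2 / 8) := by
  simp [GraphTransform.base, modelTransform, sub_eq_add_neg, div_eq_inv_mul]

lemma fiber_modelTransform (t φ : ℝ) : (modelTransform a e).fiber u (t, φ) =
    ((u (t, φ)).1 / 2 + 16 * (e (t, φ, (u (t, φ)).1 / 16)).2,
      (u (t, φ)).1 / 2 - 8 * (e (t, φ, (u (t, φ)).1 / 16)).1) := by
  simp [GraphTransform.fiber, modelTransform, modelPoint_apply, modelForcing, sub_eq_add_neg,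
    div_eq_inv_mul]

lemma norm_iteratedFDeriv_pert_modelTransform_le (he : ContDiff ℝ (⊤ : ℕ∞) e) (n : ℕ)
    (p : (ℝ × ℝ) × (ℝ × ℝ)) :
    ‖iteratedFDeriv ℝ n (modelTransform a e).pert p‖ ≤
      16 * ‖iteratedFDeriv ℝ n e (modelPoint p)‖ := by
  have hn := contDiff_infty.1 he n
  calc ‖iteratedFDeriv ℝ n (modelForcing ∘ e ∘ modelPoint) p‖
      ≤ ‖modelForcing‖ * ‖iteratedFDeriv ℝ n (e ∘ modelPoint) p‖ :=
        modelForcing.norm_iteratedFDeriv_comp_left (hn.comp modelPoint.contDiff).contDiffAt le_rfl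
    _ ≤ 16 * ‖iteratedFDeriv ℝ n e (modelPoint p)‖ := by
        gcongr
        exacts [norm_modelForcing_le, norm_iteratedFDeriv_comp_clm_le hn norm_modelPoint_le p]

lemma isContracting_modelTransform (he : ContDiff ℝ (⊤ : ℕ∞) e)
    (hsmall : ∀ p, ‖fderiv ℝ e p‖ ≤ 1 / 128) :
    (modelTransform a e).IsContracting (5 / 8) (5 / 4) where
  contDiff_pert := modelForcing.contDiff.comp (he.comp modelPoint.contDiff)
  norm_le p := by
    have hpert := norm_iteratedFDeriv_pert_modelTransform_le (a := a) he 1 p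
    rw [norm_iteratedFDeriv_one, norm_iteratedFDeriv_one] at hpert
    linarith [hsmall (modelPoint p), norm_linear_modelTransform_le (a := a) (e := e)]
  gap := by linarith [norm_drift_modelTransform_le (a := a) (e := e)]

lemma isAdapted_modelTransform {r : ℝ → ℝ} (he : ContDiff ℝ (⊤ : ℕ∞) e)
    (hbound : ∀ n, ∃ C, ∀ p, ‖iteratedFDeriv ℝ n e p‖ ≤ C * r p.1) :
    (modelTransform a e).IsAdapted Prod.fst r where
  map_base y w := by simp [modelTransform]
  norm_pert_le n := by
    obtain ⟨C, hC⟩ := hbound n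
    refine ⟨16 * C, fun p ↦ (norm_iteratedFDeriv_pert_modelTransform_le he n p).trans ?_⟩
    rw [mul_assoc]
    gcongr
    simpa [modelPoint_apply] using hC (modelPoint p)

lemma norm_iteratedFDeriv_fst_div_le {n : ℕ} (hu : ContDiff ℝ n u) (p : ℝ × ℝ) :
    ‖iteratedFDeriv ℝ n (fun q ↦ (u q).1 / 16) p‖ ≤ ‖iteratedFDeriv ℝ n u p‖ := by
  let π : ℝ × ℝ →L[ℝ] ℝ := (1 / 16 : ℝ) • ContinuousLinearMap.fst ℝ ℝ ℝ
  have hπ : ‖π‖ ≤ 1 := by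
    calc ‖π‖ ≤ 1 / 16 * 1 := by
          rw [norm_smul, Real.norm_of_nonneg (by norm_num)]
          gcongr
          exact ContinuousLinearMap.norm_fst_le ..
      _ ≤ 1 := by norm_num
  have hcomp : (fun q ↦ (u q).1 / 16) = π ∘ u := by
    ext q
    simp [π, div_eq_inv_mul]
  rw [hcomp]
  exact (π.norm_iteratedFDeriv_comp_left hu.contDiffAt le_rfl).trans
    (mul_le_of_le_one_left (norm_nonneg _) hπ)

lemma invariant_of_step_modelTransform_eq (hu : Continuous u) (hbdd : ∃ K, ∀ x, ‖u x‖ ≤ K)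
    (hfix : (modelTransform a e).step u = u) (t φ : ℝ) :
    (u (t - 1, φ + a - (u (t, φ)).1 / 16 + (e (t, φ, (u (t, φ)).1 / 16)).1)).1 / 16 =
      (u (t, φ)).1 / 16 / 2 + (e (t, φ, (u (t, φ)).1 / 16)).2 := by
  obtain ⟨K, hK⟩ := hbdd
  have hK2 (ψ : ℝ) : |(u (t - 1, ψ)).2| ≤ K := (norm_snd_le _).trans (hK _)
  obtain ⟨ψ, hψ⟩ : ∃ ψ, ψ - a + (u (t - 1, ψ)).2 / 8 = φ := by
    refine mem_range_of_exists_le_of_exists_ge (f := fun ψ ↦ ψ - a + (u (t - 1, ψ)).2 / 8)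
      (by fun_prop) ⟨φ + a - K / 8, ?_⟩ ⟨φ + a + K / 8, ?_⟩
    · linarith [(abs_le.1 (hK2 (φ + a - K / 8))).2]
    · linarith [(abs_le.1 (hK2 (φ + a + K / 8))).1]
  have heq : u (t - 1, ψ) = (modelTransform a e).fiber u (t, φ) := by
    conv_lhs => rw [← hfix]
    rw [GraphTransform.step, Function.comp_apply, base_modelTransform, sub_add_cancel, hψ]
  rw [fiber_modelTransform, Prod.ext_iff] at heq
  obtain ⟨h1, h2⟩ := heq
  dsimp only at h1 h2
  have hpoint : φ + a - (u (t, φ)).1 / 16 + (e (t, φ, (u (t, φ)).1 / 16)).1 = ψ := by linarith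
  rw [hpoint]
  linarith

end ModelMap

section InvariantGraph

variable {ρ : ℝ → ℝ}

lemma IsWeightFunction.antitoneOn (hρ : IsWeightFunction ρ) : AntitoneOn ρ (Ici 0) := by
  have hd : DifferentiableOn ℝ ρ (Ici 0) := hρ.1.differentiableOn (by simp)
  refine antitoneOn_of_deriv_nonpos (convex_Ici 0) hd.continuousOn (hd.mono interior_subset) ?_
  intro x hx
  rw [interior_Ici] at hx
  rw [← derivWithin_of_mem_nhds (Ici_mem_nhds hx)]
  exact hρ.2.2.1 x (mem_Ici.2 (le_of_lt hx))

lemma IsDecayingPert.exists_norm_iteratedFDerivWithin_prodMk_le {ε₁ ε₂ : ℝ × ℝ × ℝ → ℝ}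
    (hε₁ : IsDecayingPert ρ ε₁) (hε₂ : IsDecayingPert ρ ε₂) (n : ℕ) :
    ∃ C, ∀ p ∈ pertDomain,
      ‖iteratedFDerivWithin ℝ n (fun q ↦ (ε₁ q, ε₂ q)) pertDomain p‖ ≤ C * ρ p.1 := by
  obtain ⟨C₁, hC₁⟩ := hε₁.2.2 n
  obtain ⟨C₂, hC₂⟩ := hε₂.2.2 n
  refine ⟨C₁ + C₂, fun p hp ↦ ?_⟩
  have hn : (n : WithTop ℕ∞) ≤ ((⊤ : ℕ∞) : WithTop ℕ∞) := by exact_mod_cast le_top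
  rw [iteratedFDerivWithin_prodMk (hε₁.1 p hp) (hε₂.1 p hp) uniqueDiffOn_pertDomain hp hn,
    ContinuousMultilinearMap.opNorm_prod, add_mul]
  exact (max_le_add_of_nonneg (norm_nonneg _) (norm_nonneg _)).trans
    (add_le_add (hC₁ p hp) (hC₂ p hp))

lemma exists_invariant_graph_truncate (a : ℝ) (hρ : AntitoneOn ρ (Ici 1))
    (hlim : Tendsto ρ atTop (nhds 0)) {ε : ℝ × ℝ × ℝ → ℝ × ℝ}
    (hε : ContDiffOn ℝ (⊤ : ℕ∞) ε pertDomain)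
    (hbound : ∀ n, ∃ C, ∀ p ∈ pertDomain, ‖iteratedFDerivWithin ℝ n ε pertDomain p‖ ≤ C * ρ p.1) :
    ∃ T, 1 < T ∧ ∃ h : ℝ × ℝ → ℝ, ContDiff ℝ (⊤ : ℕ∞) h ∧
      (∀ n, ∃ C, ∀ p, ‖iteratedFDeriv ℝ n h p‖ ≤ C * extendedWeight (5 / 4) ρ T p.1) ∧
      (∀ c, (∀ t φ z, ε (t, φ + c, z) = ε (t, φ, z)) → ∀ t φ, h (t, φ + c) = h (t, φ)) ∧
      ∀ t φ, h (t - 1, φ + a - h (t, φ) + (truncate T ε (t, φ, h (t, φ))).1) =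
        h (t, φ) / 2 + (truncate T ε (t, φ, h (t, φ))).2 := by
  obtain ⟨T, hsmall, hT⟩ := ((eventually_norm_fderiv_truncate_le hε hbound hρ hlim
    (by norm_num : (0 : ℝ) < 1 / 128)).and (eventually_gt_atTop 1)).exists
  have he : ContDiff ℝ (⊤ : ℕ∞) (truncate T ε) := contDiff_truncate hT hε
  have hr : IsTwoSidedWeight (5 / 4) (extendedWeight (5 / 4) ρ T) :=
    isTwoSidedWeight_extendedWeight (by norm_num) (hρ.mono (Ici_subset_Ici.2 hT.le)) hlim
  have hadapted : (modelTransform a (truncate T ε)).IsAdapted Prod.fst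
      (extendedWeight (5 / 4) ρ T) := isAdapted_modelTransform he fun n ↦
    let ⟨C, _, hC⟩ := exists_norm_iteratedFDeriv_truncate_le hε hbound
      (by norm_num : (0 : ℝ) ≤ 5 / 4) (nonneg_of_antitoneOn_of_tendsto_zero hρ hlim) n
    ⟨C, hC T hT⟩
  obtain ⟨u, hu, hdecay, hfix, hper⟩ :=
    (isContracting_modelTransform he hsmall).exists_fixedPoint hadapted hr
  have hbdd : ∃ K, ∀ x, ‖u x‖ ≤ K := by
    obtain ⟨C, hC⟩ := hdecay 0
    obtain ⟨R, hR⟩ := hr.bddAbove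
    refine ⟨|C| * R, fun x ↦ ?_⟩
    calc ‖u x‖ ≤ C * extendedWeight (5 / 4) ρ T x.1 := by simpa using hC x
      _ ≤ |C| * R := mul_le_mul (le_abs_self C) (hR (mem_range_self _)) (hr.nonneg _) (abs_nonneg C)
  refine ⟨T, hT, fun p ↦ (u p).1 / 16, (contDiff_fst.comp hu).div_const _, fun n ↦ ?_,
    fun c hc t φ ↦ ?_, invariant_of_step_modelTransform_eq hu.continuous hbdd hfix⟩
  · obtain ⟨C, hC⟩ := hdecay n
    exact ⟨C, fun p ↦ (norm_iteratedFDeriv_fst_div_le (contDiff_infty.1 hu n) p).trans (hC p)⟩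
  · have hpert := hper (0, c) fun ⟨t, φ⟩ w ↦ by
      simp [modelTransform, modelPoint_apply, truncate, cutoff, hc]
    simpa using congrArg (fun w : ℝ × ℝ ↦ w.1 / 16) (hpert (t, φ))

lemma exists_abs_le_half_of_decay {h : ℝ × ℝ → ℝ} {lam T : ℝ} (hlim : Tendsto ρ atTop (nhds 0))
    (hdecay : ∃ C, ∀ p, |h p| ≤ C * extendedWeight lam ρ T p.1) :
    ∃ t₀, T + 1 ≤ t₀ ∧ ∀ p : ℝ × ℝ, t₀ ≤ p.1 → |h p| ≤ 1 / 2 := by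
  obtain ⟨C, hC⟩ := hdecay
  have hsmall : ∀ᶠ t in atTop, C * ρ t < 1 / 2 := by
    have := hlim.const_mul C
    rw [mul_zero] at this
    exact this.eventually_lt_const (by norm_num)
  obtain ⟨t₀, ht₀⟩ := eventually_atTop.1 hsmall
  refine ⟨max t₀ (T + 1), le_max_right _ _, fun p hp ↦ ?_⟩
  obtain ⟨hp₀, hpT⟩ := max_le_iff.1 hp
  calc |h p| ≤ C * extendedWeight lam ρ T p.1 := hC p
    _ = C * ρ p.1 := by rw [extendedWeight_of_le (by linarith)]
    _ ≤ 1 / 2 := (ht₀ p.1 hp₀).le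

theorem exists_invariant_graph_general (a : ℝ) (ρ : ℝ → ℝ) (hρ : AntitoneOn ρ (Ici 1))
    (hlim : Tendsto ρ atTop (nhds 0)) (ε₁ ε₂ : ℝ × ℝ × ℝ → ℝ) (hε₁ : IsDecayingPert ρ ε₁)
    (hε₂ : IsDecayingPert ρ ε₂) :
    ∃ t₀ : ℝ, 1 ≤ t₀ ∧ ∃ h : ℝ × ℝ → ℝ,
      (∀ p : ℝ × ℝ, t₀ ≤ p.1 → h p ∈ Ioo (-1:ℝ) 1) ∧
      ContDiffOn ℝ (⊤ : ℕ∞) h (Ici t₀ ×ˢ (univ : Set ℝ)) ∧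
      (∀ t φ : ℝ, h (t, φ + 2 * Real.pi) = h (t, φ)) ∧
      (∀ n : ℕ, ∃ C : ℝ, ∀ p ∈ Ici t₀ ×ˢ (univ : Set ℝ),
        ‖iteratedFDerivWithin ℝ n h (Ici t₀ ×ˢ (univ : Set ℝ)) p‖ ≤ C * ρ p.1) ∧
      ∀ t φ : ℝ, t₀ + 1 ≤ t →
        h (t - 1, φ + a - h (t, φ) + ε₁ (t, φ, h (t, φ)))
          = h (t, φ) / 2 + ε₂ (t, φ, h (t, φ)) := by
  obtain ⟨T, hT, h, hh, hdecay, hper, hinv⟩ := exists_invariant_graph_truncate a hρ hlim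
    (hε₁.1.prodMk hε₂.1) (hε₁.exists_norm_iteratedFDerivWithin_prodMk_le hε₂)
  obtain ⟨t₀, hTt₀, hsmall⟩ := exists_abs_le_half_of_decay hlim (by simpa using hdecay 0)
  refine ⟨t₀, by linarith, h, fun p hp ↦ abs_lt.1 ((hsmall p hp).trans_lt (by norm_num)),
    hh.contDiffOn, hper _ fun t φ z ↦ by rw [hε₁.2.1, hε₂.2.1], fun n ↦ ?_, fun t φ ht ↦ ?_⟩
  · obtain ⟨C, hC⟩ := hdecay n
    refine ⟨C, fun p hp ↦ ?_⟩
    rw [iteratedFDerivWithin_eq_iteratedFDeriv ((uniqueDiffOn_Ici t₀).prod uniqueDiffOn_univ)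
      (contDiff_infty.1 hh n).contDiffAt hp]
    have hTp : T ≤ p.1 := by linarith [show t₀ ≤ p.1 from hp.1]
    simpa only [extendedWeight_of_le hTp] using hC p
  · have htrunc := truncate_eq (ε := fun q ↦ (ε₁ q, ε₂ q)) (p := (t, φ, h (t, φ)))
      (by linarith : T + 1 ≤ t) (hsmall (t, φ) (by linarith))
    simpa only [htrunc] using hinv t φ

end InvariantGraph

/-- Existence of the invariant graph for the perturbation
`f(t,φ,z) = (t-1, φ + a - z + ε₁(t,φ,z), z/2 + ε₂(t,φ,z))` of the model map
`f₀(t,φ,z) = (t-1, φ + a - z, z/2)` on `ℝ × 𝕊¹ × (-1,1)`: there are `t₀ ≥ 1` and a smooth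
`2π`-periodic function `h : [t₀,∞) × ℝ → (-1,1)`, with all derivatives `O(ρ(t))`, whose graph
is `f`-invariant. -/
theorem exists_invariant_graph (a : ℝ) (ρ : ℝ → ℝ) (hρ : IsWeightFunction ρ)
    (ε₁ ε₂ : ℝ × ℝ × ℝ → ℝ) (hε₁ : IsDecayingPert ρ ε₁) (hε₂ : IsDecayingPert ρ ε₂) :
    ∃ t₀ : ℝ, 1 ≤ t₀ ∧ ∃ h : ℝ × ℝ → ℝ,
      (∀ p : ℝ × ℝ, t₀ ≤ p.1 → h p ∈ Ioo (-1:ℝ) 1) ∧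
      ContDiffOn ℝ (⊤ : ℕ∞) h (Ici t₀ ×ˢ (univ : Set ℝ)) ∧
      (∀ t φ : ℝ, h (t, φ + 2 * Real.pi) = h (t, φ)) ∧
      (∀ n : ℕ, ∃ C : ℝ, ∀ p ∈ Ici t₀ ×ˢ (univ : Set ℝ),
        ‖iteratedFDerivWithin ℝ n h (Ici t₀ ×ˢ (univ : Set ℝ)) p‖ ≤ C * ρ p.1) ∧
      ∀ t φ : ℝ, t₀ + 1 ≤ t →
        h (t - 1, φ + a - h (t, φ) + ε₁ (t, φ, h (t, φ)))
          = h (t, φ) / 2 + ε₂ (t, φ, h (t, φ)) := by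
  exact exists_invariant_graph_general a ρ (hρ.antitoneOn.mono (Ici_subset_Ici.2 zero_le_one))
    hρ.2.2.2.1 ε₁ ε₂ hε₁ hε₂
end

section
/- Let a ∈ ℝ, let ρ be a weight function, and let ε₁, ε₂ and f be as follows: ε₁, ε₂ : [1,∞) × ℝ × (−1,1) → ℝ are smooth, 2π-periodic in the second variable, with all partial derivatives bounded by constants times ρ(t), and f(t,φ,z) := (t−1, φ + a − z + ε₁(t,φ,z), z/2 + ε₂(t,φ,z)). Suppose h₁ : [t₁,∞) × ℝ → (−1,1) and h₂ : [t₂,∞) × ℝ → (−1,1) are C¹ functions, 2π-periodic in the second variable, satisfying |h_i(t,φ)| + |∂_t h_i(t,φ)| + |∂_φ h_i(t,φ)| ≤ C ρ(t) for some constant C, and each satisfying the invariance identity h_i(t−1, φ + a − h_i(t,φ) + ε₁(t,φ,h_i(t,φ))) = h_i(t,φ)/2 + ε₂(t,φ,h_i(t,φ)) for all t in its domain with t−1 also in its domain. Then h₁ = h₂ on [max(t₁,t₂),∞) × ℝ. -/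
open Set Filter

/-- A `C¹`, `2π`-periodic candidate invariant graph `h : [t₁,∞) × ℝ → (-1,1)`, of `C¹`-size
`O(ρ(t))`, whose graph is invariant under
`f(t,φ,z) = (t-1, φ + a - z + ε₁(t,φ,z), z/2 + ε₂(t,φ,z))`. -/
def IsC1InvariantGraph (a : ℝ) (ε₁ ε₂ : ℝ × ℝ × ℝ → ℝ) (ρ : ℝ → ℝ) (t₁ : ℝ)
    (h : ℝ × ℝ → ℝ) : Prop :=
  (∀ p : ℝ × ℝ, t₁ ≤ p.1 → h p ∈ Ioo (-1:ℝ) 1) ∧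
  ContDiffOn ℝ 1 h (Ici t₁ ×ˢ (univ : Set ℝ)) ∧
  (∀ t φ : ℝ, h (t, φ + 2 * Real.pi) = h (t, φ)) ∧
  (∃ C : ℝ, ∀ p ∈ Ici t₁ ×ˢ (univ : Set ℝ),
    |h p| + ‖fderivWithin ℝ h (Ici t₁ ×ˢ (univ : Set ℝ)) p‖ ≤ C * ρ p.1) ∧
  ∀ t φ : ℝ, t₁ + 1 ≤ t →
    h (t - 1, φ + a - h (t, φ) + ε₁ (t, φ, h (t, φ)))
      = h (t, φ) / 2 + ε₂ (t, φ, h (t, φ))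

/-!
Run the graphs towards `t = +∞`, where the perturbations and the slope of `h₂` are small. Every
point over `t` is the image of a point on the graph of `h₁` over `t + 1`, because the angular map
along that graph is a bounded continuous perturbation of the identity and hence onto. Comparing the
images of the two points of the graphs above the same angle shows that the uniform distance of the
two graphs over `t` is at most `c < 1` times the one over `t + 1`. The graphs are uniformly bounded,
so iterating gives equality for all large `t`, and surjectivity carries the equality back to
smaller `t`.
-/

open Bornology Function Metric
open scoped NNReal Topology

/-- The map `(x, z) ↦ (g x z, k x z)` sends the graph of `u` into the graph of `v`. With `g` and `k`
the two components of a fiber map, this is one step of invariance of a family of graphs. -/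
def GraphMapsTo {X Y Z W : Type*} (g : X → Z → Y) (k : X → Z → W) (u : X → Z) (v : Y → W) : Prop :=
  ∀ x, v (g x (u x)) = k x (u x)

namespace GraphMapsTo

variable {X Y Z W : Type*} {g : X → Z → Y} {k : X → Z → W}

lemma eq_of_surjective {u : X → Z} {v₁ v₂ : Y → W} (h₁ : GraphMapsTo g k u v₁)
    (h₂ : GraphMapsTo g k u v₂) (hsurj : Surjective fun x ↦ g x (u x)) : v₁ = v₂ :=
  hsurj.injective_comp_right (funext fun x ↦ (h₁ x).trans (h₂ x).symm)

lemma dist_le [PseudoMetricSpace Y] [PseudoMetricSpace Z] [PseudoMetricSpace W]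
    {u₁ u₂ : X → Z} {v₁ v₂ : Y → W} {s : Set Z} {K L M : ℝ≥0} {D : ℝ}
    (h₁ : GraphMapsTo g k u₁ v₁) (h₂ : GraphMapsTo g k u₂ v₂)
    (hsurj : Surjective fun x ↦ g x (u₁ x)) (hu₁ : ∀ x, u₁ x ∈ s) (hu₂ : ∀ x, u₂ x ∈ s)
    (hg : ∀ x, LipschitzOnWith M (g x) s) (hk : ∀ x, LipschitzOnWith K (k x) s)
    (hv₂ : LipschitzWith L v₂) (hD : ∀ x, dist (u₁ x) (u₂ x) ≤ D) (y : Y) :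
    dist (v₁ y) (v₂ y) ≤ (K + L * M) * D := by
  obtain ⟨x, rfl⟩ := hsurj y
  calc dist (v₁ (g x (u₁ x))) (v₂ (g x (u₁ x)))
      ≤ dist (v₁ (g x (u₁ x))) (v₂ (g x (u₂ x))) + dist (v₂ (g x (u₂ x))) (v₂ (g x (u₁ x))) :=
        dist_triangle _ _ _
    _ = dist (k x (u₁ x)) (k x (u₂ x)) + dist (v₂ (g x (u₁ x))) (v₂ (g x (u₂ x))) := by
        rw [h₁ x, h₂ x, dist_comm (v₂ _)]
    _ ≤ K * dist (u₁ x) (u₂ x) + L * (M * dist (u₁ x) (u₂ x)) := by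
        gcongr
        · exact (hk x).dist_le_mul _ (hu₁ x) _ (hu₂ x)
        · exact (hv₂.dist_le_mul _ _).trans <| by
            gcongr
            exact (hg x).dist_le_mul _ (hu₁ x) _ (hu₂ x)
    _ = (K + L * M) * dist (u₁ x) (u₂ x) := by ring
    _ ≤ (K + L * M) * D := by gcongr; exact hD x

end GraphMapsTo

section Sequences

variable {X Z : Type*} {g : ℕ → X → Z → X} {k : ℕ → X → Z → Z} {u v : ℕ → X → Z}

lemma eq_of_graphMapsTo_of_le_of_eq
    (hu : ∀ n, GraphMapsTo (g n) (k n) (u (n + 1)) (u n))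
    (hv : ∀ n, GraphMapsTo (g n) (k n) (v (n + 1)) (v n))
    (hsurj : ∀ n, Surjective fun x ↦ g n x (u (n + 1) x)) {m n : ℕ} (hmn : m ≤ n)
    (hn : u n = v n) : u m = v m := by
  induction n, hmn using Nat.le_induction with
  | base => exact hn
  | succ n _ ih => exact ih ((hu n).eq_of_surjective (hn ▸ hv n) (hsurj n))

variable [PseudoMetricSpace X] {s : Set Z} {K L M : ℝ≥0}

lemma dist_le_pow_mul_of_graphMapsTo [PseudoMetricSpace Z] {N : ℕ} {D : ℝ}
    (hu : ∀ n, GraphMapsTo (g n) (k n) (u (n + 1)) (u n))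
    (hv : ∀ n, GraphMapsTo (g n) (k n) (v (n + 1)) (v n))
    (hsurj : ∀ n, Surjective fun x ↦ g n x (u (n + 1) x))
    (hus : ∀ n x, u n x ∈ s) (hvs : ∀ n x, v n x ∈ s)
    (hg : ∀ n ≥ N, ∀ x, LipschitzOnWith M (g n x) s)
    (hk : ∀ n ≥ N, ∀ x, LipschitzOnWith K (k n x) s)
    (hvL : ∀ n ≥ N, LipschitzWith L (v n)) (hD : ∀ n x, dist (u n x) (v n x) ≤ D)
    (m : ℕ) {n : ℕ} (hn : N ≤ n) (x : X) :
    dist (u n x) (v n x) ≤ (K + L * M) ^ m * D := by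
  induction m generalizing n x with
  | zero => simpa using hD n x
  | succ m ih =>
    rw [pow_succ', mul_assoc]
    exact (hu n).dist_le (hv n) (hsurj n) (hus (n + 1)) (hvs (n + 1)) (hg n hn) (hk n hn)
      (hvL n hn) (ih (Nat.le_succ_of_le hn)) x

lemma eq_of_graphMapsTo_of_lipschitz [MetricSpace Z] (hKLM : K + L * M < 1) (hs : IsBounded s)
    (hu : ∀ n, GraphMapsTo (g n) (k n) (u (n + 1)) (u n))
    (hv : ∀ n, GraphMapsTo (g n) (k n) (v (n + 1)) (v n))
    (hsurj : ∀ n, Surjective fun x ↦ g n x (u (n + 1) x))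
    (hus : ∀ n x, u n x ∈ s) (hvs : ∀ n x, v n x ∈ s)
    (hg : ∀ᶠ n in atTop, ∀ x, LipschitzOnWith M (g n x) s)
    (hk : ∀ᶠ n in atTop, ∀ x, LipschitzOnWith K (k n x) s)
    (hvL : ∀ᶠ n in atTop, LipschitzWith L (v n)) :
    u = v := by
  obtain ⟨N, hN⟩ := eventually_atTop.1 (hg.and (hk.and hvL))
  have hlim : Tendsto (fun m : ℕ ↦ ((K + L * M : ℝ≥0) : ℝ) ^ m * diam s) atTop (𝓝 0) := by
    simpa using (tendsto_pow_atTop_nhds_zero_of_lt_one (NNReal.coe_nonneg _)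
      (NNReal.coe_lt_one.2 hKLM)).mul_const (diam s)
  have heq (n : ℕ) (hn : N ≤ n) : u n = v n := by
    refine funext fun x ↦ dist_le_zero.1 <| ge_of_tendsto' hlim fun m ↦ ?_
    simpa using dist_le_pow_mul_of_graphMapsTo hu hv hsurj hus hvs (fun n hn ↦ (hN n hn).1)
      (fun n hn ↦ (hN n hn).2.1) (fun n hn ↦ (hN n hn).2.2)
      (fun n x ↦ dist_le_diam_of_mem hs (hus n x) (hvs n x)) m hn x
  exact funext fun m ↦ eq_of_graphMapsTo_of_le_of_eq hu hv hsurj (le_max_right N m)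
    (heq _ (le_max_left N m))

end Sequences

lemma surjective_self_add_of_abs_le {u : ℝ → ℝ} {B : ℝ} (hu : Continuous u)
    (hB : ∀ x, |u x| ≤ B) : Surjective fun x ↦ x + u x :=
  (continuous_id.add hu).surjective
    (tendsto_atTop_add_right_of_le _ (-B) tendsto_id fun x ↦ neg_le_of_abs_le (hB x))
    (tendsto_atBot_add_right_of_ge _ B tendsto_id fun x ↦ le_of_abs_le (hB x))

lemma surjective_self_add_of_continuousOn {Z : Type*} [TopologicalSpace Z] {s : Set Z}
    {g : ℝ → Z → ℝ} {u : ℝ → Z} {B : ℝ} (hg : ContinuousOn (uncurry g) (univ ×ˢ s))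
    (hB : ∀ φ, ∀ z ∈ s, |g φ z| ≤ B) (hu : Continuous u) (hus : ∀ φ, u φ ∈ s) :
    Surjective fun φ ↦ φ + g φ (u φ) :=
  surjective_self_add_of_abs_le
    (hg.comp_continuous (continuous_id.prodMk hu) fun φ ↦ ⟨mem_univ φ, hus φ⟩)
    fun φ ↦ hB φ _ (hus φ)

theorem invariant_graph_unique_general {Z : Type*} [MetricSpace Z] {s : Set Z} {K L M : ℝ≥0}
    (hKLM : K + L * M < 1) (hs : IsBounded s) {g : ℝ → ℝ → Z → ℝ} {k : ℝ → ℝ → Z → Z} {t₀ : ℝ}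
    {h₁ h₂ : ℝ → ℝ → Z} (hs₁ : ∀ t ≥ t₀, ∀ φ, h₁ t φ ∈ s) (hs₂ : ∀ t ≥ t₀, ∀ φ, h₂ t φ ∈ s)
    (hinv₁ : ∀ t ≥ t₀, GraphMapsTo (fun φ z ↦ φ + g (t + 1) φ z) (k (t + 1)) (h₁ (t + 1)) (h₁ t))
    (hinv₂ : ∀ t ≥ t₀, GraphMapsTo (fun φ z ↦ φ + g (t + 1) φ z) (k (t + 1)) (h₂ (t + 1)) (h₂ t))
    (hgc : ∀ t ≥ t₀ + 1, ContinuousOn (uncurry (g t)) (univ ×ˢ s))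
    (hgb : ∀ t ≥ t₀ + 1, ∃ B, ∀ φ, ∀ z ∈ s, |g t φ z| ≤ B)
    (hg : ∀ᶠ t in atTop, ∀ φ, LipschitzOnWith M (g t φ) s)
    (hk : ∀ᶠ t in atTop, ∀ φ, LipschitzOnWith K (k t φ) s)
    (hc₁ : ∀ t ≥ t₀ + 1, Continuous (h₁ t)) (hL₂ : ∀ᶠ t in atTop, LipschitzWith L (h₂ t)) :
    ∀ t ≥ t₀, h₁ t = h₂ t := by
  intro t ht
  have ht' (n : ℕ) : t₀ ≤ t + n := le_add_of_le_of_nonneg ht n.cast_nonneg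
  have hsucc (n : ℕ) : t₀ + 1 ≤ t + n + 1 := by linarith [ht' n]
  have hcast (n : ℕ) : t + (n + 1 : ℕ) = t + n + 1 := by push_cast; ring
  have hlim : Tendsto (fun n : ℕ ↦ t + n) atTop atTop :=
    tendsto_atTop_add_const_left _ t tendsto_natCast_atTop_atTop
  have hlim' : Tendsto (fun n : ℕ ↦ t + n + 1) atTop atTop := tendsto_atTop_add_const_right _ 1 hlim
  have hsurj (n : ℕ) : Surjective fun φ ↦ φ + g (t + n + 1) φ (h₁ (t + n + 1) φ) := by
    obtain ⟨B, hB⟩ := hgb _ (hsucc n)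
    exact surjective_self_add_of_continuousOn (hgc _ (hsucc n)) hB (hc₁ _ (hsucc n))
      (hs₁ _ (by linarith [hsucc n]))
  have hg' : ∀ᶠ t in atTop, ∀ φ, LipschitzOnWith M (fun z ↦ φ + g t φ z) s :=
    hg.mono fun t ht φ ↦ by simpa only [LipschitzOnWith, edist_add_left] using ht φ
  have heq : (fun n : ℕ ↦ h₁ (t + n)) = fun n : ℕ ↦ h₂ (t + n) :=
    eq_of_graphMapsTo_of_lipschitz hKLM hs
      (fun n ↦ by simpa only [hcast] using hinv₁ _ (ht' n))
      (fun n ↦ by simpa only [hcast] using hinv₂ _ (ht' n))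
      (fun n ↦ by simpa only [hcast] using hsurj n)
      (fun n ↦ hs₁ _ (ht' n)) (fun n ↦ hs₂ _ (ht' n))
      (hlim'.eventually hg') (hlim'.eventually hk) (hlim.eventually hL₂)
  simpa using congrFun heq 0

lemma lipschitzOnWith_of_norm_fderivWithin_le {E F : Type*} [NormedAddCommGroup E]
    [NormedSpace ℝ E] [NormedAddCommGroup F] [NormedSpace ℝ F] {f : E → F} {s t : Set E} {C : ℝ≥0}
    (hf : DifferentiableOn ℝ f s) (hts : t ⊆ s) (ht : Convex ℝ t)
    (hC : ∀ x ∈ t, ‖fderivWithin ℝ f s x‖ ≤ C) : LipschitzOnWith C f t :=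
  ht.lipschitzOnWith_of_nnnorm_hasFDerivWithin_le
    (fun x hx ↦ ((hf x (hts hx)).hasFDerivWithinAt).mono hts) hC

lemma eventually_lipschitzOnWith_slice {E F : Type*} [NormedAddCommGroup E] [NormedSpace ℝ E]
    [NormedAddCommGroup F] [NormedSpace ℝ F] {f : ℝ × E → F} {s : Set (ℝ × E)} {ρ : ℝ → ℝ} {C : ℝ}
    {K : ℝ≥0} (hf : DifferentiableOn ℝ f s) (hC : ∀ p ∈ s, ‖fderivWithin ℝ f s p‖ ≤ C * ρ p.1)
    (hρ : Tendsto ρ atTop (𝓝 0)) (hK : 0 < K) :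
    ∀ᶠ t in atTop, ∀ u : Set E, Convex ℝ u → {t} ×ˢ u ⊆ s →
      LipschitzOnWith K (fun x ↦ f (t, x)) u := by
  have hlim : Tendsto (fun t ↦ C * ρ t) atTop (𝓝 0) := by simpa using hρ.const_mul C
  filter_upwards [hlim.eventually_le_const (NNReal.coe_pos.2 hK)] with t ht u hu hus
  have hlip : LipschitzOnWith K f ({t} ×ˢ u) :=
    lipschitzOnWith_of_norm_fderivWithin_le hf hus ((convex_singleton t).prod hu)
      fun p hp ↦ (hC p (hus hp)).trans (by rwa [show p.1 = t from hp.1])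
  simpa [comp_def] using
    hlip.comp (LipschitzWith.prodMk_left t).lipschitzOnWith fun x hx ↦ ⟨rfl, hx⟩

namespace IsDecayingPert

variable {ρ : ℝ → ℝ} {ε : ℝ × ℝ × ℝ → ℝ}

lemma exists_abs_le (hε : IsDecayingPert ρ ε) : ∃ C, ∀ p ∈ pertDomain, |ε p| ≤ C * ρ p.1 := by
  simpa only [norm_iteratedFDerivWithin_zero, Real.norm_eq_abs] using hε.2.2 0

lemma exists_norm_fderivWithin_le (hε : IsDecayingPert ρ ε) :
    ∃ C, ∀ p ∈ pertDomain, ‖fderivWithin ℝ ε pertDomain p‖ ≤ C * ρ p.1 := by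
  have hdom : UniqueDiffOn ℝ pertDomain :=
    (uniqueDiffOn_Ici 1).prod (uniqueDiffOn_univ.prod (uniqueDiffOn_Ioo _ _))
  obtain ⟨C, hC⟩ := hε.2.2 1
  exact ⟨C, fun p hp ↦ norm_iteratedFDerivWithin_one ε (hdom p hp) ▸ hC p hp⟩

lemma eventually_lipschitzOnWith (hε : IsDecayingPert ρ ε) (hρ : Tendsto ρ atTop (𝓝 0)) {K : ℝ≥0}
    (hK : 0 < K) :
    ∀ᶠ t in atTop, ∀ φ, LipschitzOnWith K (fun z ↦ ε (t, φ, z)) (Ioo (-1) 1) := by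
  obtain ⟨C, hC⟩ := hε.exists_norm_fderivWithin_le
  filter_upwards [eventually_ge_atTop 1,
    eventually_lipschitzOnWith_slice (hε.1.differentiableOn (by simp)) hC hρ hK] with t ht hlip φ
  have hsub : ({t} ×ˢ {φ} ×ˢ Ioo (-1) 1 : Set (ℝ × ℝ × ℝ)) ⊆ pertDomain :=
    prod_mono (singleton_subset_iff.2 ht) (prod_mono_left (subset_univ _))
  simpa [comp_def] using (hlip _ ((convex_singleton φ).prod (convex_Ioo _ _)) hsub).comp
    (LipschitzWith.prodMk_left φ).lipschitzOnWith fun z hz ↦ ⟨rfl, hz⟩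

end IsDecayingPert

/-- The displacement of the angle `φ` under the map `f`; it is real-valued because `f` acts on the
lift of `S¹` to `ℝ`. -/
def angleShift (a : ℝ) (ε₁ : ℝ × ℝ × ℝ → ℝ) (t φ z : ℝ) : ℝ := a - z + ε₁ (t, φ, z)

/-- The `z`-component of the map `f`. -/
noncomputable def fiberMap (ε₂ : ℝ × ℝ × ℝ → ℝ) (t φ z : ℝ) : ℝ := z / 2 + ε₂ (t, φ, z)

section Model

variable {ρ : ℝ → ℝ} {ε : ℝ × ℝ × ℝ → ℝ} {t : ℝ}

lemma continuousOn_angleShift (a : ℝ) (hε : ContinuousOn ε pertDomain) (ht : 1 ≤ t) :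
    ContinuousOn (uncurry (angleShift a ε t)) (univ ×ˢ Ioo (-1) 1) :=
  (by fun_prop : Continuous fun q : ℝ × ℝ ↦ a - q.2).continuousOn.add <|
    hε.comp (by fun_prop : Continuous fun q : ℝ × ℝ ↦ (t, q)).continuousOn fun _ hq ↦ ⟨ht, hq⟩

lemma exists_abs_angleShift_le (a : ℝ) (hε : IsDecayingPert ρ ε) (ht : 1 ≤ t) :
    ∃ B, ∀ φ, ∀ z ∈ Ioo (-1 : ℝ) 1, |angleShift a ε t φ z| ≤ B := by
  obtain ⟨C, hC⟩ := hε.exists_abs_le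
  refine ⟨|a| + 1 + C * ρ t, fun φ z hz ↦ ?_⟩
  calc |a - z + ε (t, φ, z)| ≤ |a| + |z| + |ε (t, φ, z)| :=
        (abs_add_le _ _).trans (by gcongr; exact abs_sub _ _)
    _ ≤ |a| + 1 + C * ρ t := by
        gcongr
        · exact (abs_lt.2 hz).le
        · exact hC (t, φ, z) ⟨ht, mem_univ φ, hz⟩

lemma lipschitzOnWith_angleShift (a : ℝ) {K : ℝ≥0} {s : Set ℝ} {φ : ℝ}
    (hε : LipschitzOnWith K (fun z ↦ ε (t, φ, z)) s) :
    LipschitzOnWith (1 + K) (angleShift a ε t φ) s := by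
  have hlin : LipschitzWith 1 fun z : ℝ ↦ a - z := by
    simpa using (LipschitzWith.const a).sub LipschitzWith.id
  exact hlin.lipschitzOnWith.add hε

lemma lipschitzOnWith_fiberMap {K : ℝ≥0} {s : Set ℝ} {φ : ℝ}
    (hε : LipschitzOnWith K (fun z ↦ ε (t, φ, z)) s) :
    LipschitzOnWith (1 / 2 + K) (fiberMap ε t φ) s := by
  have hlin : LipschitzWith (1 / 2) fun z : ℝ ↦ z / 2 :=
    LipschitzWith.of_dist_le_mul fun x y ↦ by
      simp [Real.dist_eq, ← sub_div, abs_div, inv_mul_eq_div]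
  exact hlin.lipschitzOnWith.add hε

end Model

namespace IsC1InvariantGraph

variable {a t₁ t : ℝ} {ε₁ ε₂ : ℝ × ℝ × ℝ → ℝ} {ρ : ℝ → ℝ} {h : ℝ × ℝ → ℝ}

lemma mem_Ioo (hh : IsC1InvariantGraph a ε₁ ε₂ ρ t₁ h) (ht : t₁ ≤ t) (φ : ℝ) :
    h (t, φ) ∈ Ioo (-1) 1 :=
  hh.1 (t, φ) ht

lemma continuous_curry (hh : IsC1InvariantGraph a ε₁ ε₂ ρ t₁ h) (ht : t₁ ≤ t) :
    Continuous (curry h t) :=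
  hh.2.1.continuousOn.comp_continuous (Continuous.prodMk_right t) fun φ ↦ ⟨ht, mem_univ φ⟩

lemma graphMapsTo (hh : IsC1InvariantGraph a ε₁ ε₂ ρ t₁ h) (ht : t₁ ≤ t) :
    GraphMapsTo (fun φ z ↦ φ + angleShift a ε₁ (t + 1) φ z) (fiberMap ε₂ (t + 1))
      (curry h (t + 1)) (curry h t) := fun φ ↦ by
  simpa [angleShift, fiberMap, add_sub_assoc, add_assoc] using
    hh.2.2.2.2 (t + 1) φ (by gcongr)

lemma eventually_lipschitzWith (hh : IsC1InvariantGraph a ε₁ ε₂ ρ t₁ h)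
    (hρ : Tendsto ρ atTop (𝓝 0)) {L : ℝ≥0} (hL : 0 < L) :
    ∀ᶠ t in atTop, LipschitzWith L (curry h t) := by
  obtain ⟨-, hd, -, ⟨C, hC⟩, -⟩ := hh
  filter_upwards [eventually_ge_atTop t₁,
    eventually_lipschitzOnWith_slice (hd.differentiableOn one_ne_zero)
      (fun p hp ↦ (le_add_of_nonneg_left (abs_nonneg _)).trans (hC p hp)) hρ hL] with t ht hlip
  exact lipschitzOnWith_univ.1 <|
    hlip univ convex_univ (prod_mono_left (singleton_subset_iff.2 ht))

end IsC1InvariantGraph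

/-- Uniqueness of the invariant graph: two `C¹` invariant graphs of `C¹`-size `O(ρ(t))` for the
perturbed map `f` agree on the common part of their domains. -/
theorem invariant_graph_unique (a : ℝ) (ρ : ℝ → ℝ) (hρ : IsWeightFunction ρ)
    (ε₁ ε₂ : ℝ × ℝ × ℝ → ℝ) (hε₁ : IsDecayingPert ρ ε₁) (hε₂ : IsDecayingPert ρ ε₂)
    (t₁ t₂ : ℝ) (ht₁ : 1 ≤ t₁) (ht₂ : 1 ≤ t₂) (h₁ h₂ : ℝ × ℝ → ℝ)
    (hh₁ : IsC1InvariantGraph a ε₁ ε₂ ρ t₁ h₁)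
    (hh₂ : IsC1InvariantGraph a ε₁ ε₂ ρ t₂ h₂) :
    ∀ t φ : ℝ, max t₁ t₂ ≤ t → h₁ (t, φ) = h₂ (t, φ) := by
  have hρ₀ : Tendsto ρ atTop (𝓝 0) := hρ.2.2.2.1
  have hg : ∀ᶠ t in atTop, ∀ φ, LipschitzOnWith (1 + 1) (angleShift a ε₁ t φ) (Ioo (-1) 1) :=
    (hε₁.eventually_lipschitzOnWith hρ₀ one_pos).mono fun t hε φ ↦
      lipschitzOnWith_angleShift a (hε φ)
  have hk : ∀ᶠ t in atTop, ∀ φ, LipschitzOnWith (1 / 2 + 1 / 8) (fiberMap ε₂ t φ) (Ioo (-1) 1) :=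
    (hε₂.eventually_lipschitzOnWith hρ₀ (by norm_num)).mono fun t hε φ ↦
      lipschitzOnWith_fiberMap (hε φ)
  have hL : ∀ᶠ t in atTop, LipschitzWith (1 / 8) (curry h₂ t) :=
    hh₂.eventually_lipschitzWith hρ₀ (by norm_num)
  have heq : ∀ t ≥ max t₁ t₂, curry h₁ t = curry h₂ t :=
    invariant_graph_unique_general (by norm_num) (isBounded_Ioo (-1) 1)
      (fun t ht ↦ hh₁.mem_Ioo (le_of_max_le_left ht))
      (fun t ht ↦ hh₂.mem_Ioo (le_of_max_le_right ht))
      (fun t ht ↦ hh₁.graphMapsTo (le_of_max_le_left ht))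
      (fun t ht ↦ hh₂.graphMapsTo (le_of_max_le_right ht))
      (fun t ht ↦ continuousOn_angleShift a hε₁.1.continuousOn (by grind))
      (fun t ht ↦ exists_abs_angleShift_le a hε₁ (by grind)) hg hk
      (fun t ht ↦ hh₁.continuous_curry (by grind)) hL
  exact fun t φ ht ↦ congrFun (heq t ht) φ
end

section
/- Let a ∈ ℝ, let ρ and ρ̃ be weight functions, let ε₁, ε₂ : [1,∞) × ℝ × (−1,1) → ℝ be smooth, 2π-periodic in the second variable, with all partial derivatives bounded by constants times ρ(t), and set f(t,φ,z) := (t−1, φ + a − z + ε₁(t,φ,z), z/2 + ε₂(t,φ,z)). Let t₀ ≥ 1 and h : [t₀,∞) × ℝ → (−1,1) be the invariant graph (2π-periodic in φ, with all derivatives O(ρ(t)), whose graph is f-invariant). Let h̃₀ : [t₀,∞) × ℝ → (−1,1) be any C¹ function, 2π-periodic in the second variable, with |h̃₀(t,φ)| + |∂_t h̃₀(t,φ)| + |∂_φ h̃₀(t,φ)| ≤ ρ̃(t). Then, possibly after increasing t₀, the following holds: for each n ∈ ℕ, the set f(graph(h̃_n)) ∩ {t ≥ t₀} is again the graph of a C¹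 function h̃_{n+1} : [t₀,∞) × ℝ → (−1,1), 2π-periodic in the second variable, and sup_{t ≥ t₀, φ ∈ ℝ} |h̃_n(t,φ) − h(t,φ)| → 0 as n → ∞. -/
open Set Filter

/-- The perturbed map `f(t,φ,z) = (t-1, φ + a - z + ε₁(t,φ,z), z/2 + ε₂(t,φ,z))`. -/
noncomputable def pertMap (a : ℝ) (ε₁ ε₂ : ℝ × ℝ × ℝ → ℝ) (p : ℝ × ℝ × ℝ) : ℝ × ℝ × ℝ :=
  (p.1 - 1, p.2.1 + a - p.2.2 + ε₁ p, p.2.2 / 2 + ε₂ p)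

/-- The graph `{(t, φ, g(t,φ)) : t ≥ t₀}` of a function `g`. -/
def graphSet (t₀ : ℝ) (g : ℝ × ℝ → ℝ) : Set (ℝ × ℝ × ℝ) :=
  {p : ℝ × ℝ × ℝ | t₀ ≤ p.1 ∧ p.2.2 = g (p.1, p.2.1)}

/-!
Over a graph of small slope the base map `x ↦ x + u(t, x, g(t, x))` is a Lipschitz-small
perturbation of the identity, hence a bijection of each fiber with `C¹` inverse, so the image of
the graph is again a graph; its slope stays small because heights are contracted. Now push forward
the points of the graph of `g` and of the invariant graph `h` over one base point: the images
differ by at most `δ ‖g - h‖` in height and by at most `β ‖g - h‖` horizontally, and sliding along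
`h` to the same base point costs at most `L β ‖g - h‖`. As `t → ∞` the constant `δ` approaches the
contraction rate of the model map while the slope `L` can be taken arbitrarily small, so for large
`t` the graph transform contracts distances by the factor `δ + L β < 1`.
-/

open scoped NNReal ContDiff Topology

section PerturbationOfIdentity

theorem one_sub_mul_norm_sub_le_of_lipschitzWith {E : Type*} [SeminormedAddCommGroup E]
    {r : E → E} {K : ℝ≥0} (hr : LipschitzWith K r) (x y : E) :
    (1 - K) * ‖x - y‖ ≤ ‖(x + r x) - (y + r y)‖ := by
  have triangle : ‖x - y‖ ≤ ‖(x + r x) - (y + r y)‖ + ‖r x - r y‖ :=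
    calc ‖x - y‖ = ‖((x + r x) - (y + r y)) - (r x - r y)‖ := by congr 1; abel
      _ ≤ _ := norm_sub_le _ _
  linarith [hr.norm_sub_le x y]

theorem injective_id_add_of_lipschitzWith {E : Type*} [NormedAddCommGroup E] {r : E → E} {K : ℝ≥0}
    (hK : K < 1) (hr : LipschitzWith K r) : Function.Injective fun x => x + r x := by
  intro x y hxy
  have hK' : 0 < 1 - (K : ℝ) := sub_pos.2 (mod_cast hK)
  have hle : (1 - K) * ‖x - y‖ ≤ 0 := by
    simpa [sub_eq_zero.2 hxy] using one_sub_mul_norm_sub_le_of_lipschitzWith hr x y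
  exact sub_eq_zero.1 (norm_le_zero_iff.1 (nonpos_of_mul_nonpos_right hle hK'))

theorem bijective_id_add_of_lipschitzWith {E : Type*} [NormedAddCommGroup E] [CompleteSpace E]
    {r : E → E} {K : ℝ≥0} (hK : K < 1) (hr : LipschitzWith K r) :
    Function.Bijective fun x => x + r x := by
  refine ⟨injective_id_add_of_lipschitzWith hK hr, fun y => ?_⟩
  have hcontr : ContractingWith K fun x => y - r x :=
    ⟨hK, by simpa using (LipschitzWith.const y).sub hr⟩
  exact ⟨hcontr.fixedPoint, eq_sub_iff_add_eq.1 hcontr.fixedPoint_isFixedPt.eq.symm⟩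

variable {𝕜 P E : Type*} [RCLike 𝕜] [NormedAddCommGroup P] [NormedSpace 𝕜 P] [CompleteSpace P]
  [NormedAddCommGroup E] [NormedSpace 𝕜 E] [CompleteSpace E]

theorem isInvertible_id_add_of_norm_lt_one {A : E →L[𝕜] E} (hA : ‖A‖ < 1) :
    (ContinuousLinearMap.id 𝕜 E + A).IsInvertible := by
  obtain ⟨e, he⟩ := isUnit_one_sub_of_norm_lt_one (x := -A) (by rwa [norm_neg])
  refine ⟨ContinuousLinearEquiv.unitsEquiv 𝕜 E e, ?_⟩
  ext x
  simp [he]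

theorem contDiffAt_fiberwise_inverse_id_add {n : ℕ∞ω} (hn : n ≠ 0) {K : ℝ≥0} (hK : K < 1)
    {S : Set P} (hS : IsOpen S) {r σ : P × E → E}
    (hlip : ∀ p ∈ S, LipschitzWith K fun x => r (p, x))
    (hσ : ∀ p ∈ S, ∀ y, σ (p, y) + r (p, σ (p, y)) = y) {p : P} (hp : p ∈ S) {y : E}
    (hr : ContDiffAt 𝕜 n r (p, σ (p, y))) : ContDiffAt 𝕜 n σ (p, y) := by
  let f : (P × E) × E → E := fun q => q.2 + r (q.1.1, q.2) - q.1.2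
  let q₀ : (P × E) × E := ((p, y), σ (p, y))
  have hf : ContDiffAt 𝕜 n f q₀ :=
    (contDiffAt_snd.add (ContDiffAt.comp q₀ (f := fun q : (P × E) × E => (q.1.1, q.2)) hr
      (by fun_prop))).sub (by fun_prop)
  have hf₀ : f q₀ = 0 := sub_eq_zero.2 (hσ p hp y)
  have hfiber : fderiv 𝕜 f q₀ ∘L .inr 𝕜 (P × E) E =
      .id 𝕜 E + fderiv 𝕜 (fun x => r (p, x)) (σ (p, y)) := by
    have hrx : DifferentiableAt 𝕜 (fun x => r (p, x)) (σ (p, y)) :=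
      DifferentiableAt.comp (σ (p, y)) (f := fun x => (p, x)) (hr.differentiableAt hn)
        (by fun_prop)
    have hleft := (hf.differentiableAt hn).hasFDerivAt.comp (σ (p, y))
      (hasFDerivAt_prodMk_right (𝕜 := 𝕜) (p, y) (σ (p, y)))
    exact hleft.unique (((hasFDerivAt_id _).add hrx.hasFDerivAt).sub_const y)
  have hinv : (fderiv 𝕜 f q₀ ∘L .inr 𝕜 (P × E) E).IsInvertible := by
    rw [hfiber]
    exact isInvertible_id_add_of_norm_lt_one
      ((norm_fderiv_le_of_lipschitz 𝕜 (hlip p hp)).trans_lt (mod_cast hK))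
  refine (hf.contDiffAt_implicitFunction hn hinv).congr_of_eventuallyEq ?_
  filter_upwards [hf.eventually_apply_implicitFunction hn hinv,
    (hS.prod isOpen_univ).mem_nhds (show (p, y) ∈ S ×ˢ univ from ⟨hp, mem_univ y⟩)]
    with q hq hqS
  refine injective_id_add_of_lipschitzWith hK (hlip q.1 hqS.1) ((hσ q.1 hqS.1 q.2).trans ?_)
  exact (sub_eq_zero.1 (hq.trans hf₀)).symm

end PerturbationOfIdentity

section GraphTransform

variable {E F G : Type*}

/-- The skew product `(t, x, z) ↦ (t - 1, x + u(t, x, z), v(t, x, z))`, of which `pertMap` is the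
case `u = a - z + ε₁`, `v = z / 2 + ε₂`. -/
def skewMap [Add E] (u : ℝ × E × F → E) (v : ℝ × E × F → F) (q : ℝ × E × F) : ℝ × E × F :=
  (q.1 - 1, q.2.1 + u q, v q)

/-- The point of the graph of `g` lying over the base point `(t, x)`. -/
def graphPoint (g : ℝ × E → F) (p : ℝ × E) : ℝ × E × F := (p.1, p.2, g p)

/-- The map `{t} × E → {t - 1} × E` of base fibers obtained by lifting to the graph of `g` and
applying a skew product with base displacement `u`. -/
def baseMap [Add E] (u : ℝ × E × F → E) (g : ℝ × E → F) (t : ℝ) (x : E) : E :=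
  x + u (graphPoint g (t, x))

/-- The inverse of `baseMap u g`, fiber by fiber; meaningful on fibers where that map is
bijective. -/
noncomputable def baseInverse [Add E] [Nonempty E] (u : ℝ × E × F → E) (g : ℝ × E → F)
    (p : ℝ × E) : E :=
  Function.invFun (baseMap u g p.1) p.2

open scoped Classical in
/-- The graph transform: the function whose graph is the image of the graph of `g` under
`skewMap u v`. It takes the value `0` over the fibers onto which `baseMap u g` is not bijective, so
that periodicity is preserved there as well. -/
noncomputable def graphTransform [Add E] [Nonempty E] [Zero F] (u : ℝ × E × F → E)
    (v : ℝ × E × F → F) (g : ℝ × E → F) (p : ℝ × E) : F :=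
  if Function.Bijective (baseMap u g (p.1 + 1)) then
    v (graphPoint g (p.1 + 1, baseInverse u g (p.1 + 1, p.2)))
  else 0

section Algebra

variable [AddCommGroup E] {u : ℝ × E × F → E} {v : ℝ × E × F → F} {g : ℝ × E → F} {t : ℝ}

theorem baseMap_baseInverse (hbij : Function.Bijective (baseMap u g t)) (y : E) :
    baseMap u g t (baseInverse u g (t, y)) = y :=
  Function.rightInverse_invFun hbij.surjective y

theorem baseInverse_baseMap (hbij : Function.Bijective (baseMap u g t)) (x : E) :
    baseInverse u g (t, baseMap u g t x) = x :=
  Function.leftInverse_invFun hbij.injective x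

variable [Zero F]

theorem graphTransform_of_bijective (hbij : Function.Bijective (baseMap u g (t + 1))) (y : E) :
    graphTransform u v g (t, y) = v (graphPoint g (t + 1, baseInverse u g (t + 1, y))) :=
  if_pos hbij

theorem graphTransform_baseMap (hbij : Function.Bijective (baseMap u g (t + 1))) (x : E) :
    graphTransform u v g (t, baseMap u g (t + 1) x) = v (graphPoint g (t + 1, x)) := by
  rw [graphTransform_of_bijective hbij, baseInverse_baseMap hbij]

theorem image_skewMap_graph {T : ℝ}
    (hbij : ∀ t, T ≤ t → Function.Bijective (baseMap u g (t + 1))) :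
    skewMap u v '' {q | T ≤ q.1 ∧ q.2.2 = g (q.1, q.2.1)} ∩ {q | T ≤ q.1} =
      {q | T ≤ q.1 ∧ q.2.2 = graphTransform u v g (q.1, q.2.1)} := by
  ext ⟨s, y, w⟩
  constructor
  · rintro ⟨⟨⟨t, x, z⟩, ⟨-, hz : z = g (t, x)⟩, hq⟩, hs : T ≤ s⟩
    obtain ⟨t, rfl⟩ : ∃ t', t = t' + 1 := ⟨t - 1, by ring⟩
    obtain ⟨hts, rfl, rfl⟩ : t + 1 - 1 = s ∧ x + u (t + 1, x, z) = y ∧ v (t + 1, x, z) = w := by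
      simpa only [skewMap, Prod.mk.injEq] using hq
    rw [add_sub_cancel_right] at hts
    subst hts hz
    exact ⟨hs, (graphTransform_baseMap (hbij t hs) x).symm⟩
  · rintro ⟨hs : T ≤ s, hw : w = graphTransform u v g (s, y)⟩
    obtain ⟨x, rfl⟩ := (hbij s hs).surjective y
    refine ⟨⟨graphPoint g (s + 1, x), ⟨hs.trans (by simp [graphPoint]), rfl⟩, ?_⟩, hs⟩
    rw [hw, graphTransform_baseMap (hbij s hs)]
    simp only [skewMap, graphPoint, baseMap, add_sub_cancel_right]

theorem graphTransform_add_period {c : E} (hu : ∀ t x z, u (t, x + c, z) = u (t, x, z))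
    (hv : ∀ t x z, v (t, x + c, z) = v (t, x, z)) (hg : ∀ t x, g (t, x + c) = g (t, x))
    (t : ℝ) (y : E) : graphTransform u v g (t, y + c) = graphTransform u v g (t, y) := by
  by_cases hbij : Function.Bijective (baseMap u g (t + 1))
  · obtain ⟨x, rfl⟩ := hbij.surjective y
    have hshift : baseMap u g (t + 1) x + c = baseMap u g (t + 1) (x + c) := by
      simp only [baseMap, graphPoint, hu, hg]
      abel
    rw [hshift, graphTransform_baseMap hbij, graphTransform_baseMap hbij]
    simp only [graphPoint, hv, hg]
  · simp only [graphTransform, if_neg hbij]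

theorem iterate_graphTransform_add_period {c : E} (hu : ∀ t x z, u (t, x + c, z) = u (t, x, z))
    (hv : ∀ t x z, v (t, x + c, z) = v (t, x, z)) (hg : ∀ t x, g (t, x + c) = g (t, x)) (n : ℕ) :
    ∀ t x, (graphTransform u v)^[n] g (t, x + c) = (graphTransform u v)^[n] g (t, x) := by
  induction n with
  | zero => exact hg
  | succ n ih =>
    rw [Function.iterate_succ_apply']
    exact graphTransform_add_period hu hv ih

end Algebra

variable [NormedAddCommGroup E] [NormedSpace ℝ E] [NormedAddCommGroup F] [NormedSpace ℝ F]
  [NormedAddCommGroup G] [NormedSpace ℝ G]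

/-- The `C¹` functions of `(t, x, z)` with `t > T` and `z ∈ U` that are Lipschitz on each fiber
`t = const`, with constant `α` in `x` and constant `β` in `z`. -/
structure IsFiberLipschitz (T : ℝ) (U : Set F) (α β : ℝ≥0) (w : ℝ × E × F → G) : Prop where
  contDiffOn : ContDiffOn ℝ 1 w (Ioi T ×ˢ univ ×ˢ U)
  norm_sub_le : ∀ t, T < t → ∀ x x', ∀ z ∈ U, ∀ z' ∈ U,
    ‖w (t, x, z) - w (t, x', z')‖ ≤ α * ‖x - x'‖ + β * ‖z - z'‖

/-- The `C¹` functions over `t > T` with values in `U` that are `L`-Lipschitz on each fiber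
`t = const`: the class of graphs on which the graph transform acts. -/
structure IsLipschitzGraph (T : ℝ) (U : Set F) (L : ℝ≥0) (g : ℝ × E → F) : Prop where
  contDiffOn : ContDiffOn ℝ 1 g (Ioi T ×ˢ univ)
  mem : ∀ t, T < t → ∀ x, g (t, x) ∈ U
  lipschitzWith : ∀ t, T < t → LipschitzWith L fun x => g (t, x)

/-- The regime in which the graph transform of `skewMap u v` is a contraction of the `L`-Lipschitz
graphs over `t > T`: the base maps are invertible (`add_mul_lt_one`), slopes at most `L` are
preserved (`slope_le`), and distances of graphs shrink by the factor `δ + L * β < 1`. -/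
structure IsGraphContraction (T : ℝ) (U : Set F) (α β γ δ L : ℝ≥0) (u : ℝ × E × F → E)
    (v : ℝ × E × F → F) : Prop where
  base : IsFiberLipschitz T U α β u
  height : IsFiberLipschitz T U γ δ v
  height_mem : ∀ t, T < t → ∀ x, ∀ z ∈ U, v (t, x, z) ∈ U
  add_mul_lt_one : α + β * L < 1
  slope_le : γ + δ * L + L * (α + β * L) ≤ L
  rate_lt_one : δ + L * β < 1

variable {T : ℝ} {U : Set F} {α β γ δ L : ℝ≥0}

theorem IsFiberLipschitz.add {α' β' : ℝ≥0} {w w' : ℝ × E × F → G}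
    (hw : IsFiberLipschitz T U α β w) (hw' : IsFiberLipschitz T U α' β' w') :
    IsFiberLipschitz T U (α + α') (β + β') fun q => w q + w' q where
  contDiffOn := hw.contDiffOn.add hw'.contDiffOn
  norm_sub_le t ht x x' z hz z' hz' := by
    rw [add_sub_add_comm]
    push_cast
    linarith [norm_add_le (w (t, x, z) - w (t, x', z')) (w' (t, x, z) - w' (t, x', z')),
      hw.norm_sub_le t ht x x' z hz z' hz', hw'.norm_sub_le t ht x x' z hz z' hz']

theorem IsFiberLipschitz.const_add {w : ℝ × E × F → G} (hw : IsFiberLipschitz T U α β w) (b : G) :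
    IsFiberLipschitz T U α β fun q => b + w q where
  contDiffOn := contDiffOn_const.add hw.contDiffOn
  norm_sub_le := by simpa only [add_sub_add_left_eq_sub] using hw.norm_sub_le

theorem isFiberLipschitz_clm (T : ℝ) (U : Set F) (A : F →L[ℝ] G) :
    IsFiberLipschitz T U 0 ‖A‖₊ fun q : ℝ × E × F => A q.2.2 where
  contDiffOn := by fun_prop
  norm_sub_le t _ x x' z _ z' _ := by
    rw [NNReal.coe_zero, zero_mul, zero_add, ← map_sub]
    exact A.le_opNorm _

section Composition

variable {w : ℝ × E × F → G} {g h : ℝ × E → F}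

theorem IsFiberLipschitz.contDiffOn_comp_graphPoint (hw : IsFiberLipschitz T U α β w)
    (hg : IsLipschitzGraph T U L g) :
    ContDiffOn ℝ 1 (fun p => w (graphPoint g p)) (Ioi T ×ˢ univ) :=
  hw.contDiffOn.comp (contDiffOn_fst.prodMk (contDiffOn_snd.prodMk hg.contDiffOn))
    fun p hp => ⟨hp.1, mem_univ _, hg.mem p.1 hp.1 p.2⟩

theorem IsFiberLipschitz.lipschitzWith_comp_graphPoint (hw : IsFiberLipschitz T U α β w)
    (hg : IsLipschitzGraph T U L g) {t : ℝ} (ht : T < t) :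
    LipschitzWith (α + β * L) fun x => w (graphPoint g (t, x)) := by
  refine lipschitzWith_iff_norm_sub_le.2 fun x x' => ?_
  calc ‖w (graphPoint g (t, x)) - w (graphPoint g (t, x'))‖
      ≤ α * ‖x - x'‖ + β * ‖g (t, x) - g (t, x')‖ :=
        hw.norm_sub_le t ht x x' _ (hg.mem t ht x) _ (hg.mem t ht x')
    _ ≤ α * ‖x - x'‖ + β * (L * ‖x - x'‖) := by
        gcongr
        exact (hg.lipschitzWith t ht).norm_sub_le x x'
    _ = ↑(α + β * L) * ‖x - x'‖ := by push_cast; ring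

theorem IsFiberLipschitz.norm_comp_graphPoint_sub_le (hw : IsFiberLipschitz T U α β w) {t : ℝ}
    (ht : T < t) {x : E} (hg : g (t, x) ∈ U) (hh : h (t, x) ∈ U) :
    ‖w (graphPoint g (t, x)) - w (graphPoint h (t, x))‖ ≤ β * ‖g (t, x) - h (t, x)‖ := by
  simpa only [graphPoint, sub_self, norm_zero, mul_zero, zero_add] using
    hw.norm_sub_le t ht x x _ hg _ hh

end Composition

section Estimates

variable [CompleteSpace E] {u : ℝ × E × F → E} {v : ℝ × E × F → F} {g h : ℝ × E → F}

theorem IsFiberLipschitz.bijective_baseMap (hu : IsFiberLipschitz T U α β u) (hK : α + β * L < 1)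
    (hg : IsLipschitzGraph T U L g) {t : ℝ} (ht : T < t) : Function.Bijective (baseMap u g t) :=
  bijective_id_add_of_lipschitzWith hK (hu.lipschitzWith_comp_graphPoint hg ht)

theorem IsFiberLipschitz.contDiffOn_baseInverse (hu : IsFiberLipschitz T U α β u)
    (hK : α + β * L < 1) (hg : IsLipschitzGraph T U L g) :
    ContDiffOn ℝ 1 (baseInverse u g) (Ioi T ×ˢ univ) := by
  rintro ⟨t, y⟩ ⟨ht : T < t, -⟩
  refine (contDiffAt_fiberwise_inverse_id_add one_ne_zero hK isOpen_Ioi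
    (r := fun p => u (graphPoint g p)) (fun t ht => hu.lipschitzWith_comp_graphPoint hg ht)
    (fun t ht => baseMap_baseInverse (hu.bijective_baseMap hK hg ht)) ht ?_).contDiffWithinAt
  exact (hu.contDiffOn_comp_graphPoint hg).contDiffAt
    (prod_mem_nhds (Ioi_mem_nhds ht) univ_mem)

theorem IsLipschitzGraph.contDiffOn_graphTransform (hu : IsFiberLipschitz T U α β u)
    (hv : IsFiberLipschitz T U γ δ v) (hK : α + β * L < 1)
    (hg : IsLipschitzGraph T U L g) :
    ContDiffOn ℝ 1 (graphTransform u v g) (Ioi T ×ˢ univ) := by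
  have hshift : ContDiffOn ℝ 1 (fun p : ℝ × E => (p.1 + 1, p.2)) (Ioi T ×ˢ univ) := by fun_prop
  have hshift_mapsTo : MapsTo (fun p : ℝ × E => (p.1 + 1, p.2)) (Ioi T ×ˢ univ) (Ioi T ×ˢ univ) :=
    fun p hp => ⟨(mem_Ioi.1 hp.1).trans (lt_add_one p.1), mem_univ _⟩
  have hinv := (hu.contDiffOn_baseInverse hK hg).comp hshift hshift_mapsTo
  refine ((hv.contDiffOn_comp_graphPoint hg).comp (hshift.fst.prodMk hinv) ?_).congr ?_
  · exact fun p hp => ⟨(hshift_mapsTo hp).1, mem_univ _⟩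
  · exact fun p hp =>
      graphTransform_of_bijective (hu.bijective_baseMap hK hg (hshift_mapsTo hp).1) p.2

theorem IsLipschitzGraph.lipschitzWith_graphTransform (hu : IsFiberLipschitz T U α β u)
    (hv : IsFiberLipschitz T U γ δ v) (hK : α + β * L < 1)
    (hcone : γ + δ * L + L * (α + β * L) ≤ L) (hg : IsLipschitzGraph T U L g) {t : ℝ}
    (ht : T < t + 1) : LipschitzWith L fun y => graphTransform u v g (t, y) := by
  have hbij := hu.bijective_baseMap hK hg ht
  refine lipschitzWith_iff_norm_sub_le.2 fun y y' => ?_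
  obtain ⟨x, rfl⟩ := hbij.surjective y
  obtain ⟨x', rfl⟩ := hbij.surjective y'
  have hcone' : ((γ + δ * L : ℝ≥0) : ℝ) ≤ L * (1 - (α + β * L : ℝ≥0)) := by
    have := NNReal.coe_le_coe.2 hcone
    push_cast at this ⊢
    linarith
  calc ‖graphTransform u v g (t, baseMap u g (t + 1) x) -
        graphTransform u v g (t, baseMap u g (t + 1) x')‖
      = ‖v (graphPoint g (t + 1, x)) - v (graphPoint g (t + 1, x'))‖ := by
        rw [graphTransform_baseMap hbij, graphTransform_baseMap hbij]
    _ ≤ ↑(γ + δ * L) * ‖x - x'‖ := (hv.lipschitzWith_comp_graphPoint hg ht).norm_sub_le x x'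
    _ ≤ L * (1 - ↑(α + β * L)) * ‖x - x'‖ := by gcongr
    _ = L * ((1 - ↑(α + β * L)) * ‖x - x'‖) := mul_assoc _ _ _
    _ ≤ L * ‖baseMap u g (t + 1) x - baseMap u g (t + 1) x'‖ := by
        gcongr
        exact one_sub_mul_norm_sub_le_of_lipschitzWith (hu.lipschitzWith_comp_graphPoint hg ht) x x'

theorem IsGraphContraction.isLipschitzGraph_graphTransform
    (H : IsGraphContraction T U α β γ δ L u v) (hg : IsLipschitzGraph T U L g) :
    IsLipschitzGraph T U L (graphTransform u v g) where
  contDiffOn := hg.contDiffOn_graphTransform H.base H.height H.add_mul_lt_one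
  mem t ht y := by
    have ht' : T < t + 1 := ht.trans (lt_add_one t)
    rw [graphTransform_of_bijective (H.base.bijective_baseMap H.add_mul_lt_one hg ht')]
    exact H.height_mem _ ht' _ _ (hg.mem _ ht' _)
  lipschitzWith t ht := hg.lipschitzWith_graphTransform H.base H.height H.add_mul_lt_one
    H.slope_le (ht.trans (lt_add_one t))

theorem IsGraphContraction.isLipschitzGraph_iterate (H : IsGraphContraction T U α β γ δ L u v)
    (hg : IsLipschitzGraph T U L g) (n : ℕ) :
    IsLipschitzGraph T U L ((graphTransform u v)^[n] g) := by
  induction n with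
  | zero => exact hg
  | succ n ih =>
    rw [Function.iterate_succ_apply']
    exact H.isLipschitzGraph_graphTransform ih

theorem norm_graphTransform_sub_le (hu : IsFiberLipschitz T U α β u)
    (hv : IsFiberLipschitz T U γ δ v) (hK : α + β * L < 1) (hg : IsLipschitzGraph T U L g)
    (hh : IsLipschitzGraph T U L h)
    (hinv : ∀ t, T < t → ∀ x, h (t, baseMap u h (t + 1) x) = v (graphPoint h (t + 1, x)))
    {C : ℝ} (hC : ∀ t, T < t → ∀ x, ‖g (t, x) - h (t, x)‖ ≤ C) {t : ℝ} (ht : T < t) (y : E) :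
    ‖graphTransform u v g (t, y) - h (t, y)‖ ≤ (δ + L * β) * C := by
  have ht' : T < t + 1 := ht.trans (lt_add_one t)
  have hbij := hu.bijective_baseMap hK hg ht'
  obtain ⟨x, rfl⟩ := hbij.surjective y
  have vertical : ‖v (graphPoint g (t + 1, x)) - v (graphPoint h (t + 1, x))‖ ≤ δ * C :=
    (hv.norm_comp_graphPoint_sub_le ht' (hg.mem _ ht' x) (hh.mem _ ht' x)).trans
      (by gcongr; exact hC _ ht' x)
  have horizontal : ‖baseMap u g (t + 1) x - baseMap u h (t + 1) x‖ ≤ β * C := by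
    simpa only [baseMap, add_sub_add_left_eq_sub] using
      (hu.norm_comp_graphPoint_sub_le ht' (hg.mem _ ht' x) (hh.mem _ ht' x)).trans
        (by gcongr; exact hC _ ht' x)
  rw [graphTransform_baseMap hbij]
  calc ‖v (graphPoint g (t + 1, x)) - h (t, baseMap u g (t + 1) x)‖
      ≤ ‖v (graphPoint g (t + 1, x)) - v (graphPoint h (t + 1, x))‖ +
          ‖h (t, baseMap u h (t + 1) x) - h (t, baseMap u g (t + 1) x)‖ := by
        rw [hinv t ht]
        exact norm_sub_le_norm_sub_add_norm_sub _ _ _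
    _ ≤ δ * C + L * (β * C) := by
        gcongr
        rw [norm_sub_rev]
        exact ((hh.lipschitzWith t ht).norm_sub_le _ _).trans (by gcongr)
    _ = (δ + L * β) * C := by ring

theorem IsGraphContraction.norm_iterate_sub_le (H : IsGraphContraction T U α β γ δ L u v)
    (hg : IsLipschitzGraph T U L g) (hh : IsLipschitzGraph T U L h)
    (hinv : ∀ t, T < t → ∀ x, h (t, baseMap u h (t + 1) x) = v (graphPoint h (t + 1, x)))
    {C : ℝ} (hC : ∀ t, T < t → ∀ x, ‖g (t, x) - h (t, x)‖ ≤ C) (n : ℕ) :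
    ∀ t, T < t → ∀ y, ‖(graphTransform u v)^[n] g (t, y) - h (t, y)‖ ≤ (δ + L * β) ^ n * C := by
  induction n with
  | zero => simpa using hC
  | succ n ih =>
    intro t ht y
    rw [Function.iterate_succ_apply', pow_succ', mul_assoc]
    exact norm_graphTransform_sub_le H.base H.height H.add_mul_lt_one
      (H.isLipschitzGraph_iterate hg n) hh hinv ih ht y

theorem IsGraphContraction.eventually_norm_iterate_sub_le
    (H : IsGraphContraction T U α β γ δ L u v) (hU : Bornology.IsBounded U)
    (hg : IsLipschitzGraph T U L g) (hh : IsLipschitzGraph T U L h)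
    (hinv : ∀ t, T < t → ∀ x, h (t, baseMap u h (t + 1) x) = v (graphPoint h (t + 1, x)))
    {η : ℝ} (hη : 0 < η) :
    ∀ᶠ n in atTop, ∀ t, T < t → ∀ y,
      ‖(graphTransform u v)^[n] g (t, y) - h (t, y)‖ ≤ η := by
  obtain ⟨C, hC⟩ := Metric.isBounded_iff.1 hU
  have hdist : ∀ t, T < t → ∀ x, ‖g (t, x) - h (t, x)‖ ≤ C := fun t ht x =>
    (dist_eq_norm _ _).symm.trans_le (hC (hg.mem t ht x) (hh.mem t ht x))
  have hlim : Tendsto (fun n => ((δ : ℝ) + L * β) ^ n * C) atTop (𝓝 0) := by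
    simpa only [zero_mul] using (tendsto_pow_atTop_nhds_zero_of_lt_one (by positivity)
      (mod_cast H.rate_lt_one)).mul_const C
  filter_upwards [hlim.eventually_le_const hη] with n hn t ht y
  exact (H.norm_iterate_sub_le hg hh hinv hdist n t ht y).trans hn

end Estimates

end GraphTransform
section Decay

theorem eventually_forall_le_of_le_tendsto_zero {X : Type*} {m : ℝ × X → ℝ}
    {ρ : ℝ → ℝ} {t₁ : ℝ} {V : Set X} (hρ : Tendsto ρ atTop (𝓝 0))
    (hm : ∀ p ∈ Ici t₁ ×ˢ V, m p ≤ ρ p.1) {δ : ℝ} (hδ : 0 < δ) :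
    ∀ᶠ t in atTop, ∀ x ∈ V, m (t, x) ≤ δ := by
  filter_upwards [eventually_ge_atTop t₁, hρ.eventually_le_const hδ] with t ht hρt x hx
  exact (hm (t, x) ⟨ht, hx⟩).trans hρt

variable {E F : Type*} [NormedAddCommGroup E] [NormedSpace ℝ E] [NormedAddCommGroup F]
  [NormedSpace ℝ F] {t₁ : ℝ} {V : Set E} {w : ℝ × E → F}

/-- The `C¹` functions of `t ≥ t₁` and `x ∈ V` that tend to `0` as `t → ∞`, uniformly in `x`,
together with their first derivative. -/
structure IsC1Decaying (t₁ : ℝ) (V : Set E) (w : ℝ × E → F) : Prop where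
  contDiffOn : ContDiffOn ℝ 1 w (Ici t₁ ×ˢ V)
  eventually_norm_le : ∀ δ > 0, ∀ᶠ t in atTop, ∀ x ∈ V, ‖w (t, x)‖ ≤ δ
  eventually_norm_fderivWithin_le : ∀ δ > 0, ∀ᶠ t in atTop, ∀ x ∈ V,
    ‖fderivWithin ℝ w (Ici t₁ ×ˢ V) (t, x)‖ ≤ δ

theorem isC1Decaying_of_norm_add_norm_fderivWithin_le {ρ : ℝ → ℝ}
    (hw : ContDiffOn ℝ 1 w (Ici t₁ ×ˢ V)) (hρ : Tendsto ρ atTop (𝓝 0))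
    (hle : ∀ p ∈ Ici t₁ ×ˢ V, ‖w p‖ + ‖fderivWithin ℝ w (Ici t₁ ×ˢ V) p‖ ≤ ρ p.1) :
    IsC1Decaying t₁ V w where
  contDiffOn := hw
  eventually_norm_le _ hδ := eventually_forall_le_of_le_tendsto_zero hρ
    (fun p hp => (le_add_of_nonneg_right (norm_nonneg _)).trans (hle p hp)) hδ
  eventually_norm_fderivWithin_le _ hδ := eventually_forall_le_of_le_tendsto_zero hρ
    (fun p hp => (le_add_of_nonneg_left (norm_nonneg _)).trans (hle p hp)) hδ

theorem isC1Decaying_of_norm_iteratedFDerivWithin_le {ρ : ℝ → ℝ} (hV : UniqueDiffOn ℝ V)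
    (hw : ContDiffOn ℝ 1 w (Ici t₁ ×ˢ V)) (hρ : Tendsto ρ atTop (𝓝 0))
    (hle : ∀ n : ℕ, ∃ C : ℝ, ∀ p ∈ Ici t₁ ×ˢ V,
      ‖iteratedFDerivWithin ℝ n w (Ici t₁ ×ˢ V) p‖ ≤ C * ρ p.1) :
    IsC1Decaying t₁ V w := by
  obtain ⟨C₀, hC₀⟩ := hle 0
  obtain ⟨C₁, hC₁⟩ := hle 1
  have hlim : Tendsto (fun t => C₀ * ρ t + C₁ * ρ t) atTop (𝓝 0) := by
    simpa using (hρ.const_mul C₀).add (hρ.const_mul C₁)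
  refine isC1Decaying_of_norm_add_norm_fderivWithin_le hw hlim fun p hp => ?_
  rw [← norm_iteratedFDerivWithin_zero (𝕜 := ℝ) (s := Ici t₁ ×ˢ V),
    ← norm_iteratedFDerivWithin_one w (((uniqueDiffOn_Ici t₁).prod hV) p hp)]
  exact add_le_add (hC₀ p hp) (hC₁ p hp)

theorem IsC1Decaying.eventually_lipschitzOnWith (hw : IsC1Decaying t₁ V w) (hV : Convex ℝ V)
    {δ : ℝ≥0} (hδ : 0 < δ) : ∀ᶠ t in atTop, LipschitzOnWith δ (fun x => w (t, x)) V := by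
  filter_upwards [eventually_ge_atTop t₁, hw.eventually_norm_fderivWithin_le δ hδ] with t ht hle
  refine hV.lipschitzOnWith_of_nnnorm_hasFDerivWithin_le (𝕜 := ℝ)
    (f' := fun x => fderivWithin ℝ w (Ici t₁ ×ˢ V) (t, x) ∘L .inr ℝ ℝ E)
    (fun x hx => ?_) fun x hx => ?_
  · exact (hw.contDiffOn.differentiableOn one_ne_zero (t, x) ⟨ht, hx⟩).hasFDerivWithinAt.comp x
      (hasFDerivAt_prodMk_right t x).hasFDerivWithinAt fun y hy => ⟨ht, hy⟩
  · calc ‖fderivWithin ℝ w (Ici t₁ ×ˢ V) (t, x) ∘L .inr ℝ ℝ E‖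
        ≤ ‖fderivWithin ℝ w (Ici t₁ ×ˢ V) (t, x)‖ * ‖ContinuousLinearMap.inr ℝ ℝ E‖ :=
          ContinuousLinearMap.opNorm_comp_le _ _
      _ ≤ δ * 1 := by
          gcongr
          · exact hle x hx
          · exact ContinuousLinearMap.norm_inr_le_one ℝ ℝ E
      _ = δ := mul_one _

theorem IsC1Decaying.eventually_isLipschitzGraph {g : ℝ × E → F} (hg : IsC1Decaying t₁ univ g)
    {U : Set F} (hU : U ∈ 𝓝 0) {L : ℝ≥0} (hL : 0 < L) :
    ∀ᶠ T in atTop, IsLipschitzGraph T U L g := by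
  obtain ⟨r, hr, hrU⟩ := Metric.nhds_basis_closedBall.mem_iff.1 hU
  filter_upwards [eventually_ge_atTop t₁, eventually_forall_ge_atTop.2 (hg.eventually_norm_le r hr),
    eventually_forall_ge_atTop.2 (hg.eventually_lipschitzOnWith convex_univ hL)] with T hT hle hlip
  exact
    { contDiffOn := hg.contDiffOn.mono (prod_mono (fun t ht => hT.trans (mem_Ioi.1 ht).le) le_rfl)
      mem := fun t ht x => hrU (mem_closedBall_zero_iff.2 (hle t ht.le x (mem_univ x)))
      lipschitzWith := fun t ht => lipschitzOnWith_univ.1 (hlip t ht.le) }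

theorem IsC1Decaying.eventually_isFiberLipschitz {G : Type*} [NormedAddCommGroup G]
    [NormedSpace ℝ G] {U : Set F} {w : ℝ × E × F → G} (hw : IsC1Decaying t₁ (univ ×ˢ U) w)
    (hU : Convex ℝ U) {δ : ℝ≥0} (hδ : 0 < δ) : ∀ᶠ T in atTop, IsFiberLipschitz T U δ δ w := by
  filter_upwards [eventually_ge_atTop t₁,
    eventually_forall_ge_atTop.2
      (hw.eventually_lipschitzOnWith (convex_univ.prod hU) hδ)] with T hT hlip
  exact
    { contDiffOn := hw.contDiffOn.mono (prod_mono (fun t ht => hT.trans (mem_Ioi.1 ht).le) le_rfl)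
      norm_sub_le := fun t ht x x' z hz z' hz' =>
        calc ‖w (t, x, z) - w (t, x', z')‖
            ≤ δ * max ‖x - x'‖ ‖z - z'‖ :=
              (hlip t ht.le).norm_sub_le ⟨mem_univ x, hz⟩ ⟨mem_univ x', hz'⟩
          _ ≤ δ * (‖x - x'‖ + ‖z - z'‖) := by
              gcongr
              exact max_le_add_of_nonneg (norm_nonneg _) (norm_nonneg _)
          _ = δ * ‖x - x'‖ + δ * ‖z - z'‖ := mul_add _ _ _ }

theorem IsC1Decaying.eventually_clm_add_mem_ball {r : ℝ} (hr : 0 < r) {w : ℝ × E × F → F}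
    (hw : IsC1Decaying t₁ (univ ×ˢ Metric.ball 0 r) w) {B : F →L[ℝ] F} (hB : ‖B‖ < 1) :
    ∀ᶠ t in atTop, ∀ x, ∀ z ∈ Metric.ball 0 r, B z + w (t, x, z) ∈ Metric.ball 0 r := by
  have hgap : 0 < (1 - ‖B‖) * r := mul_pos (sub_pos.2 hB) hr
  filter_upwards [hw.eventually_norm_le _ (half_pos hgap)] with t hle x z hz
  have hBz : ‖B z‖ ≤ ‖B‖ * r := B.le_opNorm_of_le (mem_ball_zero_iff.1 hz).le
  rw [mem_ball_zero_iff]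
  linarith [norm_add_le (B z) (w (t, x, z)), hle (x, z) ⟨mem_univ x, hz⟩]

end Decay

section Convergence

theorem exists_cone_constants (A : ℝ≥0) {B : ℝ≥0} (hB : B < 1) :
    ∃ L > (0 : ℝ≥0), ∃ ε > (0 : ℝ≥0), ε + (A + ε) * L < 1 ∧
      ε + (B + ε) * L + L * (ε + (A + ε) * L) ≤ L ∧ B + ε + L * (A + ε) < 1 := by
  obtain ⟨d, hd, hBd⟩ : ∃ d > 0, B + d = 1 :=
    ⟨1 - B, tsub_pos_of_lt hB, add_tsub_cancel_of_le hB.le⟩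
  have hd1 : d ≤ 1 := hBd ▸ le_add_self
  obtain ⟨L, hL, hAL⟩ : ∃ L > 0, (A + 1) * L = d / 4 :=
    ⟨d / 4 / (A + 1), by positivity, mul_div_cancel₀ _ (by positivity)⟩
  have hL1 : L ≤ 1 :=
    calc L ≤ (A + 1) * L := le_mul_of_one_le_left' le_add_self
      _ = d / 4 := hAL
      _ ≤ 1 := (div_le_self zero_le (by norm_num)).trans hd1
  obtain ⟨ε, hε⟩ : ∃ ε, ε = L * (d / 4) := ⟨_, rfl⟩
  have hεd : ε ≤ d / 4 := hε.trans_le (mul_le_of_le_one_left' hL1)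
  have hAεL : (A + ε) * L ≤ d / 4 := by
    rw [← hAL]
    gcongr
    exact (hεd.trans (div_le_self zero_le (by norm_num))).trans hd1
  have hhalf : d / 4 + d / 4 < d := by
    rw [show d / 4 + d / 4 = d / 2 by ring]
    exact NNReal.half_lt_self hd.ne'
  refine ⟨L, hL, ε, by rw [hε]; positivity, ?_, ?_, ?_⟩
  · exact (add_le_add hεd hAεL).trans_lt (hhalf.trans_le hd1)
  · calc ε + (B + ε) * L + L * (ε + (A + ε) * L)
        = ε + L * (B + ε + ε + (A + ε) * L) := by ring
      _ ≤ L * (d / 4) + L * (B + d / 4 + d / 4 + d / 4) := by gcongr; exact hε.le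
      _ = L * (B + d) := by ring
      _ = L := by rw [hBd, mul_one]
  · calc B + ε + L * (A + ε) = B + (ε + (A + ε) * L) := by ring
      _ ≤ B + (d / 4 + d / 4) := by gcongr
      _ < B + d := by gcongr
      _ = 1 := hBd

variable {E F : Type*} [NormedAddCommGroup E] [NormedSpace ℝ E]
  [NormedAddCommGroup F] [NormedSpace ℝ F]

theorem exists_eventually_isGraphContraction (b : E) (A : F →L[ℝ] E) {B : F →L[ℝ] F}
    (hB : ‖B‖ < 1) {r : ℝ} (hr : 0 < r) {t₁ : ℝ} {ε₁ : ℝ × E × F → E} {ε₂ : ℝ × E × F → F}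
    (hε₁ : IsC1Decaying t₁ (univ ×ˢ Metric.ball 0 r) ε₁)
    (hε₂ : IsC1Decaying t₁ (univ ×ˢ Metric.ball 0 r) ε₂) :
    ∃ α β γ δ L : ℝ≥0, 0 < L ∧ ∀ᶠ T in atTop, IsGraphContraction T (Metric.ball 0 r) α β γ δ L
      (fun q => b + A q.2.2 + ε₁ q) (fun q => B q.2.2 + ε₂ q) := by
  obtain ⟨L, hL, ε, hε, hbase, hslope, hrate⟩ := exists_cone_constants ‖A‖₊ (B := ‖B‖₊) hB
  refine ⟨0 + ε, ‖A‖₊ + ε, 0 + ε, ‖B‖₊ + ε, L, hL, ?_⟩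
  filter_upwards [hε₁.eventually_isFiberLipschitz (convex_ball 0 r) hε,
    hε₂.eventually_isFiberLipschitz (convex_ball 0 r) hε,
    eventually_forall_ge_atTop.2 (hε₂.eventually_clm_add_mem_ball hr hB)] with T hT₁ hT₂ hball
  exact
    { base := ((isFiberLipschitz_clm T _ A).const_add b).add hT₁
      height := (isFiberLipschitz_clm T _ B).add hT₂
      height_mem := fun t ht => hball t ht.le
      add_mul_lt_one := by rwa [zero_add]
      slope_le := by rwa [zero_add]
      rate_lt_one := hrate }

theorem graph_transform_converges_general [CompleteSpace E] {b : E} {A : F →L[ℝ] E}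
    {B : F →L[ℝ] F} (hB : ‖B‖ < 1) {r : ℝ} (hr : 0 < r) {t₁ : ℝ}
    {ε₁ : ℝ × E × F → E} (hε₁ : IsC1Decaying t₁ (univ ×ˢ Metric.ball 0 r) ε₁)
    {ε₂ : ℝ × E × F → F} (hε₂ : IsC1Decaying t₁ (univ ×ˢ Metric.ball 0 r) ε₂)
    {f : ℝ × E × F → ℝ × E × F}
    (hf : f = skewMap (fun q => b + A q.2.2 + ε₁ q) fun q => B q.2.2 + ε₂ q)
    {c : E} (hε₁per : ∀ t x z, ε₁ (t, x + c, z) = ε₁ (t, x, z))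
    (hε₂per : ∀ t x z, ε₂ (t, x + c, z) = ε₂ (t, x, z))
    {t₀ : ℝ} {h : ℝ × E → F} (hh : IsC1Decaying t₀ univ h)
    (hinv : ∀ p : ℝ × E, t₀ + 1 ≤ p.1 →
      h ((f (graphPoint h p)).1, (f (graphPoint h p)).2.1) = (f (graphPoint h p)).2.2)
    {g₀ : ℝ × E → F} (hg₀ : IsC1Decaying t₀ univ g₀) (hg₀per : ∀ t x, g₀ (t, x + c) = g₀ (t, x)) :
    ∃ t₀', t₀ ≤ t₀' ∧ ∃ g : ℕ → ℝ × E → F, g 0 = g₀ ∧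
      (∀ n, (∀ p, t₀' ≤ p.1 → g n p ∈ Metric.ball 0 r) ∧ ContDiffOn ℝ 1 (g n) (Ici t₀' ×ˢ univ) ∧
        ∀ t x, g n (t, x + c) = g n (t, x)) ∧
      (∀ n, f '' {q | t₀' ≤ q.1 ∧ q.2.2 = g n (q.1, q.2.1)} ∩ {q | t₀' ≤ q.1} =
        {q | t₀' ≤ q.1 ∧ q.2.2 = g (n + 1) (q.1, q.2.1)}) ∧
      ∀ δ, 0 < δ → ∃ N, ∀ n, N ≤ n → ∀ p, t₀' ≤ p.1 → ‖g n p - h p‖ ≤ δ := by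
  subst hf
  obtain ⟨α, β, γ, δ, L, hL, hcontr⟩ :=
    exists_eventually_isGraphContraction b A hB hr hε₁ hε₂
  have hU : Metric.ball (0 : F) r ∈ 𝓝 0 := Metric.ball_mem_nhds 0 hr
  obtain ⟨T, hT, H, hhT, hgT⟩ := ((eventually_ge_atTop t₀).and <| hcontr.and <|
    (hh.eventually_isLipschitzGraph hU hL).and (hg₀.eventually_isLipschitzGraph hU hL)).exists
  have hlt {t : ℝ} (ht : T + 1 ≤ t) : T < t := (lt_add_one T).trans_le ht
  have hgn := H.isLipschitzGraph_iterate hgT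
  refine ⟨T + 1, (hlt le_rfl).le.trans' hT, fun n => (graphTransform _ _)^[n] g₀, rfl,
    fun n => ⟨fun p hp => (hgn n).mem p.1 (hlt hp) p.2,
      (hgn n).contDiffOn.mono (prod_mono (fun t ht => hlt ht) le_rfl),
      iterate_graphTransform_add_period (by simp [hε₁per]) (by simp [hε₂per]) hg₀per n⟩,
    fun n => ?_, fun η hη => ?_⟩
  · simp only [Function.iterate_succ_apply']
    exact image_skewMap_graph fun t ht =>
      H.base.bijective_baseMap H.add_mul_lt_one (hgn n) ((hlt ht).trans (lt_add_one t))
  · obtain ⟨N, hN⟩ := eventually_atTop.1 <|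
      H.eventually_norm_iterate_sub_le Metric.isBounded_ball hgT hhT
        (fun t ht x => by
          simpa only [skewMap, graphPoint, baseMap, add_sub_cancel_right] using
            hinv (t + 1, x) (by simp only; linarith)) hη
    exact ⟨N, fun n hn p hp => hN n hn p.1 (hlt hp) p.2⟩

end Convergence

section PertMap

theorem IsWeightFunction.tendsto {ρ : ℝ → ℝ} (hρ : IsWeightFunction ρ) :
    Tendsto ρ atTop (𝓝 0) :=
  hρ.2.2.2.1

theorem ball_zero_one_eq_Ioo : Metric.ball (0 : ℝ) 1 = Ioo (-1) 1 := by
  rw [Real.ball_eq_Ioo, zero_sub, zero_add]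

theorem IsDecayingPert.isC1Decaying {ρ : ℝ → ℝ} {ε : ℝ × ℝ × ℝ → ℝ} (hε : IsDecayingPert ρ ε)
    (hρ : Tendsto ρ atTop (𝓝 0)) : IsC1Decaying 1 (univ ×ˢ Metric.ball 0 1) ε := by
  rw [ball_zero_one_eq_Ioo]
  exact isC1Decaying_of_norm_iteratedFDerivWithin_le (uniqueDiffOn_univ.prod (uniqueDiffOn_Ioo _ _))
    (hε.1.of_le (mod_cast le_top)) hρ hε.2.2

theorem norm_half_smul_id_lt_one : ‖(1 / 2 : ℝ) • ContinuousLinearMap.id ℝ ℝ‖ < 1 := by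
  norm_num [norm_smul]

theorem pertMap_eq_skewMap (a : ℝ) (ε₁ ε₂ : ℝ × ℝ × ℝ → ℝ) :
    pertMap a ε₁ ε₂ = skewMap (fun q => a + (-ContinuousLinearMap.id ℝ ℝ) q.2.2 + ε₁ q)
      fun q => ((1 / 2 : ℝ) • ContinuousLinearMap.id ℝ ℝ) q.2.2 + ε₂ q := by
  funext q
  simp only [pertMap, skewMap, neg_apply, smul_apply,
    ContinuousLinearMap.id_apply, smul_eq_mul, Prod.mk.injEq, true_and]
  constructor <;> ring

end PertMap

/-- Convergence of the graph transform: starting from any `C¹` graph `h̃₀` of `C¹`-size `ρ̃(t)`,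
the iterated images under `f`, intersected with `{t ≥ t₀}` (after possibly increasing `t₀`),
remain `C¹` graphs and converge uniformly to the invariant graph `h`. -/
theorem graph_transform_converges (a : ℝ) (ρ ρ' : ℝ → ℝ)
    (hρ : IsWeightFunction ρ) (hρ' : IsWeightFunction ρ')
    (ε₁ ε₂ : ℝ × ℝ × ℝ → ℝ) (hε₁ : IsDecayingPert ρ ε₁) (hε₂ : IsDecayingPert ρ ε₂)
    (t₀ : ℝ) (ht₀ : 1 ≤ t₀) (h : ℝ × ℝ → ℝ)
    -- `h` is the invariant graph: maps into `(-1,1)`, smooth, `2π`-periodic, all derivatives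
    -- `O(ρ(t))`, and its graph is `f`-invariant
    (hmem : ∀ p : ℝ × ℝ, t₀ ≤ p.1 → h p ∈ Ioo (-1:ℝ) 1)
    (hsmooth : ContDiffOn ℝ (⊤ : ℕ∞) h (Ici t₀ ×ˢ (univ : Set ℝ)))
    (hper : ∀ t φ : ℝ, h (t, φ + 2 * Real.pi) = h (t, φ))
    (hdecay : ∀ n : ℕ, ∃ C : ℝ, ∀ p ∈ Ici t₀ ×ˢ (univ : Set ℝ),
      ‖iteratedFDerivWithin ℝ n h (Ici t₀ ×ˢ (univ : Set ℝ)) p‖ ≤ C * ρ p.1)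
    (hinv : ∀ t φ : ℝ, t₀ + 1 ≤ t →
      h (t - 1, φ + a - h (t, φ) + ε₁ (t, φ, h (t, φ))) = h (t, φ) / 2 + ε₂ (t, φ, h (t, φ)))
    -- the initial graph `h̃₀`
    (g₀ : ℝ × ℝ → ℝ)
    (hg₀mem : ∀ p : ℝ × ℝ, t₀ ≤ p.1 → g₀ p ∈ Ioo (-1:ℝ) 1)
    (hg₀C1 : ContDiffOn ℝ 1 g₀ (Ici t₀ ×ˢ (univ : Set ℝ)))
    (hg₀per : ∀ t φ : ℝ, g₀ (t, φ + 2 * Real.pi) = g₀ (t, φ))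
    (hg₀size : ∀ p ∈ Ici t₀ ×ˢ (univ : Set ℝ),
      |g₀ p| + ‖fderivWithin ℝ g₀ (Ici t₀ ×ˢ (univ : Set ℝ)) p‖ ≤ ρ' p.1) :
    ∃ t₀' : ℝ, t₀ ≤ t₀' ∧ ∃ g : ℕ → ℝ × ℝ → ℝ,
      (∀ p : ℝ × ℝ, t₀' ≤ p.1 → g 0 p = g₀ p) ∧
      (∀ n : ℕ,
        (∀ p : ℝ × ℝ, t₀' ≤ p.1 → g n p ∈ Ioo (-1:ℝ) 1) ∧
        ContDiffOn ℝ 1 (g n) (Ici t₀' ×ˢ (univ : Set ℝ)) ∧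
        (∀ t φ : ℝ, g n (t, φ + 2 * Real.pi) = g n (t, φ))) ∧
      (∀ n : ℕ,
        pertMap a ε₁ ε₂ '' graphSet t₀' (g n) ∩ {p : ℝ × ℝ × ℝ | t₀' ≤ p.1}
          = graphSet t₀' (g (n + 1))) ∧
      ∀ δ : ℝ, 0 < δ → ∃ N : ℕ, ∀ n : ℕ, N ≤ n →
        ∀ p : ℝ × ℝ, t₀' ≤ p.1 → |g n p - h p| ≤ δ := by
  have hh := isC1Decaying_of_norm_iteratedFDerivWithin_le uniqueDiffOn_univ
    (hsmooth.of_le (mod_cast le_top)) hρ.tendsto hdecay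
  have hg₀ := isC1Decaying_of_norm_add_norm_fderivWithin_le hg₀C1 hρ'.tendsto hg₀size
  obtain ⟨t₀', ht₀', g, hg0, hg, himage, hconv⟩ := graph_transform_converges_general
    norm_half_smul_id_lt_one one_pos (hε₁.isC1Decaying hρ.tendsto) (hε₂.isC1Decaying hρ.tendsto)
    (pertMap_eq_skewMap a ε₁ ε₂) hε₁.2.1 hε₂.2.1 hh (fun p => hinv p.1 p.2) hg₀ hg₀per
  rw [ball_zero_one_eq_Ioo] at hg
  exact ⟨t₀', ht₀', g, fun p _ => congrFun hg0 p, hg, himage, hconv⟩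
end
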